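/- arXiv:1609.06355 — 6 statements merged into one kernel-verified Lean document; each statement's English description precedes it below -/
import Mathlib

section
/- If C : {0,1}^k → {0,1}^n is a (q, δ, η)-locally decodable code, then C is also a (q, q/δ, η)-smooth code. -/
/-- A randomized non-adaptive `q`-query decoder for codewords in `{0,1}^n`, modeled as a
finitely supported probability distribution over pairs `(S, g)` where `S` is the query set
(of size at most `q`) and `g` is an output function depending only on the coordinates in `S`. -/
structure Decoder (n q : ℕ) where
  p : Finset (Fin n) × ((Fin n → Bool) → Bool) → ℝ
  nonneg : ∀ a, 0 ≤ p a
  sum_one : ∑ a, p a = 1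
  query_bound : ∀ a, p a ≠ 0 → a.1.card ≤ q
  local_dep : ∀ a, p a ≠ 0 → ∀ y y' : Fin n → Bool, (∀ j ∈ a.1, y j = y' j) → a.2 y = a.2 y'

/-- The probability that the decoder `D`, run on input `y`, outputs the bit `b`. -/
noncomputable def Decoder.correctProb {n q : ℕ} (D : Decoder n q) (y : Fin n → Bool)
    (b : Bool) : ℝ :=
  ∑ a : Finset (Fin n) × ((Fin n → Bool) → Bool), if a.2 y = b then D.p a else 0

/-- The probability that the decoder `D` queries coordinate `j`. -/
noncomputable def Decoder.queryProb {n q : ℕ} (D : Decoder n q) (j : Fin n) : ℝ :=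
  ∑ a : Finset (Fin n) × ((Fin n → Bool) → Bool), if j ∈ a.1 then D.p a else 0

/-- `C : {0,1}^k → {0,1}^n` is a `(q,δ,η)`-locally decodable code. -/
def IsLDC (k n q : ℕ) (δ η : ℝ) (C : (Fin k → Bool) → Fin n → Bool) : Prop :=
  ∀ i : Fin k, ∃ D : Decoder n q,
    ∀ x : Fin k → Bool, ∀ y : Fin n → Bool,
      ((Finset.univ.filter fun j => y j ≠ C x j).card : ℝ) ≤ δ * n →
      1/2 + η ≤ D.correctProb y (x i)

/-- `C : {0,1}^k → {0,1}^n` is a `(q,c,η)`-smooth code. -/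
def IsSmoothCode (k n q : ℕ) (c η : ℝ) (C : (Fin k → Bool) → Fin n → Bool) : Prop :=
  ∀ i : Fin k, ∃ D : Decoder n q,
    (∀ x : Fin k → Bool, 1/2 + η ≤ D.correctProb (C x) (x i)) ∧
    ∀ j : Fin n, D.queryProb j ≤ c / n

/-- `C : {0,1}^k → {0,1}^n` is a `(q,c,η)`-average-case smooth code: the success probability
`1/2 + η` is only required on average over a uniform message `x` and uniform index `i`. -/
def IsAvgSmoothCode (k n q : ℕ) (c η : ℝ) (C : (Fin k → Bool) → Fin n → Bool) : Prop :=
  ∃ D : Fin k → Decoder n q,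
    (∀ i : Fin k, ∀ j : Fin n, (D i).queryProb j ≤ c / n) ∧
    1/2 + η ≤ (∑ x : Fin k → Bool, ∑ i : Fin k, (D i).correctProb (C x) (x i)) / (2^k * k)

theorem push_sum {α : Type*} [Fintype α] [DecidableEq α] (p : α → ℝ) (φ : α → α) (P : α → Prop)
    [DecidablePred P] :
    (∑ b, if P b then (∑ a, if φ a = b then p a else 0) else 0)
      = ∑ a, if P (φ a) then p a else 0 := by
  have : ∀ b, (if P b then (∑ a, if φ a = b then p a else 0) else 0)
      = ∑ a, if φ a = b then (if P (φ a) then p a else 0) else 0 := by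
    intro b
    split_ifs with h
    · refine Finset.sum_congr rfl fun a _ => ?_
      split_ifs with h1 h2
      · rfl
      · exact absurd (h1 ▸ h) h2
      · rfl
    · symm
      refine Finset.sum_eq_zero fun a _ => ?_
      split_ifs with h1 h2
      · exact absurd (h1 ▸ h2) h
      · rfl
      · rfl
  simp_rw [this]
  rw [Finset.sum_comm]
  simp

def maskY {n : ℕ} (B : Finset (Fin n)) (y : Fin n → Bool) : Fin n → Bool :=
  fun j => if j ∈ B then false else y j

def maskA {n : ℕ} (B : Finset (Fin n)) (a : Finset (Fin n) × ((Fin n → Bool) → Bool)) :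
    Finset (Fin n) × ((Fin n → Bool) → Bool) :=
  (a.1 \ B, fun y => a.2 (maskY B y))

theorem exists_of_push {α : Type*} [Fintype α] [DecidableEq α] (p : α → ℝ) (φ : α → α) (b : α)
    (h : (∑ a, if φ a = b then p a else 0) ≠ 0) : ∃ a, φ a = b ∧ p a ≠ 0 := by
  obtain ⟨a, _, ha⟩ := Finset.exists_ne_zero_of_sum_ne_zero h
  refine ⟨a, ?_⟩
  split_ifs at ha with h1
  · exact ⟨h1, ha⟩
  · exact absurd rfl ha

noncomputable def maskD {n q : ℕ} (B : Finset (Fin n)) (D : Decoder n q) : Decoder n q where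
  p b := ∑ a, if maskA B a = b then D.p a else 0
  nonneg b := Finset.sum_nonneg fun a _ => by
    split_ifs
    · exact D.nonneg a
    · exact le_rfl
  sum_one := by
    have := push_sum D.p (maskA B) (fun _ => True)
    simp only [if_true] at this
    rw [this, D.sum_one]
  query_bound b hb := by
    obtain ⟨a, rfl, ha⟩ := exists_of_push _ _ _ hb
    exact (Finset.card_le_card Finset.sdiff_subset).trans (D.query_bound a ha)
  local_dep b hb y y' hy := by
    obtain ⟨a, rfl, ha⟩ := exists_of_push _ _ _ hb
    refine D.local_dep a ha _ _ fun j hj => ?_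
    unfold maskY
    split_ifs with h
    · rfl
    · exact hy j (Finset.mem_sdiff.2 ⟨hj, h⟩)

theorem maskD_correct {n q : ℕ} (B : Finset (Fin n)) (D : Decoder n q) (y : Fin n → Bool)
    (b : Bool) : (maskD B D).correctProb y b = D.correctProb (maskY B y) b :=
  push_sum D.p (maskA B) (fun a => a.2 y = b)

theorem maskD_query {n q : ℕ} (B : Finset (Fin n)) (D : Decoder n q) (j : Fin n) :
    (maskD B D).queryProb j = if j ∈ B then 0 else D.queryProb j := by
  refine (push_sum D.p (maskA B) (fun a => j ∈ a.1)).trans ?_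
  split_ifs with h
  · simp [maskA, h]
  · simp [maskA, h, Decoder.queryProb]

theorem sum_query {n q : ℕ} (D : Decoder n q) : ∑ j, D.queryProb j ≤ q := by
  unfold Decoder.queryProb
  rw [Finset.sum_comm]
  calc _ ≤ ∑ a, (q : ℝ) * D.p a := by
        refine Finset.sum_le_sum fun a _ => ?_
        rw [← Finset.sum_filter, Finset.sum_const, nsmul_eq_mul]
        by_cases h : D.p a = 0
        · simp [h]
        · have h2 := D.query_bound a h
          refine mul_le_mul_of_nonneg_right ?_ (D.nonneg a)
          have : (Finset.univ.filter fun j => j ∈ a.1) = a.1 := by ext; simp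
          rw [this]
          exact_mod_cast h2
    _ = q := by rw [← Finset.mul_sum, D.sum_one, mul_one]

theorem query_nonneg {n q : ℕ} (D : Decoder n q) (j : Fin n) : 0 ≤ D.queryProb j :=
  Finset.sum_nonneg fun a _ => by
    split_ifs
    · exact D.nonneg a
    · exact le_rfl

/-- Katz–Trevisan, first direction: a `(q,δ,η)`-LDC is a `(q, q/δ, η)`-smooth code. -/
theorem LDC_is_smooth_code (k n q : ℕ) (hk : 0 < k) (hn : 0 < n) (hq : 0 < q)
    (δ η : ℝ) (hδ : δ ∈ Set.Ioc (0 : ℝ) (1/2)) (hη : η ∈ Set.Ioc (0 : ℝ) (1/2))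
    (C : (Fin k → Bool) → Fin n → Bool) (hC : IsLDC k n q δ η C) :
    IsSmoothCode k n q ((q : ℝ) / δ) η C := by
  intro i
  obtain ⟨D, hD⟩ := hC i
  have hδ0 : 0 < δ := hδ.1
  have hn' : (0 : ℝ) < n := by exact_mod_cast hn
  have hq' : (0 : ℝ) < q := by exact_mod_cast hq
  classical
  set t : ℝ := (q : ℝ) / δ / n with ht
  have ht0 : 0 < t := by positivity
  set B : Finset (Fin n) := Finset.univ.filter fun j => t < D.queryProb j with hB
  have hcard : (B.card : ℝ) ≤ δ * n := by
    have h1 : (B.card : ℝ) * t ≤ q := by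
      calc (B.card : ℝ) * t = ∑ j ∈ B, t := by rw [Finset.sum_const, nsmul_eq_mul]
        _ ≤ ∑ j ∈ B, D.queryProb j :=
            Finset.sum_le_sum fun j hj => (Finset.mem_filter.1 hj).2.le
        _ ≤ ∑ j, D.queryProb j :=
            Finset.sum_le_sum_of_subset_of_nonneg (Finset.subset_univ _)
              fun j _ _ => query_nonneg D j
        _ ≤ q := sum_query D
    have h2 : δ * n * t = q := by rw [ht]; field_simp
    rw [← h2] at h1
    exact le_of_mul_le_mul_right h1 ht0
  refine ⟨maskD B D, fun x => ?_, fun j => ?_⟩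
  · rw [maskD_correct]
    refine hD x _ (le_trans ?_ hcard)
    have : (Finset.univ.filter fun j => maskY B (C x) j ≠ C x j) ⊆ B := by
      intro j hj
      by_contra h
      exact (Finset.mem_filter.1 hj).2 (by simp [maskY, h])
    exact_mod_cast Finset.card_le_card this
  · rw [maskD_query]
    split_ifs with h
    · exact ht0.le
    · by_contra h'
      exact h (Finset.mem_filter.2 ⟨Finset.mem_univ _, not_le.1 h'⟩)
end

section
/- If C : {0,1}^k → {0,1}^n is a (q, c, η)-smooth code, then C is also a (q, η/(2c), η/2)-locally decodable code. -/
/-- Katz–Trevisan, second direction: a `(q,c,η)`-smooth code is a `(q, η/(2c), η/2)`-LDC. -/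
theorem smooth_code_is_LDC (k n q : ℕ) (hk : 0 < k) (hn : 0 < n) (hq : 0 < q)
    (c η : ℝ) (hc : 0 < c) (hη : η ∈ Set.Ioc (0 : ℝ) (1/2))
    (C : (Fin k → Bool) → Fin n → Bool) (hC : IsSmoothCode k n q c η C) :
    IsLDC k n q (η / (2 * c)) (η / 2) C := by
  intro i
  obtain ⟨D, h1, h2⟩ := hC i
  refine ⟨D, fun x y hxy => ?_⟩
  set B := Finset.univ.filter fun j => y j ≠ C x j with hB
  have key : D.correctProb (C x) (x i) ≤ D.correctProb y (x i) + ∑ j ∈ B, D.queryProb j := by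
    unfold Decoder.correctProb Decoder.queryProb
    rw [Finset.sum_comm, ← Finset.sum_add_distrib]
    refine Finset.sum_le_sum fun a _ => ?_
    have ha := D.nonneg a
    have hnn : ∀ j ∈ B, (0 : ℝ) ≤ if j ∈ a.1 then D.p a else 0 := by
      intro j _
      split_ifs <;> simp [ha]
    have hs := Finset.sum_nonneg hnn
    by_cases h0 : D.p a = 0
    · simp [h0]
    by_cases hd : ∃ j ∈ B, j ∈ a.1
    · obtain ⟨j, hj, hja⟩ := hd
      have h3 := Finset.single_le_sum hnn hj
      rw [if_pos hja] at h3
      split_ifs <;> linarith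
    · have he : a.2 y = a.2 (C x) := by
        refine D.local_dep a h0 _ _ fun j hj => ?_
        by_contra hne
        exact hd ⟨j, by simp [hB, hne], hj⟩
      rw [he]
      linarith
  have hsum : ∑ j ∈ B, D.queryProb j ≤ B.card * (c / n) := by
    have := Finset.sum_le_card_nsmul B D.queryProb (c / n) fun j _ => h2 j
    simpa [nsmul_eq_mul] using this
  have hn' : (0 : ℝ) < n := by exact_mod_cast hn
  have hb : (B.card : ℝ) * (c / n) ≤ η / 2 := by
    calc (B.card : ℝ) * (c / n) ≤ (η / (2 * c) * n) * (c / n) :=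
          mul_le_mul_of_nonneg_right hxy (by positivity)
      _ = η / 2 := by field_simp
  have := h1 x
  linarith
end

section
/- There exist absolute constants c1, c2, c3 > 0 such that the following holds. Let C : {0,1}^k → {0,1}^n be a (q, c, η)-average-case smooth code. Then there exists a (q, δ', η')-locally decodable code C' : {0,1}^l → {0,1}^n with δ' ≥ c1·η/c, η' ≥ c2·η, and l ≥ c3·η²·k / log(1/η). -/
open Finset in
lemma oneSided {α : Type*} (F : Finset α) (g : α → ℤ) (M : ℤ)
    (h0 : 2 * (F.filter fun f => M < g f).card ≤ F.card)
    (hno : ∀ a : ℤ, (F.filter fun f => a < g f).Nonempty → (F.filter fun f => g f < a).Nonempty →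
      √((F.filter fun f => a < g f).card : ℝ) + √((F.filter fun f => g f < a).card : ℝ)
        < √(F.card : ℝ)) :
    ∑ f ∈ F, max (g f - M) 0 ≤ F.card := by
  classical
  set H : ℕ → ℕ := fun j => (F.filter fun f => M + j < g f).card with hH
  have hmono : ∀ j, H (j+1) ≤ H j := by
    intro j
    apply card_le_card
    intro f hf
    simp only [mem_filter] at hf ⊢
    push_cast at hf
    exact ⟨hf.1, by linarith [hf.2]⟩
  have hle : ∀ j, 2 * H j ≤ F.card := by
    intro j
    induction j with
    | zero => simpa [hH] using h0
    | succ j ih => have := hmono j; omega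
  have hhalf : ∀ j, 2 * H (j+1) ≤ H j := by
    intro j
    by_contra hcon
    push Not at hcon
    have hcompl : (F.filter fun f => g f < M + (j+1 : ℕ)).card + H j = F.card := by
      rw [← card_filter_add_card_filter_not (s := F) (fun f => g f < M + (j+1 : ℕ))]
      congr 1
      simp only [hH]
      congr 1
      ext f
      simp only [mem_filter]
      push_cast
      constructor
      · rintro ⟨a, b⟩; exact ⟨a, by omega⟩
      · rintro ⟨a, b⟩; exact ⟨a, by omega⟩
    have hj := hle j
    have hpos : 0 < H (j+1) := by omega
    have hposL : 0 < (F.filter fun f => g f < M + (j+1 : ℕ)).card := by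
      have := hmono j; omega
    have h := hno (M + (j+1 : ℕ)) (card_pos.mp hpos) (card_pos.mp hposL)
    set L := (F.filter fun f => g f < M + (j+1 : ℕ)).card with hL
    change √(H (j+1) : ℝ) + √(L : ℝ) < _ at h
    have h1 : (L : ℝ) + H j = F.card := by exact_mod_cast hcompl
    have h2 : (H j : ℝ) < 2 * H (j+1) := by exact_mod_cast hcon
    have h3 : 2 * (H j : ℝ) ≤ F.card := by exact_mod_cast hj
    have hA := Real.sq_sqrt (show (0:ℝ) ≤ H (j+1) by positivity)
    have hB := Real.sq_sqrt (show (0:ℝ) ≤ L by positivity)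
    have h4 : √(H (j+1) : ℝ) ≤ √(L : ℝ) := by
      apply Real.sqrt_le_sqrt
      have : (H (j+1) : ℝ) ≤ H j := by exact_mod_cast hmono j
      linarith
    have hna := Real.sqrt_nonneg (H (j+1) : ℝ)
    have h5 : (√(H (j+1) : ℝ) + √(L : ℝ))^2 < F.card := by
      have := Real.lt_sqrt (y := F.card) (x := √(H (j+1) : ℝ) + √(L : ℝ)) (by positivity)
      exact this.mp h
    nlinarith
  have hsum : ∀ J, ∑ j ∈ range (J+1), H j + H J ≤ 2 * H 0 := by
    intro J
    induction J with
    | zero => simp; omega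
    | succ J ih => rw [sum_range_succ]; have := hhalf J; omega
  set J : ℕ := ∑ f ∈ F, (g f - M).toNat with hJ
  have hlayer : ∀ f ∈ F, max (g f - M) 0 = ∑ j ∈ range (J+1), if M + (j:ℤ) < g f then (1:ℤ) else 0 := by
    intro f hf
    have hb : (g f - M).toNat ≤ J := single_le_sum (f := fun f => (g f - M).toNat) (fun _ _ => Nat.zero_le _) hf
    rw [← sum_filter, sum_const]
    have : (range (J+1)).filter (fun j : ℕ => M + (j:ℤ) < g f) = range (g f - M).toNat := by
      ext j; simp only [mem_filter, mem_range]; omega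
    rw [this]; simp
  rw [sum_congr rfl hlayer, sum_comm]
  have : ∀ j ∈ range (J+1), (∑ f ∈ F, if M + (j:ℤ) < g f then (1:ℤ) else 0) = (H j : ℤ) := by
    intro j _
    simp [hH]
  rw [sum_congr rfl this]
  have h1 := hsum J
  have h2 := hle 0
  have : ∑ j ∈ range (J+1), H j ≤ F.card := by omega
  exact_mod_cast this

open Finset in
lemma exists_median {α : Type*} (F : Finset α) (g : α → ℤ) (hg : ∀ f ∈ F, 0 ≤ g f) :
    ∃ M : ℤ, 2 * (F.filter fun f => M < g f).card ≤ F.card ∧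
      2 * (F.filter fun f => g f < M).card ≤ F.card := by
  classical
  have hex : ∃ M : ℕ, 2 * (F.filter fun f => (M:ℤ) < g f).card ≤ F.card := by
    refine ⟨∑ f ∈ F, (g f).toNat, ?_⟩
    rw [filter_eq_empty_iff.mpr]
    · simp
    · intro f hf
      have hb : (g f).toNat ≤ ∑ f ∈ F, (g f).toNat := single_le_sum (f := fun f => (g f).toNat) (fun _ _ => Nat.zero_le _) hf
      omega
  refine ⟨(Nat.find hex : ℕ), Nat.find_spec hex, ?_⟩
  rcases hM : Nat.find hex with _ | M
  · rw [filter_eq_empty_iff.mpr]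
    · simp
    · intro f hf; have := hg f hf; simp; omega
  · have hmin := Nat.find_min hex (m := M) (by omega)
    have hc := card_filter_add_card_filter_not (s := F) (fun f => (M:ℤ) < g f)
    have : (F.filter fun f => g f < ((M+1 : ℕ):ℤ)) = F.filter fun f => ¬ (M:ℤ) < g f := by
      ext f; simp only [mem_filter]; push_cast
      constructor
      · rintro ⟨a, b⟩; exact ⟨a, by omega⟩
      · rintro ⟨a, b⟩; exact ⟨a, by omega⟩
    rw [this]; omega

open Finset in
lemma split_lemma {α : Type*} (F : Finset α) (g : α → ℤ) (hg : ∀ f ∈ F, 0 ≤ g f)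
    (hs : 4 * (F.card : ℤ)^2 < ∑ f ∈ F, ∑ f' ∈ F, |g f - g f'|) :
    ∃ a : ℤ, (F.filter fun f => a < g f).Nonempty ∧ (F.filter fun f => g f < a).Nonempty ∧
      √(F.card : ℝ) ≤
      √((F.filter fun f => a < g f).card : ℝ) + √((F.filter fun f => g f < a).card : ℝ) := by
  classical
  by_contra hcon
  push Not at hcon
  obtain ⟨M, hM1, hM2⟩ := exists_median F g hg
  have h1 := oneSided F g M hM1 hcon
  have h2 := oneSided F (fun f => - g f) (-M) (by simpa using hM2) (by
    intro a ha hb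
    have e1 : (F.filter fun f => a < - g f) = F.filter fun f => g f < -a := by
      ext f; simp only [mem_filter]; constructor <;> (rintro ⟨a, b⟩; exact ⟨a, by omega⟩)
    have e2 : (F.filter fun f => - g f < a) = F.filter fun f => -a < g f := by
      ext f; simp only [mem_filter]; constructor <;> (rintro ⟨a, b⟩; exact ⟨a, by omega⟩)
    rw [e1] at ha ⊢
    rw [e2] at hb ⊢
    rw [add_comm]
    exact hcon (-a) hb ha)
  have h3 : ∑ f ∈ F, |g f - M| ≤ 2 * F.card := by
    have : ∀ f ∈ F, |g f - M| = max (g f - M) 0 + max (-g f - -M) 0 := by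
      intro f _
      rcases le_total (g f) M with h | h
      · rw [abs_of_nonpos (by omega)]; omega
      · rw [abs_of_nonneg (by omega)]; omega
    rw [sum_congr rfl this, sum_add_distrib]
    linarith
  have h4 : ∑ f ∈ F, ∑ f' ∈ F, |g f - g f'| ≤ ∑ f ∈ F, ∑ f' ∈ F, (|g f - M| + |g f' - M|) := by
    apply sum_le_sum; intro f _; apply sum_le_sum; intro f' _
    have := abs_sub_le (g f) M (g f')
    rwa [abs_sub_comm M (g f')] at this
  simp only [sum_add_distrib, sum_const, nsmul_eq_mul] at h4
  rw [← mul_sum] at h4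
  nlinarith [h3, h4, hs]

def Shat {k m : ℕ} (F : Finset (Fin k → ℤ)) (s : Fin k → Fin (m+1)) : Prop :=
  ∀ z : Fin k → Bool, ∃ f ∈ F, ∀ i, s i ≠ 0 →
    (z i = true → ((s i : ℕ) : ℤ) < f i) ∧ (z i = false → f i < ((s i : ℕ) : ℤ))

open Classical in
noncomputable def ShSet {k : ℕ} (m : ℕ) (F : Finset (Fin k → ℤ)) : Finset (Fin k → Fin (m+1)) :=
  Finset.univ.filter fun s => Shat F s

open Finset in
lemma shat_split {k m : ℕ} (F : Finset (Fin k → ℤ)) (hF : ∀ f ∈ F, ∀ i, 0 ≤ f i ∧ f i ≤ m)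
    (i : Fin k) (a : ℤ) (hA : (F.filter fun f => a < f i).Nonempty)
    (hB : (F.filter fun f => f i < a).Nonempty) :
    (ShSet m (F.filter fun f => a < f i)).card + (ShSet m (F.filter fun f => f i < a)).card
      ≤ (ShSet m F).card := by
  classical
  set A := F.filter fun f => a < f i with hAdef
  set B := F.filter fun f => f i < a with hBdef
  obtain ⟨fa, hfa⟩ := hA
  obtain ⟨fb, hfb⟩ := hB
  rw [hAdef, mem_filter] at hfa
  rw [hBdef, mem_filter] at hfb
  have ha0 : 0 < a := by have := hF fb hfb.1 i; omega
  have ham : a < m := by have := hF fa hfa.1 i; omega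
  obtain ⟨n, rfl⟩ := Int.eq_ofNat_of_zero_le ha0.le
  let v : Fin (m+1) := ⟨n, by omega⟩
  have hv0 : v ≠ 0 := by
    intro h; have := congrArg Fin.val h; simp [v] at this; omega
  have hvv : ((v : ℕ) : ℤ) = n := rfl
  have hAs : ∀ s : Fin k → Fin (m+1), Shat A s → s i ≠ 0 → (n:ℤ) < ((s i : ℕ):ℤ) := by
    intro s hs h0
    obtain ⟨f, hf, h⟩ := hs (fun _ => false)
    have := (h i h0).2 rfl
    rw [hAdef, mem_filter] at hf
    omega
  have hBs : ∀ s : Fin k → Fin (m+1), Shat B s → s i ≠ 0 → ((s i : ℕ):ℤ) < n := by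
    intro s hs h0
    obtain ⟨f, hf, h⟩ := hs (fun _ => true)
    have := (h i h0).1 rfl
    rw [hBdef, mem_filter] at hf
    omega
  have hAB0 : ∀ s : Fin k → Fin (m+1), s ∈ ShSet m A ∩ ShSet m B → s i = 0 := by
    intro s hs
    simp only [ShSet, mem_inter, mem_filter, mem_univ, true_and] at hs
    by_contra h0
    have := hAs s hs.1 h0
    have := hBs s hs.2 h0
    omega
  rw [← card_union_add_card_inter]
  let φ : (Fin k → Fin (m+1)) → (Fin k → Fin (m+1)) := fun s => Function.update s i v
  have hinj : Set.InjOn φ (ShSet m A ∩ ShSet m B : Finset _) := by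
    intro s hs t ht hst
    ext1 j
    by_cases hj : j = i
    · subst hj; rw [hAB0 s hs, hAB0 t ht]
    · have := congrFun hst j
      simpa [φ, hj] using this
  rw [← card_image_of_injOn hinj, ← card_union_of_disjoint]
  · apply card_le_card
    intro s hs
    simp only [mem_union, mem_image] at hs
    simp only [ShSet, mem_inter, mem_filter, mem_univ, true_and] at hs ⊢
    rcases hs with (hs | hs) | ⟨t, ht, rfl⟩
    · intro z; obtain ⟨f, hf, h⟩ := hs z; exact ⟨f, (mem_filter.mp hf).1, h⟩
    · intro z; obtain ⟨f, hf, h⟩ := hs z; exact ⟨f, (mem_filter.mp hf).1, h⟩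
    · intro z
      cases hz : z i
      · obtain ⟨f, hf, h⟩ := ht.2 z
        rw [hBdef, mem_filter] at hf
        refine ⟨f, hf.1, ?_⟩
        intro j hj
        by_cases hji : j = i
        · subst hji
          simp only [φ, Function.update_self, hz]
          exact ⟨by simp, fun _ => hf.2⟩
        · simp only [φ, Function.update_of_ne hji] at hj ⊢
          exact h j hj
      · obtain ⟨f, hf, h⟩ := ht.1 z
        rw [hAdef, mem_filter] at hf
        refine ⟨f, hf.1, ?_⟩
        intro j hj
        by_cases hji : j = i
        · subst hji
          simp only [φ, Function.update_self, hz]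
          exact ⟨fun _ => hf.2, by simp⟩
        · simp only [φ, Function.update_of_ne hji] at hj ⊢
          exact h j hj
  · rw [disjoint_left]
    intro s hs hs2
    simp only [mem_image] at hs2
    obtain ⟨t, _, rfl⟩ := hs2
    have hi : φ t i = v := by simp [φ]
    simp only [ShSet, mem_union, mem_filter, mem_univ, true_and] at hs
    rcases hs with hs | hs
    · have := hAs _ hs (by rw [hi]; exact hv0); rw [hi] at this; omega
    · have := hBs _ hs (by rw [hi]; exact hv0); rw [hi] at this; omega

open Finset in
lemma tree_lemma {k m : ℕ} : ∀ (N : ℕ) (F : Finset (Fin k → ℤ)), F.card = N →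
    (∀ f ∈ F, ∀ i, 0 ≤ f i ∧ f i ≤ m) →
    (∀ f ∈ F, ∀ g ∈ F, f ≠ g → 8 * (k:ℤ) < ∑ i, |f i - g i|) →
    √(F.card : ℝ) ≤ (ShSet m F).card := by
  classical
  intro N
  induction N using Nat.strong_induction_on with
  | _ N ih =>
  intro F hN hF hsep
  rcases Nat.lt_or_ge F.card 2 with hlt | hge
  · rcases F.eq_empty_or_nonempty with rfl | hne
    · simp
    · have h1 : F.card = 1 := by have := card_pos.mpr hne; omega
      rw [h1]
      have : 0 < (ShSet m F).card := by
        apply card_pos.mpr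
        refine ⟨fun _ => 0, ?_⟩
        simp only [ShSet, mem_filter, mem_univ, true_and]
        intro z
        obtain ⟨f, hf⟩ := hne
        exact ⟨f, hf, by simp⟩
      have h2 : (1:ℝ) ≤ (ShSet m F).card := by exact_mod_cast this
      simpa using h2
  · have hbig : ∃ i : Fin k, 4 * (F.card : ℤ)^2 < ∑ f ∈ F, ∑ f' ∈ F, |f i - f' i| := by
      by_contra hcon
      push Not at hcon
      have h1 : ∑ i : Fin k, ∑ f ∈ F, ∑ f' ∈ F, |f i - f' i| ≤ ∑ i : Fin k, 4 * (F.card : ℤ)^2 :=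
        sum_le_sum fun i _ => hcon i
      rw [sum_const, card_univ, Fintype.card_fin, nsmul_eq_mul, sum_comm] at h1
      have h2 : ∀ f ∈ F, (8 * (k:ℤ) + 1) * (F.card - 1) ≤ ∑ i : Fin k, ∑ f' ∈ F, |f i - f' i| := by
        intro f hf
        rw [sum_comm, ← add_sum_erase F _ hf]
        have : ∑ x ∈ F.erase f, (8 * (k:ℤ) + 1) ≤ ∑ x ∈ F.erase f, ∑ i, |f i - x i| := by
          apply sum_le_sum
          intro x hx
          rw [mem_erase] at hx
          have := hsep f hf x hx.2 (Ne.symm hx.1)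
          omega
        rw [sum_const, card_erase_of_mem hf, nsmul_eq_mul] at this
        have hc : ((F.card - 1 : ℕ) : ℤ) = F.card - 1 := by omega
        rw [hc] at this
        simp
        linarith
      have h3 := sum_le_sum h2
      rw [sum_const, nsmul_eq_mul] at h3
      have hg : (2:ℤ) ≤ F.card := by exact_mod_cast hge
      have hk : (0:ℤ) ≤ k := by positivity
      have h4 := h3.trans h1
      have h5 : 0 ≤ (F.card : ℤ) * (k * (F.card - 2)) := by
        apply mul_nonneg (by omega); apply mul_nonneg hk; omega
      have h6 : 0 < (F.card : ℤ) * (F.card - 1) := by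
        apply mul_pos <;> omega
      nlinarith
    obtain ⟨i, hi⟩ := hbig
    obtain ⟨a, hA, hB, hAB⟩ := split_lemma F (fun f => f i) (fun f hf => (hF f hf i).1) hi
    have hs := shat_split F hF i a hA hB
    have hdisj : (F.filter fun f => a < f i).card + (F.filter fun f => f i < a).card ≤ F.card := by
      rw [← card_union_of_disjoint]
      · apply card_le_card; intro f hf; simp only [mem_union, mem_filter] at hf; tauto
      · rw [disjoint_left]; intro f h1 h2
        simp only [mem_filter] at h1 h2; omega
    have pA := card_pos.mpr hA
    have pB := card_pos.mpr hB
    have iA := ih _ (by omega) (F.filter fun f => a < f i) rfl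
      (fun f hf => hF f (mem_filter.mp hf).1)
      (fun f hf g hg => hsep f (mem_filter.mp hf).1 g (mem_filter.mp hg).1)
    have iB := ih _ (by omega) (F.filter fun f => f i < a) rfl
      (fun f hf => hF f (mem_filter.mp hf).1)
      (fun f hf g hg => hsep f (mem_filter.mp hf).1 g (mem_filter.mp hg).1)
    have hs' : ((ShSet m (F.filter fun f => a < f i)).card : ℝ)
      + (ShSet m (F.filter fun f => f i < a)).card ≤ (ShSet m F).card := by exact_mod_cast hs
    linarith

noncomputable def eps (b : Bool) : ℝ := if b then 1 else -1

lemma abs_eps (b : Bool) : |eps b| = 1 := by cases b <;> simp [eps]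

open Finset in
lemma mgf_bound {k : ℕ} (u : Fin k → ℝ) (hu : ∀ i, |u i| ≤ 1/2) (t : ℝ) :
    ∑ x : Fin k → Bool, Real.exp (t * ∑ i, eps (x i) * u i) ≤ 2^k * Real.exp (t^2 * k / 8) := by
  classical
  have h1 : ∀ x : Fin k → Bool, Real.exp (t * ∑ i, eps (x i) * u i)
      = ∏ i, Real.exp (t * (eps (x i) * u i)) := by
    intro x; rw [mul_sum, Real.exp_sum]
  simp_rw [h1]
  have h2 := Finset.prod_univ_sum (fun _ : Fin k => (univ : Finset Bool))
    (fun i b => Real.exp (t * (eps b * u i)))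
  rw [Fintype.piFinset_univ] at h2
  rw [← h2]
  have h3 : ∀ i ∈ (univ : Finset (Fin k)), ∑ b : Bool, Real.exp (t * (eps b * u i)) ≤ 2 * Real.exp (t^2/8) := by
    intro i _
    have hc := Real.cosh_le_exp_half_sq (t * u i)
    rw [Real.cosh_eq] at hc
    have h4 : Real.exp ((t * u i)^2/2) ≤ Real.exp (t^2/8) := by
      apply Real.exp_le_exp.mpr
      have : (u i)^2 ≤ (1/2)^2 := sq_le_sq' (by linarith [(abs_le.mp (hu i)).1]) (abs_le.mp (hu i)).2
      nlinarith [sq_nonneg t]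
    simp [eps]
    linarith
  refine (prod_le_prod (fun i _ => by positivity) h3).trans ?_
  rw [prod_const, card_univ, Fintype.card_fin, mul_pow, ← Real.exp_nat_mul]
  apply le_of_eq; congr 2; ring

open Finset in
lemma exists_packing {k : ℕ} (G : Finset (Fin k → ℤ)) :
    ∃ T ⊆ G, (∀ f ∈ T, ∀ g ∈ T, f ≠ g → 8 * (k:ℤ) < ∑ i, |f i - g i|) ∧
      ∀ g ∈ G, ∃ f ∈ T, ∑ i, |g i - f i| ≤ 8 * (k:ℤ) := by
  classical
  obtain ⟨T, hT, hmax⟩ := exists_max_image (G.powerset.filter fun T =>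
    ∀ f ∈ T, ∀ g ∈ T, f ≠ g → 8 * (k:ℤ) < ∑ i, |f i - g i|) card ⟨∅, by simp⟩
  rw [mem_filter, mem_powerset] at hT
  refine ⟨T, hT.1, hT.2, ?_⟩
  intro g hg
  by_contra hcon
  push Not at hcon
  have hgT : g ∉ T := by
    intro h
    have := hcon g h
    simp at this
    omega
  have := hmax (insert g T) (by
    rw [mem_filter, mem_powerset]
    refine ⟨insert_subset hg hT.1, ?_⟩
    intro f hf f' hf' hne
    rw [mem_insert] at hf hf'
    rcases hf with rfl | hf
    · rcases hf' with rfl | hf'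
      · exact absurd rfl hne
      · exact hcon f' hf'
    · rcases hf' with rfl | hf'
      · simp_rw [abs_sub_comm (f _)]; exact hcon f hf
      · exact hT.2 f hf f' hf' hne)
  rw [card_insert_of_notMem hgT] at this
  omega

open Finset in
lemma count_bound {k m : ℕ} (S : Finset (Fin k → Fin (m+1))) (D t : ℝ) (ht : 0 < t) (ht1 : t ≤ 1)
    (hS : ∀ s ∈ S, ((univ.filter fun i => s i ≠ 0).card : ℝ) ≤ D) :
    (S.card : ℝ) * t ^ D ≤ Real.exp (m * t * k) := by
  classical
  have h1 : (S.card : ℝ) * t ^ D ≤ ∑ s ∈ S, ∏ i, (if s i ≠ 0 then t else 1) := by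
    rw [← nsmul_eq_mul, ← sum_const]
    apply sum_le_sum
    intro s hs
    rw [prod_ite, prod_const, prod_const_one, mul_one, ← Real.rpow_natCast]
    exact Real.rpow_le_rpow_of_exponent_ge ht ht1 (hS s hs)
  have h2 : ∑ s ∈ S, ∏ i, (if s i ≠ 0 then t else 1) ≤
      ∑ s : Fin k → Fin (m+1), ∏ i, (if s i ≠ 0 then t else 1) := by
    apply sum_le_sum_of_subset_of_nonneg (subset_univ _)
    intro s _ _
    apply prod_nonneg; intro i _; split_ifs <;> positivity
  have h3 := Finset.prod_univ_sum (fun _ : Fin k => (univ : Finset (Fin (m+1))))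
    (fun i v => (if v ≠ 0 then t else (1:ℝ)))
  rw [Fintype.piFinset_univ] at h3
  rw [← h3] at h2
  have h4 : ∑ v : Fin (m+1), (if v ≠ 0 then t else (1:ℝ)) = 1 + m * t := by
    rw [Fin.sum_univ_succ]
    simp
  rw [h4, prod_const, card_univ, Fintype.card_fin] at h2
  have h5 : (1 + m * t)^k ≤ Real.exp (m * t * k) := by
    have : 1 + m * t ≤ Real.exp (m * t) := by linarith [Real.add_one_le_exp (m * t)]
    have := pow_le_pow_left₀ (by positivity) this k
    rwa [← Real.exp_nat_mul, mul_comm (k:ℝ)] at this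
  linarith

open Finset in
lemma core {k : ℕ} (hk : 0 < k) (η : ℝ) (h0 : 0 < η) (h1 : η ≤ 1/2)
    (a : (Fin k → Bool) → Fin k → ℝ) (ha : ∀ x i, 0 ≤ a x i ∧ a x i ≤ 1)
    (h : η * (2^k * k) ≤ ∑ x, ∑ i, eps (x i) * (a x i - 1/2)) :
    ∃ (m : ℕ) (s : Fin k → Fin (m+1)),
      1/100 * η^2 * k / Real.log (1/η) < (univ.filter fun i => s i ≠ 0).card ∧
      ∀ z : Fin k → Bool, ∃ x : Fin k → Bool, ∀ i, s i ≠ 0 →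
        (z i = true → (η/18) * (((s i : ℕ) : ℝ) + 1) ≤ a x i) ∧
        (z i = false → a x i < (η/18) * ((s i : ℕ) : ℝ)) := by
  classical
  set w := η/18 with hw
  have hw0 : 0 < w := by positivity
  let b : (Fin k → Bool) → Fin k → ℤ := fun x i => ⌊a x i / w⌋
  set m := ⌊18/η⌋₊ with hm
  have hmle : (m:ℝ) ≤ 18/η := Nat.floor_le (by positivity)
  have hb1 : ∀ x i, w * (b x i : ℝ) ≤ a x i := by
    intro x i
    have : (b x i : ℝ) ≤ a x i / w := Int.floor_le _
    rw [le_div_iff₀ hw0] at this; linarith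
  have hb2 : ∀ x i, a x i < w * ((b x i : ℝ) + 1) := by
    intro x i
    have : a x i / w < (b x i : ℝ) + 1 := Int.lt_floor_add_one _
    rw [div_lt_iff₀ hw0] at this; linarith
  have hb0 : ∀ x i, 0 ≤ b x i := fun x i => Int.floor_nonneg.mpr (div_nonneg (ha x i).1 hw0.le)
  have hbm : ∀ x i, b x i ≤ m := by
    intro x i
    have h2 : (b x i : ℝ) ≤ 18/η := by
      refine (Int.floor_le _).trans ?_
      rw [hw, div_div_eq_mul_div]
      apply div_le_div_of_nonneg_right _ h0.le
      linarith [(ha x i).2]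
    have h3 : (b x i).toNat ≤ m := by
      apply Nat.le_floor
      rw [show (((b x i).toNat : ℕ) : ℝ) = (b x i : ℝ) by
        exact_mod_cast congrArg (Int.cast (R := ℝ)) (Int.toNat_of_nonneg (hb0 x i))]
      exact h2
    omega
  obtain ⟨T, hTG, hsep, hcov⟩ := exists_packing (univ.image b)
  have hT : ∀ f ∈ T, ∃ x, b x = f := by
    intro f hf; simpa using hTG hf
  have htree := tree_lemma (m := m) _ T rfl (by
    intro f hf i
    obtain ⟨x, rfl⟩ := hT f hf
    exact ⟨hb0 x i, hbm x i⟩) hsep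
  -- Massart
  have hcov' : ∀ x, ∃ f ∈ T, ∑ i, eps (x i) * (a x i - 1/2) - η * k / 2
      ≤ ∑ i, eps (x i) * (w * f i - 1/2) := by
    intro x
    obtain ⟨f, hf, hfs⟩ := hcov (b x) (by simp)
    refine ⟨f, hf, ?_⟩
    have e1 : ∑ i, eps (x i) * (a x i - 1/2) - ∑ i, eps (x i) * (w * f i - 1/2)
        ≤ ∑ i, (w + w * ((|b x i - f i| : ℤ) : ℝ)) := by
      rw [← sum_sub_distrib]
      apply sum_le_sum
      intro i _
      have : eps (x i) * (a x i - 1/2) - eps (x i) * (w * f i - 1/2)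
        = eps (x i) * ((a x i - w * b x i) + w * ((b x i : ℝ) - f i)) := by ring
      rw [this]
      refine (le_abs_self _).trans ?_
      rw [abs_mul, abs_eps, one_mul]
      refine (abs_add_le _ _).trans ?_
      rw [abs_mul, abs_of_pos hw0]
      push_cast
      have : |a x i - w * b x i| ≤ w := by
        rw [abs_le]; constructor <;> nlinarith [hb1 x i, hb2 x i]
      linarith
    rw [sum_add_distrib, ← mul_sum, sum_const, card_univ, Fintype.card_fin, nsmul_eq_mul] at e1
    have e2 : ∑ i, ((|b x i - f i| : ℤ) : ℝ) ≤ 8 * k := by exact_mod_cast hfs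
    have e3 := mul_le_mul_of_nonneg_left e2 hw0.le
    have : w * (8 * k) + k * w = η * k / 2 := by rw [hw]; ring
    linarith
  have hN : Real.exp (η^2 * k / 2) ≤ T.card := by
    have hx : ∀ x : Fin k → Bool, 1 + 2 * η * (∑ i, eps (x i) * (a x i - 1/2) - η * k)
        ≤ Real.exp (-(η^2 * k)) * ∑ f ∈ T, Real.exp (2 * η * ∑ i, eps (x i) * (w * f i - 1/2)) := by
      intro x
      obtain ⟨f, hf, hfs⟩ := hcov' x
      have e1 : Real.exp (2 * η * ∑ i, eps (x i) * (w * f i - 1/2)) ≤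
          ∑ f ∈ T, Real.exp (2 * η * ∑ i, eps (x i) * (w * f i - 1/2)) :=
        single_le_sum (f := fun f : Fin k → ℤ => Real.exp (2 * η * ∑ i, eps (x i) * (w * f i - 1/2)))
          (fun _ _ => (Real.exp_pos _).le) hf
      have e2 := mul_le_mul_of_nonneg_left e1 (Real.exp_pos (-(η^2 * k))).le
      refine le_trans ?_ e2
      rw [← Real.exp_add]
      refine le_trans ?_ (Real.add_one_le_exp _)
      nlinarith
    have hsum := sum_le_sum (fun x (_ : x ∈ (univ : Finset (Fin k → Bool))) => hx x)
    rw [← mul_sum, sum_comm] at hsum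
    have hm2 : ∑ f ∈ T, ∑ x : Fin k → Bool, Real.exp (2 * η * ∑ i, eps (x i) * (w * f i - 1/2))
        ≤ ∑ f ∈ T, 2^k * Real.exp ((2*η)^2 * k / 8) := by
      apply sum_le_sum
      intro f hf
      obtain ⟨x, rfl⟩ := hT f hf
      apply mgf_bound
      intro i
      have := hb1 x i
      have := (ha x i).2
      have h3 : (0:ℝ) ≤ b x i := by exact_mod_cast hb0 x i
      have := mul_nonneg hw0.le h3
      rw [abs_le]; constructor <;> linarith
    rw [sum_const, nsmul_eq_mul] at hm2
    rw [sum_add_distrib, ← mul_sum, sum_sub_distrib] at hsum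
    simp only [sum_const, card_univ, Fintype.card_fun, Fintype.card_bool, Fintype.card_fin, nsmul_eq_mul] at hsum
    push_cast at hsum
    have e0 : (2:ℝ)^k ≤ Real.exp (-(η^2 * k)) * (T.card * (2^k * Real.exp ((2*η)^2 * k / 8))) := by
      refine le_trans ?_ (mul_le_mul_of_nonneg_left hm2 (Real.exp_pos _).le)
      refine le_trans ?_ hsum
      have : 0 ≤ 2 * η * (∑ x : Fin k → Bool, ∑ i, eps (x i) * (a x i - 1/2) - 2^k * (η * k)) := by
        apply mul_nonneg (by positivity); linarith
      linarith
    have e1 : Real.exp (-(η^2 * k)) * (T.card * (2^k * Real.exp ((2*η)^2 * k / 8)))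
        = 2^k * (T.card * Real.exp (-(η^2 * k / 2))) := by
      have : Real.exp (-(η^2 * k / 2)) = Real.exp (-(η^2 * k)) * Real.exp ((2*η)^2 * k / 8) := by
        rw [← Real.exp_add]; congr 1; ring
      rw [this]; ring
    rw [e1] at e0
    have e2 : 1 ≤ T.card * Real.exp (-(η^2 * k / 2)) := by
      have h2 : (0:ℝ) < 2^k := by positivity
      by_contra hc
      push Not at hc
      nlinarith
    rw [Real.exp_neg, ← div_eq_mul_inv, le_div_iff₀ (Real.exp_pos _), one_mul] at e2
    exact e2
  have hSh : Real.exp (η^2 * k / 4) ≤ (ShSet m T).card := by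
    refine le_trans ?_ htree
    apply Real.le_sqrt_of_sq_le
    rw [← Real.exp_nat_mul]
    refine le_trans (le_of_eq ?_) hN
    congr 1; push_cast; ring
  set L := Real.log (1/η) with hL
  have hLpos : 0 < L := by
    apply Real.log_pos
    rw [lt_div_iff₀ h0]; linarith
  have hex : ∃ s ∈ ShSet m T, 1/100 * η^2 * k / L < (univ.filter fun i => s i ≠ 0).card := by
    by_contra hcon
    push Not at hcon
    have ht0 : 0 < η^3/144 := by positivity
    have hη3 : η^3 ≤ 1 := pow_le_one₀ h0.le (by linarith)
    have hc := count_bound (ShSet m T) _ (η^3/144) ht0 (by linarith) hcon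
    have hmt : m * (η^3/144) ≤ η^2/8 := by
      have := mul_le_mul_of_nonneg_right hmle ht0.le
      refine this.trans (le_of_eq ?_)
      field_simp; norm_num
    have hkr : (0:ℝ) < k := by exact_mod_cast hk
    have hc2 : Real.exp (m * (η^3/144) * k) ≤ Real.exp (η^2/8 * k) :=
      Real.exp_le_exp.mpr (mul_le_mul_of_nonneg_right hmt hkr.le)
    have hlog : -(11 * L) ≤ Real.log (η^3/144) := by
      have e : -(11 * L) = Real.log (η^11) := by
        rw [hL, Real.log_pow, one_div, Real.log_inv]; push_cast; ring
      rw [e]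
      apply Real.log_le_log (by positivity)
      have : η^8 ≤ (1/2)^8 := pow_le_pow_left₀ h0.le h1 8
      have h3 : 0 < η^3 := by positivity
      have : η^11 = η^3 * η^8 := by ring
      rw [this]
      nlinarith
    have hpow : Real.exp (-(11/100 * η^2 * k)) ≤ (η^3/144) ^ (1/100 * η^2 * k / L) := by
      rw [Real.rpow_def_of_pos ht0]
      apply Real.exp_le_exp.mpr
      have hD : 0 ≤ 1/100 * η^2 * k / L := by positivity
      have := mul_le_mul_of_nonneg_right hlog hD
      refine le_trans (le_of_eq ?_) this
      field_simp
    have : Real.exp (η^2 * k / 4) * Real.exp (-(11/100 * η^2 * k)) ≤ Real.exp (η^2/8 * k) :=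
      (mul_le_mul hSh hpow (Real.exp_pos _).le (by positivity)).trans (hc.trans hc2)
    rw [← Real.exp_add, Real.exp_le_exp] at this
    have : 0 < η^2 * k := by positivity
    linarith
  obtain ⟨s, hs, hcard⟩ := hex
  refine ⟨m, s, hcard, ?_⟩
  simp only [ShSet, mem_filter, mem_univ, true_and] at hs
  intro z
  obtain ⟨f, hf, hfs⟩ := hs z
  obtain ⟨x, rfl⟩ := hT f hf
  refine ⟨x, fun i hi => ⟨fun hz => ?_, fun hz => ?_⟩⟩
  · have h2 := (hfs i hi).1 hz
    have h3 : ((s i : ℕ) : ℝ) + 1 ≤ b x i := by exact_mod_cast h2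
    exact (mul_le_mul_of_nonneg_left h3 hw0.le).trans (hb1 x i)
  · have h2 := (hfs i hi).2 hz
    have h3 : (b x i : ℝ) + 1 ≤ ((s i : ℕ) : ℝ) := by exact_mod_cast h2
    exact (hb2 x i).trans_le (mul_le_mul_of_nonneg_left h3 hw0.le)

open Finset in
lemma correct_false {n q : ℕ} (D : Decoder n q) (y : Fin n → Bool) :
    D.correctProb y false = 1 - D.correctProb y true := by
  unfold Decoder.correctProb
  rw [← D.sum_one, ← sum_sub_distrib]
  apply sum_congr rfl
  intro a _
  cases a.2 y <;> simp

open Finset in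
lemma correct_range {n q : ℕ} (D : Decoder n q) (y : Fin n → Bool) :
    0 ≤ D.correctProb y true ∧ D.correctProb y true ≤ 1 := by
  unfold Decoder.correctProb
  constructor
  · apply sum_nonneg; intro a _; split_ifs
    · exact D.nonneg a
    · exact le_rfl
  · rw [← D.sum_one]
    apply sum_le_sum; intro a _; split_ifs
    · exact le_rfl
    · exact D.nonneg a

open Finset in
lemma correct_stable {n q : ℕ} (D : Decoder n q) (y y' : Fin n → Bool) (b : Bool) (c δ : ℝ)
    (hn : 0 < n) (hc : 0 ≤ c)
    (hq : ∀ j, D.queryProb j ≤ c / n)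
    (hd : ((univ.filter fun j => y j ≠ y' j).card : ℝ) ≤ δ * n) :
    D.correctProb y' b ≤ D.correctProb y b + δ * c := by
  classical
  have h1 : D.correctProb y' b ≤ D.correctProb y b +
      ∑ j ∈ univ.filter (fun j => y j ≠ y' j), D.queryProb j := by
    unfold Decoder.correctProb Decoder.queryProb
    rw [sum_comm, ← sum_add_distrib]
    apply sum_le_sum
    intro a _
    have hnn : ∀ j ∈ univ.filter (fun j => y j ≠ y' j), (0:ℝ) ≤ if j ∈ a.1 then D.p a else 0 := by
      intro j _; split_ifs
      · exact D.nonneg a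
      · exact le_rfl
    by_cases hp : D.p a = 0
    · simp [hp]
    by_cases hhit : ∃ j ∈ a.1, y j ≠ y' j
    · obtain ⟨j, hj, hne⟩ := hhit
      have := single_le_sum hnn (mem_filter.mpr ⟨mem_univ j, hne⟩)
      rw [if_pos hj] at this
      have := D.nonneg a
      split_ifs <;> linarith
    · push Not at hhit
      rw [D.local_dep a hp y y' hhit]
      linarith [sum_nonneg hnn]
  have h2 : ∑ j ∈ univ.filter (fun j => y j ≠ y' j), D.queryProb j ≤ δ * c := by
    refine (sum_le_sum fun j _ => hq j).trans ?_
    rw [sum_const, nsmul_eq_mul]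
    have hn' : (0:ℝ) < n := by exact_mod_cast hn
    have := mul_le_mul_of_nonneg_right hd (div_nonneg hc hn'.le)
    refine this.trans (le_of_eq ?_)
    field_simp
  linarith

open Finset in
lemma exists_shift {n q : ℕ} (D : Decoder n q) (θ : ℝ) (h0 : 0 ≤ θ) (h1 : θ ≤ 1) :
    ∃ D' : Decoder n q, ∀ y, D'.correctProb y true = 1/2 + (D.correctProb y true - θ) / 2 := by
  classical
  let ct : Finset (Fin n) × ((Fin n → Bool) → Bool) := (∅, fun _ => true)
  let cf : Finset (Fin n) × ((Fin n → Bool) → Bool) := (∅, fun _ => false)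
  have key : ∀ a : Finset (Fin n) × ((Fin n → Bool) → Bool),
      D.p a / 2 + (if a = ct then (1-θ)/2 else 0) + (if a = cf then θ/2 else 0) ≠ 0 →
      D.p a ≠ 0 ∨ a = ct ∨ a = cf := by
    intro a h
    by_contra hc
    push Not at hc
    simp [hc.1, hc.2.1, hc.2.2] at h
  refine ⟨⟨fun a => D.p a / 2 + (if a = ct then (1-θ)/2 else 0) + (if a = cf then θ/2 else 0),
    ?_, ?_, ?_, ?_⟩, ?_⟩
  · intro a
    have := D.nonneg a
    have : 0 ≤ (1-θ)/2 := by linarith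
    have : 0 ≤ θ/2 := by linarith
    split_ifs <;> linarith
  · rw [sum_add_distrib, sum_add_distrib, ← sum_div, D.sum_one]
    simp
    ring
  · intro a h
    rcases key a h with h | rfl | rfl
    · exact D.query_bound a h
    · simp [ct]
    · simp [cf]
  · intro a h
    rcases key a h with h | rfl | rfl
    · exact D.local_dep a h
    · intro _ _ _; rfl
    · intro _ _ _; rfl
  · intro y
    unfold Decoder.correctProb
    have : ∀ a : Finset (Fin n) × ((Fin n → Bool) → Bool),
        (if a.2 y = true then D.p a / 2 + (if a = ct then (1-θ)/2 else 0) + (if a = cf then θ/2 else 0) else 0)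
        = (if a.2 y = true then D.p a else 0) / 2 + (if a = ct then (1-θ)/2 else 0) := by
      intro a
      by_cases h2 : a = cf
      · subst h2
        have hne : cf ≠ ct := by
          intro h
          have := congrFun (congrArg Prod.snd h) y
          simp [cf, ct] at this
        rw [if_neg (by simp [cf]), if_neg (by simp [cf]), if_neg hne]; simp
      · by_cases h3 : a = ct
        · subst h3
          rw [if_pos rfl, if_pos rfl, if_neg h2]; simp
        · rw [if_neg h2, if_neg h3]
          split_ifs <;> simp
    rw [sum_congr rfl fun a _ => this a, sum_add_distrib, ← sum_div]
    simp
    ring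

/-- Average-case smooth codes can be turned into honest locally decodable codes,
losing only constant factors in the parameters. -/
theorem avg_smooth_code_to_LDC :
    ∃ c1 c2 c3 : ℝ, 0 < c1 ∧ 0 < c2 ∧ 0 < c3 ∧
      ∀ (k n q : ℕ), 0 < k → 0 < n →
      ∀ (c η : ℝ), 0 < c → η ∈ Set.Ioc (0 : ℝ) (1/2) →
      ∀ C : (Fin k → Bool) → Fin n → Bool, IsAvgSmoothCode k n q c η C →
      ∃ (l : ℕ) (δ' η' : ℝ) (C' : (Fin l → Bool) → Fin n → Bool),
        IsLDC l n q δ' η' C' ∧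
        c1 * η / c ≤ δ' ∧ δ' ≤ 1/2 ∧
        c2 * η ≤ η' ∧ η' ≤ 1/2 ∧
        c3 * η ^ 2 * k / Real.log (1/η) ≤ l := by
  classical
  refine ⟨1/72, 1/144, 1/100, by norm_num, by norm_num, by norm_num, ?_⟩
  intro k n q hk hn c η hc hη C hC
  obtain ⟨h0, h1⟩ := hη
  obtain ⟨D, hq, hD⟩ := hC
  have hkr : (0:ℝ) < k := by exact_mod_cast hk
  have hnr : (0:ℝ) < n := by exact_mod_cast hn
  have hsum : η * (2^k * k) ≤ ∑ x : Fin k → Bool, ∑ i,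
      eps (x i) * ((D i).correctProb (C x) true - 1/2) := by
    rw [le_div_iff₀ (by positivity)] at hD
    have : ∀ x : Fin k → Bool, ∑ i, (D i).correctProb (C x) (x i) =
        k * (1/2) + ∑ i, eps (x i) * ((D i).correctProb (C x) true - 1/2) := by
      intro x
      have h3 : (k:ℝ) * (1/2) = ∑ i : Fin k, (1/2 : ℝ) := by simp
      rw [h3, ← Finset.sum_add_distrib]
      apply Finset.sum_congr rfl
      intro i _
      cases x i
      · rw [correct_false]; simp [eps]; ring
      · simp [eps]
    simp_rw [this] at hD
    rw [Finset.sum_add_distrib] at hD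
    simp only [Finset.sum_const, Finset.card_univ, Fintype.card_fun, Fintype.card_bool,
      Fintype.card_fin, nsmul_eq_mul] at hD
    push_cast at hD
    linarith
  obtain ⟨m, s, hcard, hsh⟩ := core hk η h0 h1 (fun x i => (D i).correctProb (C x) true)
    (fun x i => correct_range (D i) (C x)) hsum
  choose X hX using hsh
  set I := Finset.univ.filter fun i => s i ≠ 0 with hI
  have hIpos : 0 < I.card := by
    have hLpos : 0 < Real.log (1/η) := by
      apply Real.log_pos
      rw [lt_div_iff₀ h0]; linarith
    have : (0:ℝ) < I.card := lt_of_le_of_lt (by positivity) hcard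
    exact_mod_cast this
  have hcη : η / 18 ≤ c := by
    obtain ⟨i, hi⟩ := Finset.card_pos.mp hIpos
    have hi0 : s i ≠ 0 := by simpa [hI] using hi
    have e1 := (hX (fun _ => true) i hi0).1 rfl
    have e2 := (hX (fun _ => false) i hi0).2 rfl
    have e3 := correct_stable (D i) (C (X fun _ => false)) (C (X fun _ => true)) true c 1 hn hc.le
      (hq i) (by
        rw [one_mul]
        have := Finset.card_filter_le (Finset.univ : Finset (Fin n))
          (fun j => C (X fun _ => false) j ≠ C (X fun _ => true) j)
        rw [Finset.card_univ, Fintype.card_fin] at this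
        exact_mod_cast this)
    linarith
  let e : Fin I.card ≃ I := I.equivFin.symm
  let ext : (Fin I.card → Bool) → Fin k → Bool := fun z i =>
    if h : i ∈ I then z (e.symm ⟨i, h⟩) else false
  have hext : ∀ z j, ext z (e j) = z j := by
    intro z j
    simp [ext]
  refine ⟨I.card, η/(72*c), η/144, fun z => C (X (ext z)), ?_, ?_, ?_, ?_, ?_, hcard.le⟩
  · intro j
    set i : Fin k := (e j : Fin k) with hi
    have hi0 : s i ≠ 0 := by
      have := (e j).2
      have := Finset.mem_filter.mp this
      exact this.2
    have hθ1 : η/18 * (((s i : ℕ):ℝ) + 1/2) ≤ 1 := by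
      have e1 := (hX (fun _ => true) i hi0).1 rfl
      have e2 := (correct_range (D i) (C (X fun _ => true))).2
      linarith
    obtain ⟨D', hD'⟩ := exists_shift (D i) (η/18 * (((s i : ℕ):ℝ) + 1/2)) (by positivity) hθ1
    refine ⟨D', ?_⟩
    intro z y hy
    have hδ : η/(72*c) * c = η/72 := by field_simp
    have hzi : ext z i = z j := hext z j
    have hXz := hX (ext z) i hi0
    rw [hzi] at hXz
    have hst := fun b => correct_stable (D i) y (C (X (ext z))) b c _ hn hc.le (hq i) hy
    cases hz : z j
    · have e1 := hXz.2 hz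
      have e2 := hst false
      rw [correct_false, correct_false, hδ] at e2
      rw [correct_false, hD']
      linarith
    · have e1 := hXz.1 hz
      have e2 := hst true
      rw [hδ] at e2
      rw [hD']
      linarith
  · apply le_of_eq; field_simp
  · rw [div_le_iff₀ (by positivity)]; linarith
  · linarith
  · linarith
end

section
/- Let ε > 0 and let μ be a probability distribution over 1-smooth functions on {−1,1}^n that is a (k, ε)-outlaw. Then there exists a probability distribution μ̃ over 1-smooth functions on {−1,1}^n of degree at most q = ⌈4/ε⌉ that is a (k, ε/2)-outlaw; in particular κ_{μ̃}(ε/2) ≥ κ_μ(ε). -/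
/-- The Fourier coefficient `f̂(S)` of `f : {−1,1}^n → ℝ`, where `{−1,1}^n` is encoded as
`Fin n → Bool` via `true ↦ 1`, `false ↦ −1`. -/
noncomputable def walshCoeff {n : ℕ} (f : (Fin n → Bool) → ℝ) (S : Finset (Fin n)) : ℝ :=
  (∑ x : Fin n → Bool, f x * ∏ i ∈ S, (if x i then (1 : ℝ) else -1)) / 2 ^ n

/-- The spectral norm `‖f‖_spec = Σ_S |f̂(S)|`. -/
noncomputable def specNorm {n : ℕ} (f : (Fin n → Bool) → ℝ) : ℝ :=
  ∑ S : Finset (Fin n), |walshCoeff f S|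

/-- The `i`-th discrete derivative `D_i f(x) = (f(x) − f(x^i))/2`. -/
noncomputable def discDeriv {n : ℕ} (i : Fin n) (f : (Fin n → Bool) → ℝ) :
    (Fin n → Bool) → ℝ :=
  fun x => (f x - f (Function.update x i (!x i))) / 2

/-- `f` is `σ`-smooth: every discrete derivative has spectral norm at most `σ/n`. -/
def IsSmoothFn {n : ℕ} (σ : ℝ) (f : (Fin n → Bool) → ℝ) : Prop :=
  ∀ i : Fin n, specNorm (discDeriv i f) ≤ σ / n

/-- `f` has degree at most `d`: all Fourier coefficients on sets of size `> d` vanish. -/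
def DegLE {n : ℕ} (d : ℕ) (f : (Fin n → Bool) → ℝ) : Prop :=
  ∀ S : Finset (Fin n), d < S.card → walshCoeff f S = 0
/-- The probability distribution `μ` on real-valued functions on `{−1,1}^n` is a
`(k,ε)`-outlaw: for independent `μ`-distributed `f_1, …, f_k` with mean `f̄ = E_μ[f]`,
`E‖(1/k)·Σ (f_i − f̄)‖_∞ ≥ ε`.  Here the sup norm on the (finite) product space
`(Fin n → Bool) → ℝ` is exactly the `L∞` norm `max_x |g x|`. -/
def IsOutlaw {n : ℕ} (k : ℕ) (ε : ℝ)
    (μ : MeasureTheory.Measure ((Fin n → Bool) → ℝ)) : Prop :=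
  ε ≤ ∫ F : Fin k → ((Fin n → Bool) → ℝ),
        ‖(k : ℝ)⁻¹ • ∑ i : Fin k, (F i - ∫ f, f ∂μ)‖
      ∂(MeasureTheory.Measure.pi fun _ : Fin k => μ)

noncomputable def chiW {n : ℕ} (S : Finset (Fin n)) (x : Fin n → Bool) : ℝ :=
  ∏ i ∈ S, (if x i then (1 : ℝ) else -1)

lemma chiW_abs {n : ℕ} (S : Finset (Fin n)) (x : Fin n → Bool) : |chiW S x| = 1 := by
  unfold chiW
  rw [Finset.abs_prod]
  apply Finset.prod_eq_one
  intro i _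
  split_ifs <;> simp

lemma walsh_inv {n : ℕ} (f : (Fin n → Bool) → ℝ) (x : Fin n → Bool) :
    ∑ S : Finset (Fin n), walshCoeff f S * chiW S x = f x := by
  have h1 : ∀ y : Fin n → Bool, ∑ S : Finset (Fin n), chiW S y * chiW S x
      = if y = x then 2 ^ n else 0 := by
    intro y
    have : ∑ S : Finset (Fin n), chiW S y * chiW S x
        = ∏ i : Fin n, (1 + (if y i then (1 : ℝ) else -1) * (if x i then (1 : ℝ) else -1)) := by
      rw [Finset.prod_one_add]
      simp only [chiW, Finset.prod_mul_distrib, Finset.powerset_univ]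
    rw [this]
    split_ifs with h
    · subst h
      rw [Finset.prod_congr rfl (g := fun _ => (2 : ℝ))]
      · simp
      · intro i _
        split_ifs <;> norm_num
    · obtain ⟨i, hi⟩ := Function.ne_iff.mp h
      apply Finset.prod_eq_zero (Finset.mem_univ i)
      cases hy : y i <;> cases hx : x i <;> simp_all
  have h2 : ∀ S : Finset (Fin n), walshCoeff f S * chiW S x
      = ∑ y : Fin n → Bool, f y * (chiW S y * chiW S x) / 2 ^ n := by
    intro S
    unfold walshCoeff
    rw [← Finset.sum_div, div_mul_eq_mul_div, Finset.sum_mul]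
    simp only [chiW, mul_assoc]
  simp only [h2]
  rw [Finset.sum_comm]
  simp only [← Finset.sum_div, ← Finset.mul_sum, h1]
  simp

lemma walsh_orth {n : ℕ} (S T : Finset (Fin n)) :
    walshCoeff (chiW S) T = if S = T then 1 else 0 := by
  have h1 : ∑ x : Fin n → Bool, chiW S x * ∏ i ∈ T, (if x i then (1 : ℝ) else -1)
      = ∏ i : Fin n, ∑ b : Bool, ((if i ∈ S then (if b then (1 : ℝ) else -1) else 1) *
        (if i ∈ T then (if b then (1 : ℝ) else -1) else 1)) := by
    rw [Finset.prod_univ_sum]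
    simp only [Fintype.piFinset_univ, chiW, Finset.prod_mul_distrib, Finset.prod_ite_mem,
      Finset.univ_inter]
  unfold walshCoeff
  rw [h1]
  split_ifs with h
  · subst h
    rw [Finset.prod_congr rfl (g := fun _ => (2 : ℝ))]
    · simp
    · intro i _
      by_cases hi : i ∈ S <;> simp [hi] <;> norm_num
  · have : ∃ i, ¬ (i ∈ S ↔ i ∈ T) := by
      by_contra! hc
      exact h (Finset.ext hc)
    obtain ⟨i, hi⟩ := this
    rw [Finset.prod_eq_zero (Finset.mem_univ i), zero_div]
    by_cases hS : i ∈ S <;> by_cases hT : i ∈ T <;> simp_all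

noncomputable def walshL {n : ℕ} (S : Finset (Fin n)) : ((Fin n → Bool) → ℝ) →ₗ[ℝ] ℝ where
  toFun f := walshCoeff f S
  map_add' f g := by
    simp [walshCoeff, add_mul, Finset.sum_add_distrib, add_div]
  map_smul' c f := by
    simp [walshCoeff, mul_assoc, ← Finset.mul_sum, mul_div_assoc]

noncomputable def projW {n : ℕ} (A : Finset (Finset (Fin n))) :
    ((Fin n → Bool) → ℝ) →L[ℝ] ((Fin n → Bool) → ℝ) :=
  LinearMap.toContinuousLinearMap (∑ S ∈ A, (walshL S).smulRight (chiW S))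

lemma projW_eq {n : ℕ} (A : Finset (Finset (Fin n))) (f : (Fin n → Bool) → ℝ) :
    projW A f = ∑ S ∈ A, walshCoeff f S • chiW S := by
  simp [projW]
  rfl

lemma walsh_proj {n : ℕ} (A : Finset (Finset (Fin n))) (f : (Fin n → Bool) → ℝ)
    (T : Finset (Fin n)) :
    walshCoeff (projW A f) T = if T ∈ A then walshCoeff f T else 0 := by
  change walshL T (projW A f) = _
  rw [projW_eq, map_sum]
  simp only [map_smul]
  have : ∀ S, walshL T (chiW S) = if S = T then 1 else 0 := fun S => walsh_orth S T
  simp [this]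

lemma walsh_deriv {n : ℕ} (i : Fin n) (f : (Fin n → Bool) → ℝ) (S : Finset (Fin n)) :
    walshCoeff (discDeriv i f) S = if i ∈ S then walshCoeff f S else 0 := by
  have hinv : Function.Involutive
      (fun x : Fin n → Bool => Function.update x i (!x i)) := by
    intro x
    simp
  have h1 : ∑ x : Fin n → Bool, f (Function.update x i (!x i)) * chiW S x
      = ∑ x : Fin n → Bool, f x * chiW S (Function.update x i (!x i)) := by
    rw [← Equiv.sum_comp hinv.toPerm]
    apply Finset.sum_congr rfl
    intro x _
    simp
  have h2 : ∀ x : Fin n → Bool, chiW S (Function.update x i (!x i))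
      = if i ∈ S then - chiW S x else chiW S x := by
    intro x
    unfold chiW
    split_ifs with h
    · rw [← Finset.mul_prod_erase S _ h, ← Finset.mul_prod_erase S (fun i => if x i then (1 : ℝ) else -1) h,
        ← neg_mul]
      congr 1
      · cases hx : x i <;> simp [hx]
      · apply Finset.prod_congr rfl
        intro j hj
        rw [Function.update_of_ne (Finset.ne_of_mem_erase hj)]
    · apply Finset.prod_congr rfl
      intro j hj
      rw [Function.update_of_ne]
      rintro rfl
      exact h hj
  have h3 : walshCoeff (discDeriv i f) S = ((∑ x : Fin n → Bool, f x * chiW S x)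
      - ∑ x : Fin n → Bool, f (Function.update x i (!x i)) * chiW S x) / 2 / 2 ^ n := by
    unfold walshCoeff discDeriv
    rw [← Finset.sum_sub_distrib]
    congr 1
    rw [Finset.sum_div]
    apply Finset.sum_congr rfl
    intro x _
    unfold chiW
    ring
  rw [h3, h1]
  simp only [h2]
  split_ifs with h
  · simp only [mul_neg, Finset.sum_neg_distrib, walshCoeff, chiW]
    ring
  · simp

lemma smooth_iff {n : ℕ} (f : (Fin n → Bool) → ℝ) :
    IsSmoothFn 1 f ↔ ∀ i : Fin n,
      ∑ S : Finset (Fin n), (if i ∈ S then |walshCoeff f S| else 0) ≤ 1 / n := by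
  unfold IsSmoothFn specNorm
  simp only [walsh_deriv, apply_ite abs, abs_zero]

lemma smooth_sum {n : ℕ} (f : (Fin n → Bool) → ℝ) (hf : IsSmoothFn 1 f) :
    ∑ S : Finset (Fin n), (S.card : ℝ) * |walshCoeff f S| ≤ 1 := by
  rw [smooth_iff] at hf
  have : ∑ S : Finset (Fin n), (S.card : ℝ) * |walshCoeff f S|
      = ∑ i : Fin n, ∑ S : Finset (Fin n), (if i ∈ S then |walshCoeff f S| else 0) := by
    rw [Finset.sum_comm]
    apply Finset.sum_congr rfl
    intro S _
    simp
  rw [this]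
  calc _ ≤ ∑ i : Fin n, (1 / n : ℝ) := Finset.sum_le_sum fun i _ => hf i
    _ ≤ 1 := by
      simp only [Finset.sum_const, Finset.card_univ, Fintype.card_fin, nsmul_eq_mul]
      rw [mul_one_div]
      exact div_self_le_one _

lemma high_bound {n : ℕ} (f : (Fin n → Bool) → ℝ) (hf : IsSmoothFn 1 f) (ε : ℝ) (hε : 0 < ε) :
    ‖projW (Finset.univ.filter fun S : Finset (Fin n) => ¬ S.card ≤ ⌈4 / ε⌉₊) f‖ ≤ ε / 4 := by
  rw [pi_norm_le_iff_of_nonneg (by positivity)]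
  intro x
  rw [projW_eq, Finset.sum_apply]
  have key : ∀ S ∈ (Finset.univ.filter fun S : Finset (Fin n) => ¬ S.card ≤ ⌈4 / ε⌉₊),
      ‖(walshCoeff f S • chiW S) x‖ ≤ ε / 4 * ((S.card : ℝ) * |walshCoeff f S|) := by
    intro S hS
    simp only [Finset.mem_filter, Finset.mem_univ, true_and, not_le] at hS
    have h4 : 4 / ε ≤ S.card := (Nat.le_ceil _).trans (by exact_mod_cast hS.le)
    rw [div_le_iff₀ hε] at h4
    simp only [Pi.smul_apply, smul_eq_mul, Real.norm_eq_abs, abs_mul, chiW_abs, mul_one]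
    nlinarith [abs_nonneg (walshCoeff f S)]
  calc _ ≤ _ := norm_sum_le_of_le _ key
    _ ≤ ∑ S : Finset (Fin n), ε / 4 * ((S.card : ℝ) * |walshCoeff f S|) :=
      Finset.sum_le_sum_of_subset_of_nonneg (Finset.filter_subset _ _)
        (fun _ _ _ => by positivity)
    _ ≤ ε / 4 := by
      rw [← Finset.mul_sum]
      nlinarith [smooth_sum f hf]

lemma proj_add {n : ℕ} (q : ℕ) (f : (Fin n → Bool) → ℝ) :
    projW (Finset.univ.filter fun S : Finset (Fin n) => S.card ≤ q) f +
    projW (Finset.univ.filter fun S : Finset (Fin n) => ¬ S.card ≤ q) f = f := by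
  rw [projW_eq, projW_eq, Finset.sum_filter_add_sum_filter_not]
  ext x
  rw [Finset.sum_apply, ← walsh_inv f x]
  simp

lemma smooth_proj {n : ℕ} (A : Finset (Finset (Fin n))) (f : (Fin n → Bool) → ℝ)
    (hf : IsSmoothFn 1 f) : IsSmoothFn 1 (projW A f) := by
  rw [smooth_iff] at hf ⊢
  intro i
  refine le_trans (Finset.sum_le_sum fun S _ => ?_) (hf i)
  rw [walsh_proj]
  split_ifs <;> simp

lemma measurable_walsh {n : ℕ} (S : Finset (Fin n)) :
    Measurable (fun f : (Fin n → Bool) → ℝ => walshCoeff f S) := by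
  unfold walshCoeff
  fun_prop

lemma meas_set {n : ℕ} (q : ℕ) :
    MeasurableSet {f : (Fin n → Bool) → ℝ | IsSmoothFn 1 f ∧ DegLE q f} := by
  simp only [smooth_iff, DegLE]
  refine Measurable.setOf (Measurable.and (Measurable.forall fun i => ?_)
    (Measurable.forall fun S => Measurable.forall fun _ => ?_))
  · refine measurableSet_setOfPred.1
      (measurableSet_le (Finset.measurable_fun_sum _ fun S _ => ?_) measurable_const)
    split_ifs
    · simpa only [Real.norm_eq_abs] using (measurable_walsh S).norm
    · exact measurable_const
  · exact measurableSet_setOfPred.1 (measurableSet_eq_fun (measurable_walsh S) measurable_const)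

open MeasureTheory in
/-- A `(k,ε)`-outlaw over 1-smooth functions yields a `(k, ε/2)`-outlaw over 1-smooth
functions of degree at most `⌈4/ε⌉`; in particular `κ_{μ̃}(ε/2) ≥ κ_μ(ε)`. -/
theorem truncate_outlaw (n k : ℕ) (ε : ℝ) (hε : 0 < ε)
    (μ : MeasureTheory.Measure ((Fin n → Bool) → ℝ))
    (hμ : MeasureTheory.IsProbabilityMeasure μ)
    (hsupp : ∀ᵐ f ∂μ, IsSmoothFn 1 f)
    (houtlaw : IsOutlaw k ε μ) :
    ∃ ν : MeasureTheory.Measure ((Fin n → Bool) → ℝ),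
      MeasureTheory.IsProbabilityMeasure ν ∧
      (∀ᵐ f ∂ν, IsSmoothFn 1 f ∧ DegLE ⌈4 / ε⌉₊ f) ∧
      IsOutlaw k (ε / 2) ν := by
  set q := ⌈4 / ε⌉₊ with hq
  set T := projW (Finset.univ.filter fun S : Finset (Fin n) => S.card ≤ q) with hT
  set H := projW (Finset.univ.filter fun S : Finset (Fin n) => ¬ S.card ≤ q) with hH
  have hadd : ∀ f, T f + H f = f := fun f => proj_add q f
  have hTm : Measurable T := T.continuous.measurable
  have hHb : ∀ᵐ f ∂μ, ‖H f‖ ≤ ε / 4 := hsupp.mono fun f hf => high_bound f hf ε hε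
  have hHint : Integrable (fun f => H f) μ :=
    Integrable.of_bound H.continuous.aestronglyMeasurable (ε / 4) hHb
  have hprob : IsProbabilityMeasure (μ.map T) :=
    Measure.isProbabilityMeasure_map hTm.aemeasurable
  refine ⟨μ.map T, hprob, ?_, ?_⟩
  · rw [ae_map_iff hTm.aemeasurable (meas_set q)]
    filter_upwards [hsupp] with f hf
    refine ⟨smooth_proj _ f hf, fun S hS => ?_⟩
    rw [hT, walsh_proj, if_neg]
    simpa using hS
  · have hmean : ∫ f, f ∂(μ.map T) = T (∫ f, f ∂μ) := by
      rw [integral_map hTm.aemeasurable (f := fun f => f) aestronglyMeasurable_id]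
      by_cases hi : Integrable (fun f => f) μ
      · exact T.integral_comp_comm hi
      · rw [integral_undef hi, map_zero, integral_undef]
        intro hc
        apply hi
        exact (hc.add hHint).congr (Filter.Eventually.of_forall fun f => hadd f)
    have hHm : ‖H (∫ f, f ∂μ)‖ ≤ ε / 4 := by
      by_cases hi : Integrable (fun f => f) μ
      · rw [← H.integral_comp_comm hi]
        simpa using norm_integral_le_of_norm_le_const hHb
      · rw [integral_undef hi, map_zero, norm_zero]
        positivity
    unfold IsOutlaw at houtlaw ⊢
    rw [hmean]
    set m := ∫ f, f ∂μ with hm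
    have hpi : Measure.pi (fun _ : Fin k => μ.map T)
        = (Measure.pi fun _ : Fin k => μ).map (fun F i => T (F i)) :=
      (Measure.pi_map_pi fun _ => hTm.aemeasurable).symm
    have hTT : Measurable (fun (F : Fin k → ((Fin n → Bool) → ℝ)) i => T (F i)) := by
      fun_prop
    rw [hpi, integral_map hTT.aemeasurable
      (by apply Continuous.aestronglyMeasurable; fun_prop)]
    have hint : Integrable (fun F : Fin k → ((Fin n → Bool) → ℝ) =>
        ‖(k : ℝ)⁻¹ • ∑ i : Fin k, (F i - m)‖) (Measure.pi fun _ : Fin k => μ) := by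
      by_contra hc
      rw [integral_undef hc] at houtlaw
      linarith
    have hae : ∀ᵐ F ∂(Measure.pi fun _ : Fin k => μ), ∀ i, ‖H (F i)‖ ≤ ε / 4 := by
      rw [ae_all_iff]
      intro i
      exact (Measure.quasiMeasurePreserving_eval (fun _ : Fin k => μ) i).ae hHb
    have hdiff : ∀ᵐ F ∂(Measure.pi fun _ : Fin k => μ),
        ‖(k : ℝ)⁻¹ • ∑ i : Fin k, (F i - m) - (k : ℝ)⁻¹ • ∑ i : Fin k, (T (F i) - T m)‖
          ≤ ε / 2 := by
      filter_upwards [hae] with F hF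
      rw [← smul_sub, ← Finset.sum_sub_distrib, norm_smul]
      have : ‖∑ i : Fin k, (F i - m - (T (F i) - T m))‖ ≤ ∑ i : Fin k, ε / 2 := by
        apply norm_sum_le_of_le
        intro i _
        have e : F i - m - (T (F i) - T m) = H (F i) - H m := by
          nth_rewrite 1 [← hadd (F i)]
          nth_rewrite 1 [← hadd m]
          abel
        rw [e]
        linarith [norm_sub_le (H (F i)) (H m), hF i]
      simp only [Finset.sum_const, Finset.card_univ, Fintype.card_fin, nsmul_eq_mul] at this
      rw [norm_inv, Real.norm_natCast]
      rcases Nat.eq_zero_or_pos k with hk | hk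
      · have : (k : ℝ) = 0 := by exact_mod_cast hk
        rw [this]
        simp
        positivity
      · rw [inv_mul_le_iff₀ (by exact_mod_cast hk)]
        exact this
    have hint2 : Integrable (fun F : Fin k → ((Fin n → Bool) → ℝ) =>
        ‖(k : ℝ)⁻¹ • ∑ i : Fin k, (T (F i) - T m)‖) (Measure.pi fun _ : Fin k => μ) := by
      refine (hint.add (integrable_const (ε / 2))).mono'
        (by apply Continuous.aestronglyMeasurable; fun_prop) ?_
      filter_upwards [hdiff] with F hF
      rw [norm_norm]
      simp only [Pi.add_apply]
      rw [norm_sub_rev] at hF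
      linarith [norm_sub_norm_le ((k : ℝ)⁻¹ • ∑ i : Fin k, (T (F i) - T m))
        ((k : ℝ)⁻¹ • ∑ i : Fin k, (F i - m))]
    have hle := integral_mono_ae hint (hint2.add (integrable_const (ε / 2))) (by
      filter_upwards [hdiff] with F hF
      simp only [Pi.add_apply]
      linarith [norm_sub_norm_le ((k : ℝ)⁻¹ • ∑ i : Fin k, (F i - m))
        ((k : ℝ)⁻¹ • ∑ i : Fin k, (T (F i) - T m))])
    rw [integral_add' hint2 (integrable_const _)] at hle
    simp only [integral_const, probReal_univ, one_smul] at hle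
    linarith
end

section
/- Let q be a positive integer and let f : {−1,1}^n → ℝ be 1-smooth. Then Σ_{S⊆[n], |S|>q} |f̂(S)| ≤ 1/q, and consequently the degree-q truncation f^{≤q} = Σ_{|S|≤q} f̂(S)·χ_S satisfies ‖f − f^{≤q}‖_{L∞} ≤ 1/q. -/
theorem aux_flip {n : ℕ} (f : (Fin n → Bool) → ℝ) (S : Finset (Fin n)) (i : Fin n) (hi : i ∈ S) :
    walshCoeff (discDeriv i f) S = walshCoeff f S := by
  have hinv : Function.Involutive (fun x : Fin n → Bool => Function.update x i (!x i)) := by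
    intro x
    simp
  have h1 : ∑ x : Fin n → Bool, f (Function.update x i (!x i)) *
        ∏ j ∈ S, (if x j then (1 : ℝ) else -1)
      = - ∑ x : Fin n → Bool, f x * ∏ j ∈ S, (if x j then (1 : ℝ) else -1) := by
    rw [← Finset.sum_neg_distrib]
    refine Fintype.sum_equiv hinv.toPerm _ _ ?_
    intro x
    change f (Function.update x i (!x i)) * ∏ j ∈ S, (if x j then (1 : ℝ) else -1)
      = -(f (Function.update x i (!x i)) *
        ∏ j ∈ S, (if Function.update x i (!x i) j then (1 : ℝ) else -1))
    rw [← Finset.mul_prod_erase S _ hi, ← Finset.mul_prod_erase S _ hi]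
    have h2 : ∏ j ∈ S.erase i, (if Function.update x i (!x i) j then (1 : ℝ) else -1)
        = ∏ j ∈ S.erase i, (if x j then (1 : ℝ) else -1) := by
      refine Finset.prod_congr rfl fun j hj => ?_
      rw [Function.update_of_ne (Finset.ne_of_mem_erase hj)]
    rw [h2, Function.update_self]
    cases x i <;> simp
  unfold walshCoeff discDeriv
  congr 1
  have h3 : ∀ x : Fin n → Bool, (f x - f (Function.update x i (!x i))) / 2 *
        ∏ j ∈ S, (if x j then (1 : ℝ) else -1)
      = (f x * ∏ j ∈ S, (if x j then (1 : ℝ) else -1)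
        - f (Function.update x i (!x i)) * ∏ j ∈ S, (if x j then (1 : ℝ) else -1)) / 2 := by
    intro x; ring
  rw [Finset.sum_congr rfl fun x _ => h3 x, ← Finset.sum_div, Finset.sum_sub_distrib, h1]
  ring

theorem aux_orth {n : ℕ} (x y : Fin n → Bool) :
    ∑ S : Finset (Fin n), (∏ i ∈ S, (if y i then (1 : ℝ) else -1)) *
      ∏ i ∈ S, (if x i then (1 : ℝ) else -1) = if y = x then 2 ^ n else 0 := by
  simp_rw [← Finset.prod_mul_distrib]
  rw [← Finset.powerset_univ, ← Finset.prod_one_add]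
  split_ifs with h
  · subst h
    rw [Finset.prod_congr rfl (g := fun _ => (2 : ℝ))]
    · simp
    · intro i _
      cases y i <;> norm_num
  · obtain ⟨i, hi⟩ := Function.ne_iff.mp h
    refine Finset.prod_eq_zero (Finset.mem_univ i) ?_
    revert hi
    cases y i <;> cases x i <;> simp

theorem aux_inv {n : ℕ} (f : (Fin n → Bool) → ℝ) (x : Fin n → Bool) :
    f x = ∑ S : Finset (Fin n), walshCoeff f S * ∏ i ∈ S, (if x i then (1 : ℝ) else -1) := by
  have h : ∀ S : Finset (Fin n), walshCoeff f S * ∏ i ∈ S, (if x i then (1 : ℝ) else -1)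
      = (∑ y : Fin n → Bool, f y * ((∏ i ∈ S, (if y i then (1 : ℝ) else -1)) *
      ∏ i ∈ S, (if x i then (1 : ℝ) else -1))) / 2 ^ n := by
    intro S
    unfold walshCoeff
    rw [div_mul_eq_mul_div, Finset.sum_mul]
    simp_rw [mul_assoc]
  rw [Finset.sum_congr rfl fun S _ => h S, ← Finset.sum_div, Finset.sum_comm]
  simp_rw [← Finset.mul_sum, aux_orth]
  simp

theorem aux_tail (n q : ℕ) (hq : 0 < q)
    (f : (Fin n → Bool) → ℝ) (hf : IsSmoothFn 1 f) :
    (∑ S ∈ Finset.univ.filter (fun S : Finset (Fin n) => q < S.card),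
        |walshCoeff f S|) ≤ 1 / q := by
  have h1 : ∀ i : Fin n, ∑ S : Finset (Fin n), (if i ∈ S then |walshCoeff f S| else 0) ≤ 1 / n := by
    intro i
    refine le_trans (Finset.sum_le_sum fun S _ => ?_) (hf i)
    split_ifs with h
    · rw [aux_flip f S i h]
    · positivity
  have h2 : ∑ S : Finset (Fin n), (S.card : ℝ) * |walshCoeff f S| ≤ 1 := by
    calc _ = ∑ i : Fin n, ∑ S : Finset (Fin n), (if i ∈ S then |walshCoeff f S| else 0) := by
          rw [Finset.sum_comm]
          refine Finset.sum_congr rfl fun S _ => ?_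
          simp
      _ ≤ ∑ i : Fin n, (1 / n : ℝ) := Finset.sum_le_sum fun i _ => h1 i
      _ ≤ 1 := by
          simp only [Finset.sum_const, Finset.card_univ, Fintype.card_fin, nsmul_eq_mul]
          rw [mul_one_div]
          exact div_self_le_one _
  have hq' : (0 : ℝ) < q := by exact_mod_cast hq
  rw [le_div_iff₀ hq', Finset.sum_mul]
  refine le_trans (le_trans (Finset.sum_le_sum fun S hS => ?_)
    (Finset.sum_le_univ_sum_of_nonneg fun S => by positivity)) h2
  rw [mul_comm]
  have : (q : ℝ) ≤ S.card := by exact_mod_cast (Finset.mem_filter.mp hS).2.le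
  gcongr

/-- A 1-smooth function has Fourier tail mass at most `1/q` above level `q`, and hence its
degree-`q` truncation approximates it within `1/q` in `L∞`. -/
theorem smooth_tail_bound (n q : ℕ) (hq : 0 < q)
    (f : (Fin n → Bool) → ℝ) (hf : IsSmoothFn 1 f) :
    (∑ S ∈ Finset.univ.filter (fun S : Finset (Fin n) => q < S.card),
        |walshCoeff f S|) ≤ 1 / q ∧
    ∀ x : Fin n → Bool,
      |f x - ∑ S ∈ Finset.univ.filter (fun S : Finset (Fin n) => S.card ≤ q),
          walshCoeff f S * ∏ i ∈ S, (if x i then (1 : ℝ) else -1)| ≤ 1 / q := by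
  refine ⟨aux_tail n q hq f hf, fun x => ?_⟩
  refine le_trans ?_ (aux_tail n q hq f hf)
  have h := aux_inv f x
  rw [← Finset.sum_filter_add_sum_filter_not Finset.univ
    (fun S : Finset (Fin n) => S.card ≤ q)] at h
  rw [h, add_sub_cancel_left]
  simp only [not_le]
  refine le_trans (Finset.abs_sum_le_sum_abs _ _) (Finset.sum_le_sum fun S _ => ?_)
  rw [abs_mul, Finset.abs_prod, Finset.prod_eq_one, mul_one]
  intro i _
  split_ifs <;> simp
end

section
/- For every odd prime p and every ε ∈ (0,1], there exist a positive integer n1(p,ε) and c = c(p,ε) ∈ (0,1/2] such that the following holds for all positive integers n ≥ n1(p,ε) and k. Assume that for independent uniformly distributed z_1, …, z_k ∈ F_p^n, with probability at least 1/2 there exists a set B ⊆ F_p^n with |B| ≥ ε·p^n such that every nontrivial line containing at least one of z_1, …, z_k meets B in at most p−2 points. Then there exists a (p−1, c, c)-locally decodable code sending {0,1}^l to {0,1}^{p^n}, where l = Ω(c²·k / log(1/c)) (with an absolute implied constant). -/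
namespace LTL

open scoped BigOperators

/-- indicator of a proposition -/
noncomputable def ind (P : Prop) : ℝ := by
  classical exact if P then 1 else 0

lemma ind_true {P : Prop} (h : P) : ind P = 1 := by simp [ind, h]
lemma ind_false {P : Prop} (h : ¬ P) : ind P = 0 := by simp [ind, h]
lemma ind_nonneg (P : Prop) : 0 ≤ ind P := by
  by_cases h : P <;> simp [ind, h]
lemma ind_le_one (P : Prop) : ind P ≤ 1 := by
  by_cases h : P <;> simp [ind, h]
lemma ind_mono {P Q : Prop} (h : P → Q) : ind P ≤ ind Q := by
  by_cases hP : P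
  · simp [ind, hP, h hP]
  · rw [ind_false hP]; exact ind_nonneg _
lemma ind_congr {P Q : Prop} (h : P ↔ Q) : ind P = ind Q := by rw [propext h]

/-- average over a finite type -/
noncomputable def E {X : Type} [Finite X] (f : X → ℝ) : ℝ :=
  letI := Fintype.ofFinite X
  Finset.expect Finset.univ f

lemma E_eq {X : Type} [Finite X] [inst : Fintype X] (f : X → ℝ) :
    E f = Finset.expect Finset.univ f := by
  unfold E
  congr!

lemma E_eq_sum {X : Type} [Finite X] [inst : Fintype X] (f : X → ℝ) :
    E f = (∑ x, f x) / Fintype.card X := by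
  rw [E_eq, Fintype.expect_eq_sum_div_card]

section
variable {X Y : Type} [Finite X] [Finite Y]

lemma E_const [Nonempty X] (c : ℝ) : (E fun _ : X => c) = c := by
  cases nonempty_fintype X
  rw [E_eq, Fintype.expect_const]

lemma E_add (f g : X → ℝ) : (E fun x => f x + g x) = E f + E g := by
  cases nonempty_fintype X
  simp only [E_eq, Finset.expect_add_distrib]

lemma E_sub (f g : X → ℝ) : (E fun x => f x - g x) = E f - E g := by
  cases nonempty_fintype X
  simp only [E_eq, Finset.expect_sub_distrib]

lemma E_mul_left (c : ℝ) (f : X → ℝ) : (E fun x => c * f x) = c * E f := by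
  cases nonempty_fintype X
  simp only [E_eq, Finset.mul_expect]

lemma E_sum {ι : Type*} (s : Finset ι) (f : ι → X → ℝ) :
    (E fun x => ∑ i ∈ s, f i x) = ∑ i ∈ s, E (f i) := by
  cases nonempty_fintype X
  simp only [E_eq]
  rw [Finset.expect_sum_comm]

lemma E_mono {f g : X → ℝ} (h : ∀ x, f x ≤ g x) : E f ≤ E g := by
  cases nonempty_fintype X
  simp only [E_eq]
  exact Finset.expect_le_expect fun i _ => h i

lemma E_congr {f g : X → ℝ} (h : ∀ x, f x = g x) : E f = E g := by
  rw [funext h]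

lemma E_nonneg {f : X → ℝ} (h : ∀ x, 0 ≤ f x) : 0 ≤ E f := by
  cases nonempty_fintype X
  simp only [E_eq]
  exact Finset.expect_nonneg fun i _ => h i

lemma E_le [Nonempty X] {f : X → ℝ} {c : ℝ} (h : ∀ x, f x ≤ c) : E f ≤ c := by
  rw [← E_const (X := X) c]; exact E_mono h

lemma E_le_one {f : X → ℝ} (h : ∀ x, f x ≤ 1) : E f ≤ 1 := by
  rcases isEmpty_or_nonempty X with hX | hX
  · cases nonempty_fintype X
    rw [E_eq_sum]; simp
  · exact E_le h

lemma le_E [Nonempty X] {f : X → ℝ} {c : ℝ} (h : ∀ x, c ≤ f x) : c ≤ E f := by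
  rw [← E_const (X := X) c]; exact E_mono h

lemma exists_le_E [Nonempty X] {f : X → ℝ} {c : ℝ} (h : c ≤ E f) : ∃ x, c ≤ f x := by
  cases nonempty_fintype X
  rw [E_eq] at h
  obtain ⟨x, _, hx⟩ := Finset.exists_le_of_le_expect Finset.univ_nonempty h
  exact ⟨x, hx⟩

lemma E_comm (f : X → Y → ℝ) : (E fun x => E fun y => f x y) = E fun y => E fun x => f x y := by
  cases nonempty_fintype X
  cases nonempty_fintype Y
  simp only [E_eq]
  rw [Finset.expect_comm]

lemma E_prod (f : X × Y → ℝ) : E f = E fun x => E fun y => f (x, y) := by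
  cases nonempty_fintype X
  cases nonempty_fintype Y
  simp only [E_eq]
  rw [← Finset.univ_product_univ, Finset.expect_product]

lemma E_equiv (e : X ≃ Y) (f : Y → ℝ) : E f = E fun x => f (e x) := by
  cases nonempty_fintype X
  cases nonempty_fintype Y
  simp only [E_eq]
  exact (Fintype.expect_equiv e _ _ fun _ => rfl).symm

/-- resampling -/
lemma E_resample [Nonempty Y] (glue : Y → X → X) (proj : X → Y)
    (h1 : ∀ y x, glue (proj x) (glue y x) = x) (h2 : ∀ y x, proj (glue y x) = y) (G : X → ℝ) :
    E G = E fun x => E fun y => G (glue y x) := by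
  have inv : Function.Involutive (fun q : X × Y => (glue q.2 q.1, proj q.1)) := by
    rintro ⟨x, y⟩
    simp [h1, h2]
  have := E_equiv inv.toPerm (fun q : X × Y => G q.1)
  rw [E_prod, E_prod] at this
  simp only [Function.Involutive.coe_toPerm] at this
  rw [← this]
  exact E_congr fun x => (E_const _).symm

lemma E_update {ι : Type} [Finite ι] [DecidableEq ι] [Nonempty Y] (i : ι) (G : (ι → Y) → ℝ) :
    E G = E fun x => E fun y => G (Function.update x i y) := by
  apply E_resample (fun y x => Function.update x i y) (fun x => x i) <;> simp

lemma E_sumArrow {ι κ : Type} [Finite ι] [Finite κ] (G : (ι ⊕ κ → Y) → ℝ) :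
    E G = E fun t : κ → Y => E fun h : ι → Y => G (Sum.elim h t) := by
  rw [E_equiv (Equiv.sumArrowEquivProdArrow ι κ Y).symm, E_prod, E_comm]
  rfl

end

lemma pigeon {Ω Y Λ : Type} [Finite Ω] [Nonempty Ω] [Finite Y] [Finite Λ] {δ : ℝ} (hδ : 0 < δ)
    (A : Ω → Y → Prop) (R : Λ → (Y → Prop) → Prop)
    (hR : ∀ S : Y → Prop, δ / 2 ≤ (E fun y => ind (S y)) → ∃ l, R l S)
    (h : δ ≤ E fun ω => E fun y => ind (A ω y)) :
    ∃ l, δ / (2 * (Nat.card Λ + 1)) ≤ E fun ω => ind (R l (A ω)) := by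
  cases nonempty_fintype Λ
  by_contra! hcon
  have key : ∀ ω, (E fun y => ind (A ω y)) ≤ δ / 2 + ∑ l, ind (R l (A ω)) := by
    intro ω
    have h0 : ∀ l, 0 ≤ ind (R l (A ω)) := fun l => ind_nonneg _
    by_cases hω : δ / 2 ≤ E fun y => ind (A ω y)
    · obtain ⟨l, hl⟩ := hR _ hω
      have h1 : (E fun y => ind (A ω y)) ≤ 1 := E_le_one fun y => ind_le_one _
      have h2 : ind (R l (A ω)) ≤ ∑ l, ind (R l (A ω)) :=
        Finset.single_le_sum (fun l _ => h0 l) (Finset.mem_univ l)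
      rw [ind_true hl] at h2
      linarith
    · have := Finset.sum_nonneg (s := Finset.univ) (fun l _ => h0 l)
      linarith
  have h3 := h.trans (E_mono key)
  rw [E_add, E_const, E_sum] at h3
  have h4 : ∑ l : Λ, (E fun ω => ind (R l (A ω))) ≤ ∑ l : Λ, δ / (2 * (Nat.card Λ + 1)) :=
    Finset.sum_le_sum fun l _ => (hcon l).le
  rw [Finset.sum_const, Finset.card_univ, nsmul_eq_mul, ← Nat.card_eq_fintype_card] at h4
  have h5 : (Nat.card Λ : ℝ) * (δ / (2 * (Nat.card Λ + 1))) < δ / 2 := by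
    have : (0:ℝ) ≤ Nat.card Λ := by positivity
    rw [← mul_div_assoc, div_lt_div_iff₀ (by positivity) (by positivity)]
    nlinarith
  linarith

/-- combinatorial subspaces -/
structure Sub (α σ ι : Type) where
  f : ι → α ⊕ σ
  surj : ∀ e, ∃ i, f i = Sum.inr e

namespace Sub
variable {α σ ι υ : Type}

def ap (W : Sub α σ ι) (w : σ → α) : ι → α := fun i => (W.f i).elim id w

def comp (V : Sub α σ ι) (W : Sub α υ σ) : Sub α υ ι where
  f i := (V.f i).elim Sum.inl W.f
  surj e := by
    obtain ⟨s, hs⟩ := W.surj e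
    obtain ⟨i, hi⟩ := V.surj s
    exact ⟨i, by simp [hi, hs]⟩

lemma comp_ap (V : Sub α σ ι) (W : Sub α υ σ) (w : υ → α) : (V.comp W).ap w = V.ap (W.ap w) := by
  funext i
  simp only [ap, comp]
  rcases V.f i with a | s <;> rfl

def idS (α σ : Type) : Sub α σ σ where
  f := Sum.inr
  surj e := ⟨e, rfl⟩

lemma idS_ap (w : σ → α) : (idS α σ).ap w = w := rfl

lemma ap_inj (W : Sub α σ ι) : Function.Injective W.ap := by
  intro w w' h
  funext e
  obtain ⟨i, hi⟩ := W.surj e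
  have := congrFun h i
  simpa [ap, hi] using this

instance [Finite α] [Finite σ] [Finite ι] : Finite (Sub α σ ι) :=
  Finite.of_injective (fun W : Sub α σ ι => W.f) (by rintro ⟨f, _⟩ ⟨g, _⟩ h; simpa using h)

end Sub

/-- density Hales-Jewett at a fixed density -/
def DHJd (α : Type) [Finite α] (δ : ℝ) : Prop :=
  ∃ (ι : Type) (_ : Finite ι), ∀ A : (ι → α) → Prop, δ ≤ (E fun x => ind (A x)) →
    ∃ l : Sub α Unit ι, ∀ a, A (l.ap fun _ => a)

def DHJ (α : Type) [Finite α] : Prop := ∀ δ : ℝ, 0 < δ → DHJd α δ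

def MDHJ (α σ : Type) [Finite α] : Prop := ∀ δ : ℝ, 0 < δ →
  ∃ (ι : Type) (_ : Finite ι), ∀ A : (ι → α) → Prop, δ ≤ (E fun x => ind (A x)) →
    ∃ l : Sub α σ ι, ∀ w, A (l.ap w)

lemma exists_of_ind_pos {X : Type} [Finite X] {A : X → Prop} {δ : ℝ} (hδ : 0 < δ)
    (h : δ ≤ E fun x => ind (A x)) : ∃ x, A x := by
  by_contra! hc
  have : (E fun x => ind (A x)) ≤ E fun x : X => 0 * (0:ℝ) := E_mono fun x => by
    rw [ind_false (hc x)]; simp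
  rw [E_mul_left] at this
  linarith

lemma mdhj {α : Type} [Finite α] [Nonempty α] (h : DHJ α) (σ : Type) [Finite σ] : MDHJ α σ := by
  refine Finite.induction_empty_option (P := fun σ => MDHJ α σ) ?_ ?_ ?_ σ
  · intro σ σ' e H δ hδ
    obtain ⟨ι, hι, hA⟩ := H δ hδ
    refine ⟨ι, hι, fun A hd => ?_⟩
    obtain ⟨l, hl⟩ := hA A hd
    refine ⟨⟨fun i => (l.f i).map id e, fun s => ?_⟩, fun w => ?_⟩
    · obtain ⟨i, hi⟩ := l.surj (e.symm s)
      exact ⟨i, by simp [hi]⟩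
    · convert hl (w ∘ e) using 1
      funext i
      simp only [Sub.ap]
      rcases l.f i with a | s <;> simp
  · intro δ hδ
    refine ⟨PEmpty, inferInstance, fun A hd => ?_⟩
    obtain ⟨x, hx⟩ := exists_of_ind_pos hδ hd
    refine ⟨⟨fun i => i.elim, fun e => e.elim⟩, fun w => ?_⟩
    convert hx using 1
    funext i; exact i.elim
  · intro σ _ H δ hδ
    obtain ⟨ι₁, hι₁, h₁⟩ := h (δ / 2) (by positivity)
    obtain ⟨ι₂, hι₂, h₂⟩ := H (δ / (2 * (Nat.card (Sub α Unit ι₁) + 1))) (by positivity)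
    refine ⟨ι₁ ⊕ ι₂, inferInstance, fun A hd => ?_⟩
    rw [E_sumArrow] at hd
    obtain ⟨l, hl⟩ := pigeon hδ (fun (t : ι₂ → α) (h : ι₁ → α) => A (Sum.elim h t))
      (fun (l : Sub α Unit ι₁) S => ∀ a, S (l.ap fun _ => a)) h₁ hd
    obtain ⟨U, hU⟩ := h₂ _ hl
    refine ⟨⟨Sum.elim (fun i => (l.f i).map id fun _ => none) (fun i => (U.f i).map id some), ?_⟩, ?_⟩
    · rintro (_ | s)
      · obtain ⟨i, hi⟩ := l.surj ()
        exact ⟨Sum.inl i, by simp [hi]⟩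
      · obtain ⟨i, hi⟩ := U.surj s
        exact ⟨Sum.inr i, by simp [hi]⟩
    · intro w
      convert hU (fun s => w (some s)) (w none) using 1
      funext i
      rcases i with i | i
      · simp only [Sub.ap, Sum.elim_inl]
        rcases l.f i with a | s <;> simp
      · simp only [Sub.ap, Sum.elim_inr]
        rcases U.f i with a | s <;> simp



lemma E_single {K : Type} [Finite K] (a : K) (F : K → ℝ) :
    (E fun b => ind (b = a) * F b) = F a / Nat.card K := by
  cases nonempty_fintype K
  classical
  rw [E_eq_sum, Nat.card_eq_fintype_card]
  congr 1
  rw [Finset.sum_eq_single a]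
  · simp [ind]
  · intro b _ hb; simp [ind, hb]
  · simp

lemma one_block (K : Type) [Finite K] [Nonempty K] {η : ℝ} (hη : 0 < η) :
    ∃ L : ℕ, 0 < L ∧ ∀ a : K, ∀ f : (Fin L → K) → ℝ, (∀ x, 0 ≤ f x) → (∀ x, f x ≤ 1) →
      E f - η ≤ E fun y => E fun l => f (Function.update y l a) := by
  set k : ℝ := (Nat.card K : ℝ) with hk
  have hk1 : 1 ≤ k := by
    have : 0 < Nat.card K := Nat.card_pos
    rw [hk]; exact_mod_cast this
  obtain ⟨L, hL⟩ := exists_nat_gt (k ^ 2 / η ^ 2)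
  have hL0 : (0:ℝ) < L := lt_of_le_of_lt (by positivity) hL
  have hLpos : 0 < L := by exact_mod_cast hL0
  refine ⟨L, hLpos, fun a f f0 f1 => ?_⟩
  have : Nonempty (Fin L) := ⟨⟨0, hLpos⟩⟩
  set g : K → ℝ := fun b => k * ind (b = a) - 1 with hg
  have hEg : E g = 0 := by
    have := E_single a (fun _ : K => (1:ℝ))
    simp only [mul_one] at this
    rw [hg, E_sub, E_mul_left, this, E_const, ← hk]
    field_simp
    simp
  have hgb : ∀ b, g b ^ 2 ≤ k ^ 2 := by
    intro b
    simp only [hg]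
    by_cases hb : b = a
    · rw [ind_true hb]; nlinarith
    · rw [ind_false hb]; nlinarith
  have h1 : ∀ l : Fin L, (E fun y => f (Function.update y l a)) =
      E fun z : Fin L → K => k * ind (z l = a) * f z := by
    intro l
    rw [E_update l (fun z : Fin L → K => k * ind (z l = a) * f z)]
    refine E_congr fun z => ?_
    simp only [Function.update_self, mul_assoc]
    rw [E_mul_left, E_single a (fun b => f (Function.update z l b)), ← hk]
    field_simp
  set h : (Fin L → K) → ℝ := fun z => E fun l => g (z l) with hh
  have h2 : (E fun y => E fun l => f (Function.update y l a)) = E f + E fun z => f z * h z := by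
    rw [E_comm, E_congr h1, E_comm, ← E_add]
    refine E_congr fun z => ?_
    rw [hh]
    simp only
    rw [← E_mul_left]
    conv_rhs => rw [← E_const (X := Fin L) (f z), ← E_add]
    refine E_congr fun l => ?_
    simp only [hg]; rw [E_const]; ring
  have h3 : (E fun z => h z ^ 2) ≤ k ^ 2 / L := by
    have e1 : ∀ z, h z ^ 2 = E fun l => E fun l' => g (z l) * g (z l') := by
      intro z
      rw [sq, hh]; simp only
      rw [← E_mul_left]
      refine E_congr fun l => ?_
      rw [mul_comm, ← E_mul_left]
    rw [E_congr e1, E_comm]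
    have e2 : ∀ l, (E fun z : Fin L → K => E fun l' => g (z l) * g (z l')) ≤ k ^ 2 / L := by
      intro l
      rw [E_comm]
      have e3 : ∀ l', (E fun z : Fin L → K => g (z l) * g (z l')) ≤ ind (l' = l) * k ^ 2 := by
        intro l'
        by_cases hll : l' = l
        · subst hll
          rw [ind_true rfl, one_mul]
          exact E_le fun z => by rw [← sq]; exact hgb _
        · rw [ind_false hll, zero_mul, E_update l']
          have : ∀ z : Fin L → K, (E fun y => g (Function.update z l' y l) *
              g (Function.update z l' y l')) = 0 := by
            intro z
            simp only [Function.update_self, Function.update_of_ne (Ne.symm hll)]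
            rw [E_mul_left]
            have : (E fun x => g x) = 0 := hEg
            rw [this, mul_zero]
          rw [E_congr this, E_const]
      refine (E_mono e3).trans ?_
      rw [E_single l (fun _ => k ^ 2)]
      simp
    exact E_le e2
  have h4 : (E fun z => -(η / 2 + h z ^ 2 / (2 * η))) ≤ E fun z => f z * h z := by
    refine E_mono fun z => ?_
    have p1 : |h z| ≤ η / 2 + h z ^ 2 / (2 * η) := by
      have : η / 2 + h z ^ 2 / (2 * η) - |h z| = (|h z| - η) ^ 2 / (2 * η) := by
        rw [← sq_abs (h z)]; field_simp; ring
      have h0 : 0 ≤ (|h z| - η) ^ 2 / (2 * η) := by positivity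
      linarith
    have p2 : |f z * h z| ≤ |h z| := by
      rw [abs_mul, abs_of_nonneg (f0 z)]
      exact mul_le_of_le_one_left (abs_nonneg _) (f1 z)
    have := neg_abs_le (f z * h z)
    linarith
  have h5 : (E fun z => -(η / 2 + h z ^ 2 / (2 * η))) = -(η / 2) - 1 / (2 * η) * E fun z => h z ^ 2 := by
    rw [← E_mul_left, ← E_const (X := Fin L → K) (-(η / 2)), ← E_sub]
    refine E_congr fun z => ?_
    ring
  have h6 : 1 / (2 * η) * (E fun z => h z ^ 2) ≤ η / 2 := by
    have : (E fun z => h z ^ 2) ≤ η ^ 2 := by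
      refine h3.trans ?_
      rw [div_le_iff₀ hL0]
      rw [div_lt_iff₀ (by positivity)] at hL
      linarith
    calc 1 / (2 * η) * (E fun z => h z ^ 2) ≤ 1 / (2 * η) * η ^ 2 := by gcongr
      _ = η / 2 := by field_simp
  rw [h2]
  linarith

lemma many_block {Y M : Type} [Finite Y] [Nonempty Y] [Finite M] [Nonempty M] {K : Type}
    (T : K → Y → M → Y) {η : ℝ}
    (hT : ∀ a : K, ∀ f : Y → ℝ, (∀ x, 0 ≤ f x) → (∀ x, f x ≤ 1) →
      E f - η ≤ E fun y => E fun l => f (T a y l)) (Q : Type) [Finite Q] :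
    ∀ f : (Q → Y) → ℝ, (∀ x, 0 ≤ f x) → (∀ x, f x ≤ 1) → ∀ u : Q → K,
      E f - Nat.card Q * η ≤ E fun x : Q → Y => E fun l : Q → M => f (fun q => T (u q) (x q) (l q)) := by
  refine Finite.induction_empty_option (P := fun Q => ∀ _ : Finite Q,
    ∀ f : (Q → Y) → ℝ, (∀ x, 0 ≤ f x) → (∀ x, f x ≤ 1) → ∀ u : Q → K,
      E f - Nat.card Q * η ≤ E fun x : Q → Y => E fun l : Q → M => f (fun q => T (u q) (x q) (l q)))
      ?_ ?_ ?_ Q inferInstance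
  · intro Q Q' e H _ f f0 f1 u
    have : Finite Q := Finite.of_equiv _ e.symm
    have := H inferInstance (fun x => f (x ∘ e.symm)) (fun x => f0 _) (fun x => f1 _) (u ∘ e)
    rw [E_equiv (e.arrowCongr (Equiv.refl Y)) f, ← Nat.card_congr e]
    refine this.trans (le_of_eq ?_)
    rw [E_equiv (e.arrowCongr (Equiv.refl Y)) (fun x : Q' → Y => E fun l : Q' → M => f (fun q => T (u q) (x q) (l q)))]
    refine E_congr fun x => ?_
    rw [E_equiv (e.arrowCongr (Equiv.refl M))]
    refine E_congr fun l => ?_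
    congr 1
    funext q
    simp
  · intro _ f f0 f1 u
    simp only [Nat.card_eq_fintype_card, Fintype.card_eq_zero, Nat.cast_zero, zero_mul, sub_zero]
    refine le_of_eq (E_congr fun x => ?_)
    rw [← E_const (X := PEmpty → M) (f x)]
    refine E_congr fun l => ?_
    congr 1
    funext q; exact q.elim
  · intro Q _ H _ f f0 f1 u
    set cons : Y → (Q → Y) → (Option Q → Y) := fun y x => (Equiv.piOptionEquivProd (β := fun _ => Y)).symm (y, x) with hcons
    have e1 : ∀ F : (Option Q → Y) → ℝ, E F = E fun y => E fun x => F (cons y x) := by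
      intro F
      rw [E_equiv (Equiv.piOptionEquivProd (β := fun _ => Y)).symm, E_prod]
    have e2 : ∀ F : (Option Q → M) → ℝ, E F = E fun y : M => E fun x : Q → M =>
        F ((Equiv.piOptionEquivProd (β := fun _ => M)).symm (y, x)) := by
      intro F
      rw [E_equiv (Equiv.piOptionEquivProd (β := fun _ => M)).symm, E_prod]
    have e3 : (E fun x : Option Q → Y => E fun l : Option Q → M => f (fun q => T (u q) (x q) (l q)))
        = E fun y : Y => E fun m : M => E fun x : Q → Y => E fun l : Q → M =>
          f (cons (T (u none) y m) (fun q => T (u (some q)) (x q) (l q))) := by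
      rw [e1]
      refine E_congr fun y => ?_
      conv_rhs => rw [E_comm]
      refine E_congr fun x => ?_
      rw [e2]
      refine E_congr fun m => ?_
      refine E_congr fun l => ?_
      congr 1
      funext q
      rcases q with _ | q <;> simp [hcons]
    rw [e3]
    have h1 : (E fun y : Y => E fun m : M => (E fun x : Q → Y => f (cons (T (u none) y m) x)) - Nat.card Q * η) ≤
      E fun y : Y => E fun m : M => E fun x : Q → Y => E fun l : Q → M =>
          f (cons (T (u none) y m) (fun q => T (u (some q)) (x q) (l q))) := by
      refine E_mono fun y => E_mono fun m => ?_
      exact H inferInstance (fun x => f (cons (T (u none) y m) x)) (fun _ => f0 _) (fun _ => f1 _) (fun q => u (some q))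
    refine le_trans ?_ h1
    have h2 := hT (u none) (fun y => E fun x : Q → Y => f (cons y x)) (fun y => E_nonneg fun x => f0 _)
      (fun y => E_le fun x => f1 _)
    rw [e1 f]
    simp only [E_sub, E_const]
    have : (Nat.card (Option Q) : ℝ) = Nat.card Q + 1 := by
      rw [Finite.card_option]; push_cast; ring
    rw [this]
    linarith

lemma tv (K : Type) [Finite K] [Nonempty K] (Q : Type) [Finite Q] {η : ℝ} (hη : 0 < η) :
    ∃ (ι : Type) (_ : Finite ι) (Ω : Type) (_ : Finite Ω) (_ : Nonempty Ω) (V : Ω → Sub K Q ι),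
      ∀ f : (ι → K) → ℝ, (∀ x, 0 ≤ f x) → (∀ x, f x ≤ 1) → ∀ u : Q → K,
        E f - η ≤ E fun ω => f ((V ω).ap u) := by
  obtain ⟨L, hL, h⟩ := one_block K (η := η / (Nat.card Q + 1)) (by positivity)
  have : Nonempty (Fin L) := ⟨⟨0, hL⟩⟩
  refine ⟨Q × Fin L, inferInstance, (Q → Fin L → K) × (Q → Fin L), inferInstance, inferInstance,
    fun ω => ⟨fun q => if q.2 = ω.2 q.1 then Sum.inr q.1 else Sum.inl (ω.1 q.1 q.2),
      fun q => ⟨(q, ω.2 q), by simp⟩⟩, fun f f0 f1 u => ?_⟩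
  have := many_block (fun a (y : Fin L → K) (l : Fin L) => Function.update y l a) h Q
    (fun x => f (fun q => x q.1 q.2)) (fun _ => f0 _) (fun _ => f1 _) u
  rw [E_prod, E_equiv (Equiv.curry Q (Fin L) K).symm f]
  have h1 : (Nat.card Q : ℝ) * (η / (Nat.card Q + 1)) ≤ η := by
    rw [← mul_div_assoc, div_le_iff₀ (by positivity)]
    nlinarith
  refine le_trans ?_ (le_trans this (le_of_eq ?_))
  · have : (E fun x => f ((Equiv.curry Q (Fin L) K).symm x)) = E fun x : Q → Fin L → K => f (fun q => x q.1 q.2) := rfl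
    rw [this]
    linarith
  · refine E_congr fun x => E_congr fun l => ?_
    congr 1
    funext q
    simp only [Sub.ap, Function.update_apply]
    split_ifs <;> simp



/-- replace the extra letter by `a` -/
def nrm {α τ : Type} (a : α) (v : τ → Option α) : τ → Option α := fun t => some ((v t).getD a)

lemma nrm_nrm {α τ : Type} (a : α) (v : τ → Option α) : nrm a (nrm a v) = nrm a v := by
  funext t; simp [nrm]

lemma nrm_ap {α σ τ : Type} (a : α) (W : Sub (Option α) σ τ) (w : σ → Option α) :
    nrm a (W.ap w) = nrm a (W.ap (nrm a w)) := by
  funext t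
  simp only [nrm, Sub.ap]
  rcases W.f t with b | s <;> simp [nrm]

lemma nrm_elim {α ρ τ : Type} (a : α) (h : ρ → Option α) (t : τ → Option α) :
    nrm a (Sum.elim h t) = Sum.elim (nrm a h) (nrm a t) := by
  funext i
  rcases i with i | i <;> simp [nrm]

def Insens {α τ : Type} (a : α) (S : (τ → Option α) → Prop) : Prop := ∀ v, S v ↔ S (nrm a v)

lemma Insens.ap {α σ τ : Type} {a : α} {S : (τ → Option α) → Prop} (h : Insens a S)
    (W : Sub (Option α) σ τ) : Insens a (fun w => S (W.ap w)) := by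
  intro w
  show S _ ↔ S _
  rw [h (W.ap w), h (W.ap (nrm a w)), ← nrm_ap]

lemma B0 {α : Type} [Finite α] (hD : DHJ α) (a : α) (σ : Type) [Finite σ] {η : ℝ} (hη : 0 < η) :
    ∃ (ρ : Type) (_ : Finite ρ), ∀ S : (ρ → Option α) → Prop, Insens a S →
      η ≤ (E fun x => ind (S x)) → ∃ W : Sub (Option α) σ ρ, ∀ w, S (W.ap w) := by
  have : Nonempty α := ⟨a⟩
  obtain ⟨ρ₀, _, h0⟩ := mdhj hD σ (η / 2) (by positivity)
  obtain ⟨ι, _, Ω, _, _, V, hV⟩ := tv (Option α) ρ₀ (η := η / 2) (by positivity)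
  refine ⟨ι, inferInstance, fun S hS hd => ?_⟩
  have h1 : η / 2 ≤ E fun ω => E fun z : ρ₀ → α => ind (S ((V ω).ap (fun i => some (z i)))) := by
    rw [E_comm]
    refine le_E fun z => ?_
    have := hV (fun x => ind (S x)) (fun _ => ind_nonneg _) (fun _ => ind_le_one _) (fun i => some (z i))
    linarith
  obtain ⟨ω, hω⟩ := exists_le_E h1
  obtain ⟨U, hU⟩ := h0 _ hω
  let U' : Sub (Option α) σ ρ₀ := ⟨fun i => (U.f i).map some id, fun e => by
    obtain ⟨i, hi⟩ := U.surj e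
    exact ⟨i, by simp [hi]⟩⟩
  refine ⟨(V ω).comp U', fun w => ?_⟩
  have h2 := (hS.ap ((V ω).comp U')) w
  simp only at h2
  rw [h2, Sub.comp_ap]
  convert hU (fun s => (w s).getD a) using 2
  funext i
  simp only [Sub.ap, U']
  rcases U.f i with b | s <;> simp [nrm]

lemma E_image {X Y : Type} [Finite X] [Finite Y] (j : X → Y) (hj : Function.Injective j) (G : Y → ℝ) :
    (E fun y => ind (∃ x, y = j x) * G y) = (Nat.card X / Nat.card Y : ℝ) * E fun x => G (j x) := by
  cases nonempty_fintype X
  cases nonempty_fintype Y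
  classical
  rcases isEmpty_or_nonempty X with hX | hX
  · rw [E_eq_sum, E_eq_sum]
    simp [ind]
  have hcX : (Fintype.card X : ℝ) ≠ 0 := by simp
  rw [E_eq_sum, E_eq_sum, Nat.card_eq_fintype_card, Nat.card_eq_fintype_card]
  have : ∑ y, ind (∃ x, y = j x) * G y = ∑ x, G (j x) := by
    rw [← Finset.sum_image (s := Finset.univ) (g := j) (f := G) (fun a _ b _ h => hj h)]
    have h1 : ∀ y, ind (∃ x, y = j x) * G y = if y ∈ Finset.univ.image j then G y else 0 := by
      intro y
      by_cases h : ∃ x, y = j x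
      · rw [ind_true h, one_mul, if_pos]
        obtain ⟨x, rfl⟩ := h; simp
      · rw [ind_false h, zero_mul, if_neg]
        intro h'
        simp only [Finset.mem_image, Finset.mem_univ, true_and] at h'
        obtain ⟨x, hx⟩ := h'
        exact h ⟨x, hx.symm⟩
    rw [Finset.sum_congr rfl fun y _ => h1 y, ← Finset.sum_filter]
    congr 1
    ext y; simp
  rw [this]
  field_simp

lemma B1core {α : Type} [Finite α] (hD : DHJ α) (a : α) (σ : Type) [Finite σ] {η : ℝ} (hη : 0 < η) :
    ∃ q : ℝ, 0 ≤ q ∧ q < 1 ∧ ∀ r : ℕ, ∃ (τ : Type) (_ : Finite τ),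
      ∀ (S : (τ → Option α) → Prop) (g : (τ → Option α) → ℝ), Insens a S → (∀ x, g x ≤ 1) →
      (∀ W : Sub (Option α) σ τ, (∀ w, S (W.ap w)) → (E fun w => g (W.ap w)) ≤ 0) →
      (E fun x => ind (S x) * g x) ≤ q ^ r * (E fun x => ind (S x)) + η * (1 - q ^ r) := by
  obtain ⟨ρ, _, hρ⟩ := B0 hD a σ hη
  set c : ℝ := 1 / Nat.card (ρ → Option α) with hc
  have hcard : (1:ℝ) ≤ Nat.card (ρ → Option α) := by
    have : 0 < Nat.card (ρ → Option α) := Nat.card_pos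
    exact_mod_cast this
  have hc0 : 0 < c := by positivity
  have hc1 : c ≤ 1 := by rw [hc]; exact div_le_one_of_le₀ hcard (by positivity)
  refine ⟨1 - c, by linarith, by linarith, fun r => ?_⟩
  set q := 1 - c with hq
  have hq0 : 0 ≤ q := by linarith
  induction r with
  | zero =>
    refine ⟨PEmpty, inferInstance, fun S g _ hg _ => ?_⟩
    simp only [pow_zero, one_mul, sub_self, mul_zero, add_zero]
    exact E_mono fun x => mul_le_of_le_one_right (ind_nonneg _) (hg x)
  | succ r ih =>
    obtain ⟨τ, _, hτ⟩ := ih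
    refine ⟨ρ ⊕ τ, inferInstance, fun S g hS hg hW => ?_⟩
    -- the removed set
    have hrem : ∀ T : (ρ → Option α) → Prop, ∃ R : (ρ → Option α) → Prop,
        (∀ h, R h → T h) ∧
        (∀ G : (ρ → Option α) → ℝ, (∀ W : Sub (Option α) σ ρ, (∀ w, T (W.ap w)) →
          (E fun w => G (W.ap w)) ≤ 0) → (E fun h => ind (R h) * G h) ≤ 0) ∧
        (Insens a T → (E fun h => ind (T h ∧ ¬ R h)) ≤ q * (E fun h => ind (T h)) + (1 - q) * η) := by
      intro T
      by_cases hT : ∃ W : Sub (Option α) σ ρ, ∀ w, T (W.ap w)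
      · obtain ⟨W, hWT⟩ := hT
        refine ⟨fun h => ∃ w, h = W.ap w, ?_, ?_, ?_⟩
        · rintro h ⟨w, rfl⟩; exact hWT w
        · intro G hG
          rw [E_image _ W.ap_inj]
          exact mul_nonpos_of_nonneg_of_nonpos (by positivity) (hG W hWT)
        · intro _
          have h1 : (E fun h => ind (T h ∧ ¬ ∃ w, h = W.ap w)) =
              (E fun h => ind (T h)) - E fun h => ind (∃ w, h = W.ap w) * 1 := by
            rw [← E_sub]
            refine E_congr fun h => ?_
            by_cases hh : ∃ w, h = W.ap w
            · have : T h := by obtain ⟨w, rfl⟩ := hh; exact hWT w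
              rw [ind_true hh, ind_true this, ind_false (by tauto)]; ring
            · rw [ind_false hh, ind_congr (Q := T h) (by tauto)]; ring
          rw [h1, E_image _ W.ap_inj, E_const]
          have h2 : c ≤ (Nat.card (σ → Option α) / Nat.card (ρ → Option α) : ℝ) := by
            rw [hc]
            have : 0 < Nat.card (σ → Option α) := Nat.card_pos
            have : (1:ℝ) ≤ Nat.card (σ → Option α) := by exact_mod_cast this
            gcongr
          have h3 : (E fun h => ind (T h)) ≤ 1 := E_le_one fun _ => ind_le_one _
          rw [hq]
          nlinarith
      · refine ⟨fun _ => False, fun h hh => hh.elim, ?_, ?_⟩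
        · intro G _
          rw [E_congr (g := fun _ => (0:ℝ)) (fun h => by rw [ind_false (by simp), zero_mul]), E_const]
        · intro hins
          have h1 : (E fun h => ind (T h)) < η := by
            by_contra! hcon
            exact hT (hρ T hins hcon)
          simp only [not_false_eq_true, and_true]
          rw [hq]
          nlinarith
    choose R hR1 hR2 hR3 using hrem
    let T : (τ → Option α) → (ρ → Option α) → Prop := fun t h => S (Sum.elim h t)
    have hTt : ∀ t, T (nrm a t) = T t := by
      intro t
      funext h
      apply propext
      show S _ ↔ S _
      rw [hS (Sum.elim h t), hS (Sum.elim h (nrm a t)), nrm_elim, nrm_elim, nrm_nrm]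
    have hTi : ∀ t, Insens a (T t) := by
      intro t h
      show S _ ↔ S _
      rw [hS (Sum.elim h t), hS (Sum.elim (nrm a h) t), nrm_elim, nrm_elim, nrm_nrm]
    let S2 : (ρ → Option α) → (τ → Option α) → Prop := fun h t => T t h ∧ ¬ R (T t) h
    have hS2 : ∀ h, Insens a (S2 h) := by
      intro h t
      show (_ ∧ _) ↔ (_ ∧ _)
      rw [hTt]
    have key1 : (E fun x => ind (S x) * g x) =
        (E fun h => E fun t => ind (S2 h t) * g (Sum.elim h t)) +
        E fun t => E fun h => ind (R (T t) h) * g (Sum.elim h t) := by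
      rw [E_comm, E_sumArrow, ← E_add]
      refine E_congr fun t => ?_
      rw [← E_add]
      refine E_congr fun h => ?_
      rw [← add_mul]
      congr 1
      by_cases hh : R (T t) h
      · have h' : S (Sum.elim h t) := hR1 _ _ hh
        have : ¬ S2 h t := fun h2 => h2.2 hh
        rw [ind_true hh, ind_true h', ind_false this]; ring
      · rw [ind_false hh, add_zero]
        exact ind_congr ⟨fun h1 => ⟨h1, hh⟩, fun h1 => h1.1⟩
    have key2 : (E fun t => E fun h => ind (R (T t) h) * g (Sum.elim h t)) ≤ 0 := by
      refine E_le fun t => ?_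
      refine hR2 (T t) (fun h => g (Sum.elim h t)) fun W hWT => ?_
      let W' : Sub (Option α) σ (ρ ⊕ τ) := ⟨Sum.elim W.f (fun i => Sum.inl (t i)), fun e => by
        obtain ⟨i, hi⟩ := W.surj e
        exact ⟨Sum.inl i, by simp [hi]⟩⟩
      have hap : ∀ w, W'.ap w = Sum.elim (W.ap w) t := by
        intro w; funext i; rcases i with i | i <;> simp [W', Sub.ap]
      have := hW W' (fun w => by rw [hap]; exact hWT w)
      simpa only [hap] using this
    have key3 : (E fun h => E fun t => ind (S2 h t) * g (Sum.elim h t)) ≤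
        E fun h => q ^ r * (E fun t => ind (S2 h t)) + η * (1 - q ^ r) := by
      refine E_mono fun h => ?_
      refine hτ (S2 h) (fun t => g (Sum.elim h t)) (hS2 h) (fun _ => hg _) fun W hWT => ?_
      let W' : Sub (Option α) σ (ρ ⊕ τ) := ⟨Sum.elim (fun i => Sum.inl (h i)) W.f, fun e => by
        obtain ⟨i, hi⟩ := W.surj e
        exact ⟨Sum.inr i, by simp [hi]⟩⟩
      have hap : ∀ w, W'.ap w = Sum.elim h (W.ap w) := by
        intro w; funext i; rcases i with i | i <;> simp [W', Sub.ap]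
      have := hW W' (fun w => by rw [hap]; exact (hWT w).1)
      simpa only [hap] using this
    have key4 : (E fun h => E fun t => ind (S2 h t)) ≤ q * (E fun x => ind (S x)) + (1 - q) * η := by
      rw [E_comm, E_sumArrow]
      have : ∀ t, (E fun h => ind (S2 h t)) ≤ q * (E fun h => ind (T t h)) + (1 - q) * η :=
        fun t => hR3 (T t) (hTi t)
      refine (E_mono this).trans (le_of_eq ?_)
      rw [E_add, E_mul_left, E_const]
    rw [E_add, E_mul_left, E_const] at key3
    have h5 := mul_le_mul_of_nonneg_left key4 (pow_nonneg hq0 r)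
    rw [key1, pow_succ]
    nlinarith

lemma B1 {α : Type} [Finite α] (hD : DHJ α) (a : α) (σ : Type) [Finite σ] {β : ℝ} (hβ : 0 < β) :
    ∃ (τ : Type) (_ : Finite τ), ∀ (S : (τ → Option α) → Prop) (g : (τ → Option α) → ℝ),
      Insens a S → (∀ x, g x ≤ 1) → β ≤ (E fun x => ind (S x) * g x) →
      ∃ W : Sub (Option α) σ τ, β / 2 ≤ E fun w => g (W.ap w) := by
  obtain ⟨q, hq0, hq1, h⟩ := B1core hD a σ (η := β / 8) (by positivity)
  obtain ⟨r, hr⟩ := exists_pow_lt_of_lt_one (show (0:ℝ) < β / 8 by positivity) hq1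
  obtain ⟨τ, _, hτ⟩ := h r
  refine ⟨τ, inferInstance, fun S g hS hg hE => ?_⟩
  by_contra! hcon
  have h1 := hτ S (fun x => g x - β / 2) hS (fun x => by linarith [hg x]) (fun W _ => by
    rw [E_sub, E_const]; linarith [hcon W])
  have h2 : (E fun x => ind (S x) * (g x - β / 2)) =
      (E fun x => ind (S x) * g x) - β / 2 * E fun x => ind (S x) := by
    rw [← E_mul_left, ← E_sub]
    exact E_congr fun x => by ring
  have h3 : (E fun x => ind (S x)) ≤ 1 := E_le_one fun _ => ind_le_one _
  have h4 : 0 ≤ E fun x => ind (S x) := E_nonneg fun _ => ind_nonneg _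
  have h5 : 0 ≤ q ^ r := pow_nonneg hq0 r
  rw [h2] at h1
  nlinarith

lemma B2 {α : Type} [Finite α] (hD : DHJ α) (σ : Type) [Finite σ] (s : Finset α) :
    ∀ {β : ℝ}, 0 < β →
    ∃ (τ : Type) (_ : Finite τ), ∀ (S : α → (τ → Option α) → Prop) (g : (τ → Option α) → ℝ),
      (∀ a ∈ s, Insens a (S a)) → (∀ x, g x ≤ 1) →
      β ≤ (E fun x => ind (∀ a ∈ s, S a x) * g x) →
      ∃ W : Sub (Option α) σ τ, 0 < E fun w => g (W.ap w) := by
  classical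
  induction s using Finset.induction_on with
  | empty =>
    intro β hβ
    refine ⟨σ, inferInstance, fun S g _ _ h => ⟨Sub.idS _ _, ?_⟩⟩
    simp only [Sub.idS_ap]
    have : (E fun x => ind (∀ a ∈ (∅ : Finset α), S a x) * g x) = E fun x => g x :=
      E_congr fun x => by rw [ind_true (by simp), one_mul]
    rw [this] at h
    linarith
  | insert a s has ih =>
    intro β hβ
    obtain ⟨τ₁, _, h1⟩ := ih (β := β / 2) (by positivity)
    obtain ⟨τ, _, h2⟩ := B1 hD a τ₁ hβ
    refine ⟨τ, inferInstance, fun S g hS hg hE => ?_⟩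
    have e1 : (E fun x => ind (∀ b ∈ insert a s, S b x) * g x) =
        E fun x => ind (S a x) * (ind (∀ b ∈ s, S b x) * g x) := by
      refine E_congr fun x => ?_
      rw [← mul_assoc]
      congr 1
      by_cases ha : S a x
      · rw [ind_true ha, one_mul]
        exact ind_congr (by simp [ha])
      · rw [ind_false ha, zero_mul, ind_false (by simp [ha])]
    rw [e1] at hE
    obtain ⟨W, hW⟩ := h2 (S a) (fun x => ind (∀ b ∈ s, S b x) * g x) (hS a (by simp)) (fun x => by
      by_cases hx : ∀ b ∈ s, S b x
      · rw [ind_true hx, one_mul]; exact hg x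
      · rw [ind_false hx, zero_mul]; norm_num) hE
    obtain ⟨W', hW'⟩ := h1 (fun b w => S b (W.ap w)) (fun w => g (W.ap w))
      (fun b hb => (hS b (by simp [hb])).ap W) (fun _ => hg _) hW
    refine ⟨W.comp W', ?_⟩
    simpa only [Sub.comp_ap] using hW'



lemma step_core {α σ τ : Type} [Finite α] [Finite σ] [Finite τ] {β μ δ' : ℝ}
    (hβ : 0 < β) (hμ : (Nat.card (Finset α) : ℝ) * β < μ) (hδ' : 0 ≤ δ')
    (hB : ∀ (S : α → (τ → Option α) → Prop) (g : (τ → Option α) → ℝ),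
      (∀ a, Insens a (S a)) → (∀ x, g x ≤ 1) →
      β ≤ (E fun x => ind (∀ a, S a x) * g x) →
      ∃ W : Sub (Option α) σ τ, 0 < E fun w => g (W.ap w))
    (A0 : (τ → Option α) → Prop) (D : α → (τ → Option α) → Prop)
    (hD : ∀ a, Insens a (D a)) (hdisj : ∀ v, A0 v → ¬ ∀ a, D a v)
    (hE : δ' + μ ≤ E fun v => ind (A0 v) + δ' * ind (∀ a, D a v)) :
    ∃ W : Sub (Option α) σ τ, δ' ≤ E fun w => ind (A0 (W.ap w)) := by
  classical
  cases nonempty_fintype α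
  have key : ∀ v, ind (A0 v) + δ' * ind (∀ a, D a v) ≤
      δ' + ∑ s : Finset α, ind (s ≠ Finset.univ) * (ind (∀ a, (D a v ↔ a ∈ s)) * (ind (A0 v) - δ')) := by
    intro v
    set s0 : Finset α := Finset.univ.filter (fun a => D a v) with hs0
    rw [Finset.sum_eq_single s0]
    · rw [ind_true (P := ∀ a, (D a v ↔ a ∈ s0)) (by simp [hs0])]
      by_cases h : ∀ a, D a v
      · have : ¬ (s0 ≠ Finset.univ) := by simp [hs0, h]
        rw [ind_false this, ind_true h, ind_false (fun hA => hdisj v hA h)]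
        linarith
      · have : s0 ≠ Finset.univ := by
          intro h'
          exact h fun a => by
            have : a ∈ s0 := h' ▸ Finset.mem_univ a
            simpa [hs0] using this
        rw [ind_true this, ind_false h]
        linarith
    · intro s _ hs
      rw [ind_false (P := ∀ a, (D a v ↔ a ∈ s))]
      · simp
      · intro h
        apply hs
        ext a
        simp [hs0, h a]
    · simp
  have h1 := hE.trans (E_mono key)
  rw [E_add, E_const, E_sum] at h1
  have h2 : ∃ s : Finset α, s ≠ Finset.univ ∧
      β ≤ E fun v => ind (∀ a, (D a v ↔ a ∈ s)) * (ind (A0 v) - δ') := by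
    by_contra! hc
    have : ∑ s : Finset α, (E fun v => ind (s ≠ Finset.univ) * (ind (∀ a, (D a v ↔ a ∈ s)) * (ind (A0 v) - δ')))
        ≤ ∑ s : Finset α, β := by
      refine Finset.sum_le_sum fun s _ => ?_
      rw [E_mul_left]
      by_cases hs : s ≠ Finset.univ
      · rw [ind_true hs, one_mul]; exact (hc s hs).le
      · rw [ind_false hs, zero_mul]; exact hβ.le
    rw [Finset.sum_const, Finset.card_univ, nsmul_eq_mul, ← Nat.card_eq_fintype_card] at this
    linarith
  obtain ⟨s, _, hs⟩ := h2
  obtain ⟨W, hW⟩ := hB (fun a v => (D a v ↔ a ∈ s)) (fun v => ind (A0 v) - δ')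
    (fun a v => by simp only; rw [hD a v]) (fun v => by linarith [ind_le_one (A0 v)]) hs
  refine ⟨W, ?_⟩
  rw [E_sub, E_const] at hW
  linarith

lemma step {α : Type} [Finite α] [Nonempty α] (h : DHJ α) {δ0 : ℝ} (hδ0 : 0 < δ0) :
    ∃ γ : ℝ, 0 < γ ∧ ∀ δ, δ0 ≤ δ → DHJd (Option α) (δ + γ) → DHJd (Option α) δ := by
  classical
  obtain ⟨m0, _, hm0⟩ := h (δ0 / 2 / 2) (by positivity)
  set θ : ℝ := δ0 / 2 / (2 * (Nat.card (Sub α Unit m0) + 1)) with hθ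
  have hθ0 : 0 < θ := by positivity
  refine ⟨δ0 * θ / 4, by positivity, fun δ hδ ⟨σ, _, hσ⟩ => ?_⟩
  set γ := δ0 * θ / 4 with hγ
  have hγ0 : 0 < γ := by positivity
  have hcard : (0:ℝ) < Nat.card (Finset α) := by
    have : 0 < Nat.card (Finset α) := Nat.card_pos
    exact_mod_cast this
  set β : ℝ := δ0 * θ / (4 * Nat.card (Finset α)) with hβ
  have hβ0 : 0 < β := by positivity
  cases nonempty_fintype α
  obtain ⟨τ, _, hτ⟩ := B2 h σ Finset.univ hβ0
  set η : ℝ := min (δ0 / 2) (δ0 * θ / 4) with hη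
  have hη0 : 0 < η := by positivity
  obtain ⟨ι, _, Ω, _, _, V, hV⟩ := tv (Option α) ((m0 × τ) ⊕ m0) hη0
  refine ⟨ι, inferInstance, fun A hA => ?_⟩
  by_contra hno
  push Not at hno
  let pt : (m0 × τ → Option α) → (m0 → Option α) → (m0 × τ) ⊕ m0 → Option α :=
    fun w z => Sum.elim (fun q => (w q).elim (z q.1) some) z
  have hu : ∀ u, δ - η ≤ E fun ω => ind (A ((V ω).ap u)) := fun u => by
    have := hV (fun x => ind (A x)) (fun _ => ind_nonneg _) (fun _ => ind_le_one _) u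
    linarith
  have hη1 : η ≤ δ0 / 2 := min_le_left _ _
  have hη2 : η ≤ δ0 * θ / 4 := min_le_right _ _
  obtain ⟨ℓ, hℓ⟩ := pigeon (δ := δ0 / 2) (by positivity)
    (fun (ωw : Ω × (m0 × τ → Option α)) (z : m0 → α) => A ((V ωw.1).ap (pt ωw.2 (fun j => some (z j)))))
    (fun (l : Sub α Unit m0) S => ∀ a, S (l.ap fun _ => a)) hm0 (by
      rw [E_comm]
      refine le_E fun z => ?_
      rw [E_prod, E_comm]
      refine le_E fun w => ?_
      have := hu (pt w fun j => some (z j))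
      simp only
      linarith)
  rw [← hθ] at hℓ
  let l' : Option α → m0 → Option α := fun c j => (ℓ.f j).elim some (fun _ => c)
  have hl' : ∀ a, (fun j => some (ℓ.ap (fun _ => a) j)) = l' (some a) := by
    intro a; funext j
    simp only [Sub.ap, l']
    rcases ℓ.f j with b | s <;> rfl
  simp only [hl'] at hℓ
  obtain ⟨j0, hj0⟩ := ℓ.surj ()
  have hbig : (δ + γ) + δ0 * θ / 2 ≤ E fun ωw : Ω × (m0 × τ → Option α) =>
      ind (A ((V ωw.1).ap (pt ωw.2 (l' none)))) +
        (δ + γ) * ind (∀ a, A ((V ωw.1).ap (pt ωw.2 (l' (some a))))) := by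
    rw [E_add, E_mul_left]
    have h1 : δ - η ≤ E fun ωw : Ω × (m0 × τ → Option α) => ind (A ((V ωw.1).ap (pt ωw.2 (l' none)))) := by
      rw [E_prod, E_comm]
      exact le_E fun w => hu (pt w (l' none))
    have h2 : δ0 * θ ≤ (δ + γ) * E fun ωw : Ω × (m0 × τ → Option α) => ind (∀ a, A ((V ωw.1).ap (pt ωw.2 (l' (some a))))) :=
      mul_le_mul (by linarith) hℓ hθ0.le (by linarith)
    linarith
  let glue : (τ → Option α) → (m0 × τ → Option α) → (m0 × τ → Option α) :=
    fun v r q => if q.1 = j0 then v q.2 else r q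
  rw [E_prod] at hbig
  obtain ⟨ω, hω⟩ := exists_le_E hbig
  rw [E_resample glue (fun w t => w (j0, t)) (by
    intro y x; funext q
    rcases q with ⟨j, t⟩
    simp only [glue]
    split_ifs with hj
    · subst hj; rfl
    · rfl) (by intro y x; funext t; simp [glue])] at hω
  obtain ⟨r, hr⟩ := exists_le_E hω
  simp only at hr
  obtain ⟨W, hW⟩ := step_core (σ := σ) (β := β) (μ := δ0 * θ / 2) (δ' := δ + γ) hβ0 (by
      have : (Nat.card (Finset α) : ℝ) * β = δ0 * θ / 4 := by rw [hβ]; field_simp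
      rw [this]
      have : 0 < δ0 * θ := by positivity
      linarith) (by linarith) (fun S g hS hg hE => hτ S g (fun a _ => hS a) hg (by
        simpa using hE))
    (fun v => A ((V ω).ap (pt (glue v r) (l' none))))
    (fun a v => A ((V ω).ap (pt (glue v r) (l' (some a))))) (by
      intro a v
      have : pt (glue v r) (l' (some a)) = pt (glue (nrm a v) r) (l' (some a)) := by
        funext q
        rcases q with ⟨j, t⟩ | j
        · simp only [pt, glue, Sum.elim_inl]
          split_ifs with hj
          · subst hj
            simp only [nrm, l', hj0, Sum.elim_inr]
            rcases v t with _ | b <;> simp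
          · rfl
        · rfl
      simp only [this]) (by
      intro v hv hall
      let L : Sub (Option α) Unit ((m0 × τ) ⊕ m0) :=
        ⟨Sum.elim (fun q => (glue v r q).elim ((ℓ.f q.1).map some id) (fun b => Sum.inl (some b)))
          (fun j => (ℓ.f j).map some id), fun e => ⟨Sum.inr j0, by simp [hj0]⟩⟩
      have hL : ∀ c, L.ap (fun _ => c) = pt (glue v r) (l' c) := by
        intro c; funext q
        rcases q with q | j
        · simp only [Sub.ap, L, pt, l', Sum.elim_inl]
          rcases glue v r q with _ | b
          · simp only [Option.elim]
            rcases ℓ.f q.1 with b | s <;> simp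
          · simp
        · simp only [Sub.ap, L, pt, l', Sum.elim_inr]
          rcases ℓ.f j with b | s <;> simp
      obtain ⟨a, ha⟩ := hno ((V ω).comp L)
      rw [Sub.comp_ap, hL] at ha
      rcases a with _ | a
      · exact ha hv
      · exact ha (hall a)) hr
  obtain ⟨l, hl⟩ := hσ _ hW
  let M : Sub (Option α) τ ((m0 × τ) ⊕ m0) :=
    ⟨Sum.elim (fun q => if q.1 = j0 then Sum.inr q.2 else Sum.inl ((r q).elim (l' none q.1) some))
      (fun j => Sum.inl (l' none j)), fun t => ⟨Sum.inl (j0, t), by simp⟩⟩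
  have hM : ∀ v, M.ap v = pt (glue v r) (l' none) := by
    intro v; funext q
    rcases q with ⟨j, t⟩ | j
    · simp only [Sub.ap, M, pt, Sum.elim_inl, glue]
      split_ifs with hj
      · subst hj
        simp only [l', hj0, Sum.elim_inr]
        rcases v t with _ | b <;> simp
      · simp
    · simp [Sub.ap, M, pt]
  obtain ⟨a, ha⟩ := hno ((V ω).comp (M.comp (W.comp l)))
  rw [Sub.comp_ap, Sub.comp_ap, Sub.comp_ap, hM] at ha
  exact ha (hl a)

lemma DHJd_big {α : Type} [Finite α] {δ : ℝ} (h : 1 < δ) : DHJd α δ :=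
  ⟨Unit, inferInstance, fun A hA => by
    have : (E fun x => ind (A x)) ≤ 1 := E_le_one fun _ => ind_le_one _
    linarith⟩

lemma DHJ_succ {α : Type} [Finite α] [Nonempty α] (h : DHJ α) : DHJ (Option α) := by
  intro δ0 hδ0
  obtain ⟨γ, hγ, hs⟩ := step h hδ0
  have key : ∀ m : ℕ, ∀ δ, δ0 ≤ δ → 1 < δ + m * γ → DHJd (Option α) δ := by
    intro m
    induction m with
    | zero => intro δ _ h1; exact DHJd_big (by simpa using h1)
    | succ m ih =>
      intro δ hδ h1
      refine hs δ hδ (ih _ (by linarith) ?_)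
      push_cast at h1
      linarith
  obtain ⟨m, hm⟩ := exists_nat_gt (1 / γ)
  refine key m δ0 le_rfl ?_
  rw [div_lt_iff₀ hγ] at hm
  linarith

lemma DHJ_all (α : Type) [Finite α] : DHJ α := by
  refine Finite.induction_empty_option (P := fun α => ∀ [Finite α], DHJ α) ?_ ?_ ?_ α
  · intro α β e H _ δ hδ
    have := Finite.of_equiv β e.symm
    obtain ⟨ι, hι, h⟩ := H δ hδ
    refine ⟨ι, hι, fun A hA => ?_⟩
    rw [E_equiv (Equiv.arrowCongr (Equiv.refl ι) e)] at hA
    obtain ⟨l, hl⟩ := h _ hA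
    refine ⟨⟨fun i => (l.f i).map e id, fun u => ?_⟩, fun b => ?_⟩
    · obtain ⟨i, hi⟩ := l.surj u
      exact ⟨i, by simp [hi]⟩
    · convert hl (e.symm b) using 1
      funext i
      simp only [Sub.ap, Equiv.arrowCongr_apply, Function.comp]
      simp only [Equiv.refl_symm, Equiv.refl_apply]
      rcases l.f i with a | s <;> simp
  · intro _ δ hδ
    exact ⟨Unit, inferInstance, fun A hA => ⟨⟨fun _ => Sum.inr (), fun _ => ⟨(), rfl⟩⟩, fun a => a.elim⟩⟩
  · intro α _ H _
    rcases isEmpty_or_nonempty α with hα | hα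
    · intro δ hδ
      refine ⟨Unit, inferInstance, fun A hA => ?_⟩
      obtain ⟨x, hx⟩ := exists_of_ind_pos hδ hA
      refine ⟨⟨fun _ => Sum.inr (), fun _ => ⟨(), rfl⟩⟩, fun a => ?_⟩
      convert hx using 1
      exact Subsingleton.elim _ _
    · exact DHJ_succ H


lemma varn (p : ℕ) [Fact p.Prime] {ε : ℝ} (hε : 0 < ε) :
    ∃ θ : ℝ, 0 < θ ∧ ∀ (G : Type) [AddCommGroup G] [Finite G] [Module (ZMod p) G] (B : G → Prop),
      ε ≤ (E fun x => ind (B x)) → θ ≤ E fun z => E fun y => ind (∀ a : ZMod p, B (z + a • y)) := by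
  classical
  obtain ⟨ι, _, hι⟩ := DHJ_all (ZMod p) (ε / 2) (by positivity)
  cases nonempty_fintype ι
  refine ⟨ε / (2 * (Nat.card (Sub (ZMod p) Unit ι) + 1)), by positivity, fun G _ _ _ B hB => ?_⟩
  obtain ⟨ℓ, hℓ⟩ := pigeon hε
    (fun (xY : G × (ι → G)) (w : ι → ZMod p) => B (xY.1 + ∑ i, w i • xY.2 i))
    (fun (l : Sub (ZMod p) Unit ι) S => ∀ a, S (l.ap fun _ => a)) hι (by
      rw [E_comm]
      refine le_E fun w => ?_
      rw [E_prod, E_comm]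
      refine le_E fun Y => ?_
      rw [E_equiv (Equiv.addRight (∑ i, w i • Y i))] at hB
      exact hB)
  refine hℓ.trans (le_of_eq ?_)
  obtain ⟨i0, hi0⟩ := ℓ.surj ()
  let F : G → G → ℝ := fun z y => ind (∀ a : ZMod p, B (z + a • y))
  let c : (ι → G) → G := fun Y => ∑ i, (ℓ.f i).elim id (fun _ => 0) • Y i
  let d : (ι → G) → G := fun Y => ∑ i, (ℓ.f i).elim (fun _ => 0) (fun _ => Y i)
  have hcd : ∀ (Y : ι → G) (a : ZMod p), ∑ i, (ℓ.ap fun _ => a) i • Y i = c Y + a • d Y := by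
    intro Y a
    simp only [c, d]
    rw [Finset.smul_sum, ← Finset.sum_add_distrib]
    refine Finset.sum_congr rfl fun i _ => ?_
    simp only [Sub.ap]
    rcases ℓ.f i with b | s <;> simp
  simp only [hcd]
  calc (E fun xY : G × (ι → G) => ind (∀ a : ZMod p, B (xY.1 + (c xY.2 + a • d xY.2))))
      = E fun Y => E fun x => F (x + c Y) (d Y) := by
        rw [E_prod, E_comm]
        simp only [F, add_assoc]
    _ = E fun Y => E fun x => F x (d Y) := by
        refine E_congr fun Y => ?_
        exact (E_equiv (Equiv.addRight (c Y)) (fun x => F x (d Y))).symm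
    _ = E fun x => E fun Y => F x (d Y) := E_comm _
    _ = E fun x => E fun y => F x y := by
        refine E_congr fun x => ?_
        rw [E_update i0]
        have : ∀ Y : ι → G, (E fun y => F x (d (Function.update Y i0 y))) = E fun y => F x y := by
          intro Y
          have h1 : ∀ y, d (Function.update Y i0 y) = y + d (Function.update Y i0 0) := by
            intro y
            simp only [d]
            rw [← Finset.add_sum_erase _ _ (Finset.mem_univ i0), ← Finset.add_sum_erase (a := i0) _ (fun i => (ℓ.f i).elim (fun _ => 0) fun _ => Function.update Y i0 0 i) (Finset.mem_univ i0)]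
            simp only [hi0, Sum.elim_inr, Function.update_self, zero_add]
            congr 1
            refine Finset.sum_congr rfl fun i hi => ?_
            rw [Function.update_of_ne (Finset.ne_of_mem_erase hi), Function.update_of_ne (Finset.ne_of_mem_erase hi)]
          generalize d (Function.update Y i0 0) = e at h1
          simp only [h1]
          exact (E_equiv (Equiv.addRight e) (fun y => F x y)).symm
        simp only [this]
        exact E_const _

/-- probability that a random punctured line through `z` lies in `B` -/
noncomputable def phi (p : ℕ) {G : Type} [AddCommGroup G] [Finite G] [Module (ZMod p) G]
    (B : G → Prop) (z : G) : ℝ :=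
  E fun y : {y : G // y ≠ 0} => ind (∀ a : ZMod p, a ≠ 0 → B (z + a • y.1))

lemma phi_nonneg (p : ℕ) {G : Type} [AddCommGroup G] [Finite G] [Module (ZMod p) G]
    (B : G → Prop) (z : G) : 0 ≤ phi p B z := E_nonneg fun _ => ind_nonneg _

lemma phi_le_one (p : ℕ) {G : Type} [AddCommGroup G] [Finite G] [Module (ZMod p) G]
    (B : G → Prop) (z : G) : phi p B z ≤ 1 := E_le_one fun _ => ind_le_one _

lemma phi_eq_zero (p : ℕ) [Fact p.Prime] {G : Type} [AddCommGroup G] [Finite G] [Module (ZMod p) G]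
    (B : G → Prop) (z : G) [DecidablePred B]
    (h : ∀ y : G, y ≠ 0 → (Finset.univ.filter fun a : ZMod p => B (z + a • y)).card ≤ p - 2) :
    phi p B z = 0 := by
  have hp : 2 ≤ p := (Fact.out : p.Prime).two_le
  unfold phi
  have : ∀ y : {y : G // y ≠ 0}, ind (∀ a : ZMod p, a ≠ 0 → B (z + a • y.1)) = 0 * 0 := by
    rintro ⟨y, hy⟩
    rw [ind_false, mul_zero]
    intro hall
    have h1 := h y hy
    have h2 : (Finset.univ.erase (0 : ZMod p)).card ≤ (Finset.univ.filter fun a : ZMod p => B (z + a • y)).card := by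
      apply Finset.card_le_card
      intro a ha
      simp only [Finset.mem_filter, Finset.mem_univ, true_and]
      exact hall a (Finset.ne_of_mem_erase ha)
    rw [Finset.card_erase_of_mem (Finset.mem_univ _), Finset.card_univ, ZMod.card] at h2
    omega
  rw [E_congr this, E_mul_left, zero_mul]

lemma E_ne_zero {G : Type} [AddCommGroup G] [Finite G] (f : G → ℝ) (h0 : ∀ y, 0 ≤ f y) (h1 : ∀ y, f y ≤ 1) :
    E f ≤ (E fun y : {y : G // y ≠ 0} => f y.1) + 1 / Nat.card G := by
  classical
  cases nonempty_fintype G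
  rw [E_eq_sum, E_eq_sum, Nat.card_eq_fintype_card]
  have hN : (0:ℝ) < Fintype.card G := by
    have : 0 < Fintype.card G := Fintype.card_pos
    exact_mod_cast this
  have e1 : ∑ y, f y = f 0 + ∑ y : {y : G // y ≠ 0}, f y.1 := by
    rw [← Finset.add_sum_erase _ _ (Finset.mem_univ (0:G))]
    congr 1
    rw [Finset.sum_subtype (p := fun y => y ≠ 0)]
    simp
  set T := ∑ y : {y : G // y ≠ 0}, f y.1 with hT
  have hT0 : 0 ≤ T := Finset.sum_nonneg fun y _ => h0 _
  rw [e1, add_div, add_comm]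
  have h3 : f 0 / Fintype.card G ≤ 1 / Fintype.card G := by gcongr; exact h1 0
  have h4 : T / Fintype.card G ≤ T / Fintype.card {y : G // y ≠ 0} := by
    rcases isEmpty_or_nonempty {y : G // y ≠ 0} with he | he
    · have : T = 0 := by rw [hT]; simp
      rw [this]; simp
    · have : 0 < Fintype.card {y : G // y ≠ 0} := Fintype.card_pos
      have h5 : Fintype.card {y : G // y ≠ 0} ≤ Fintype.card G := Fintype.card_subtype_le _
      have h6 : (0:ℝ) < Fintype.card {y : G // y ≠ 0} := by exact_mod_cast this
      gcongr
  linarith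

lemma varn_phi (p : ℕ) [Fact p.Prime] {ε : ℝ} (hε : 0 < ε) :
    ∃ (θ : ℝ) (N : ℕ), 0 < θ ∧ ∀ (G : Type) [AddCommGroup G] [Finite G] [Module (ZMod p) G] (B : G → Prop),
      N ≤ Nat.card G → ε ≤ (E fun x => ind (B x)) → θ ≤ E fun z => phi p B z := by
  obtain ⟨θ, hθ, h⟩ := varn p hε
  obtain ⟨N, hN⟩ := exists_nat_gt (2 / θ)
  refine ⟨θ / 2, N, by positivity, fun G _ _ _ B hNG hB => ?_⟩
  have h1 := h G B hB
  have h2 : (E fun z => E fun y => ind (∀ a : ZMod p, B (z + a • y))) ≤ E fun z => phi p B z + θ / 2 := by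
    refine E_mono fun z => ?_
    refine (E_ne_zero _ (fun _ => ind_nonneg _) (fun _ => ind_le_one _)).trans ?_
    have h3 : (1:ℝ) / Nat.card G ≤ θ / 2 := by
      have h4 : 2 / θ < (Nat.card G : ℝ) := hN.trans_le (by exact_mod_cast hNG)
      have h5 : (0:ℝ) < Nat.card G := lt_trans (by positivity) h4
      rw [div_lt_iff₀ hθ] at h4
      rw [div_le_div_iff₀ h5 (by norm_num)]
      linarith
    refine add_le_add (E_mono fun y => ind_mono fun hy a _ => hy a) h3
  rw [E_add, E_const] at h2
  linarith


def sg (b : Bool) : ℝ := if b then 1 else -1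

lemma sg_not (b : Bool) : sg (!b) = - sg b := by cases b <;> simp [sg]

lemma E_marginal {ι Z : Type} [Finite ι] [Finite Z] [Nonempty Z] (i : ι) (g : Z → ℝ) :
    (E fun z : ι → Z => g (z i)) = E g := by
  classical
  rw [E_update i]
  simp only [Function.update_self]
  exact E_const _

lemma symm_lemma {Z 𝔅 : Type} [Finite Z] [Nonempty Z] {k : ℕ} {θ : ℝ} (hθ : 0 < θ)
    (φ : 𝔅 → Z → ℝ) (b0 : 𝔅) (hb0 : ∀ z, φ b0 z = 0)
    (good : (Fin k → Z) → Prop) (hg : 1 / 2 ≤ E fun z => ind (good z))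
    (h : ∀ z, good z → ∃ B, (∀ i, φ B (z i) = 0) ∧ θ ≤ E (φ B)) :
    ∃ (ζ : Fin k → Z) (Bs : (Fin k → Bool) → 𝔅),
      θ / 4 * k ≤ E fun s => ∑ i, sg (s i) * φ (Bs s) (ζ i) := by
  classical
  let B : (Fin k → Z) → 𝔅 := fun z => if hz : good z then (h z hz).choose else b0
  have hB0 : ∀ z i, φ (B z) (z i) = 0 := by
    intro z i
    by_cases hz : good z
    · simp only [B, dif_pos hz]; exact (h z hz).choose_spec.1 i
    · simp only [B, dif_neg hz]; exact hb0 _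
  have hB1 : ∀ z, θ * ind (good z) ≤ E (φ (B z)) := by
    intro z
    by_cases hz : good z
    · rw [ind_true hz, mul_one]; simp only [B, dif_pos hz]; exact (h z hz).choose_spec.2
    · rw [ind_false hz, mul_zero]; simp only [B, dif_neg hz]
      exact E_nonneg fun z => (hb0 z).ge
  let F : (Fin k → Z) × (Fin k → Z) → ℝ := fun w => ∑ i, (φ (B w.1) (w.2 i) - φ (B w.1) (w.1 i))
  have hF : θ / 2 * k ≤ E F := by
    rw [E_prod]
    have h1 : (E fun z : Fin k → Z => (k * θ) * ind (good z)) ≤ E fun z => E fun z' => F (z, z') := by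
      refine E_mono fun z => ?_
      simp only [F, hB0, sub_zero]
      rw [E_sum]
      simp only [E_marginal]
      rw [Finset.sum_const, Finset.card_univ, Fintype.card_fin, nsmul_eq_mul, mul_assoc]
      exact mul_le_mul_of_nonneg_left (hB1 z) (by positivity)
    rw [E_mul_left] at h1
    have : (0:ℝ) ≤ k * θ := by positivity
    nlinarith
  let sw : (Fin k → Bool) → (Fin k → Z) × (Fin k → Z) → (Fin k → Z) × (Fin k → Z) :=
    fun s w => (fun i => if s i then w.1 i else w.2 i, fun i => if s i then w.2 i else w.1 i)
  have hsw : ∀ s, Function.Involutive (sw s) := by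
    rintro s ⟨z, z'⟩
    simp only [sw, Prod.mk.injEq]
    constructor <;> funext i <;> by_cases hs : s i <;> simp [hs]
  have h2 : θ / 2 * k ≤ E fun w => E fun s => F (sw s w) := by
    rw [E_comm]
    refine le_E fun s => ?_
    rw [E_equiv (hsw s).toPerm] at hF
    exact hF
  obtain ⟨⟨z, z'⟩, hw⟩ := exists_le_E h2
  let Bs : (Fin k → Bool) → 𝔅 := fun s => B (sw s (z, z')).1
  have h3 : ∀ s, F (sw s (z, z')) =
      (∑ i, sg (s i) * φ (Bs s) (z' i)) + (∑ i, sg (!s i) * φ (Bs s) (z i)) := by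
    intro s
    rw [← Finset.sum_add_distrib]
    refine Finset.sum_congr rfl fun i _ => ?_
    simp only [Bs, sw]
    cases hs : s i <;> simp [sg] <;> ring
  simp only [h3] at hw
  rw [E_add] at hw
  by_cases h4 : θ / 4 * k ≤ E fun s => ∑ i, sg (s i) * φ (Bs s) (z' i)
  · exact ⟨z', Bs, h4⟩
  · refine ⟨z, fun s => Bs (fun i => !s i), ?_⟩
    have inv : Function.Involutive (fun (s : Fin k → Bool) i => !s i) := by
      intro s; funext i; simp
    have e := E_equiv inv.toPerm (fun s => ∑ i, sg (!s i) * φ (Bs s) (z i))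
    simp only [Function.Involutive.coe_toPerm, Bool.not_not] at e
    linarith


section shatter

lemma E_prod_exp {k : ℕ} (u : Fin k → ℝ) :
    (E fun s : Fin k → Bool => Real.exp (∑ i, sg (s i) * u i)) = ∏ i, Real.cosh (u i) := by
  have h := Finset.prod_univ_sum (fun _ : Fin k => (Finset.univ : Finset Bool))
    (fun i b => Real.exp (sg b * u i))
  rw [Fintype.piFinset_univ] at h
  rw [E_eq_sum]
  simp only [Real.exp_sum]
  rw [← h]
  simp only [Fintype.card_pi, Fintype.card_bool, Finset.prod_const, Finset.card_univ, Fintype.card_fin]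
  rw [eq_comm]
  calc ∏ i, Real.cosh (u i) = ∏ i, ((∑ b, Real.exp (sg b * u i)) / 2) := by
        refine Finset.prod_congr rfl fun i _ => ?_
        rw [Real.cosh_eq, Fintype.sum_bool]
        simp [sg]
    _ = _ := by
        rw [Finset.prod_div_distrib]
        simp

lemma massart {k : ℕ} {𝔅 : Type} (φ : Fin k → 𝔅 → ℝ)
    (h0 : ∀ i B, 0 ≤ φ i B) (h1 : ∀ i B, φ i B ≤ 1) (T : Finset 𝔅) (Bs : (Fin k → Bool) → 𝔅)
    (hT : ∀ s, Bs s ∈ T) {ϑ : ℝ} (hϑ : 0 < ϑ)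
    (h : ϑ * k ≤ E fun s => ∑ i, sg (s i) * φ i (Bs s)) :
    Real.exp (ϑ ^ 2 * k / 2) ≤ T.card := by
  set m : ℝ := ϑ * (ϑ * k) with hm
  have jen : Real.exp m ≤ E fun s => Real.exp (∑ i, sg (s i) * (ϑ * φ i (Bs s))) := by
    have h2 : ∀ s : Fin k → Bool, Real.exp m * (1 - m) + Real.exp m * (ϑ * (∑ i, sg (s i) * φ i (Bs s))) ≤
        Real.exp (∑ i, sg (s i) * (ϑ * φ i (Bs s))) := by
      intro s
      have e : (∑ i, sg (s i) * (ϑ * φ i (Bs s))) = ϑ * (∑ i, sg (s i) * φ i (Bs s)) := by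
        rw [Finset.mul_sum]
        exact Finset.sum_congr rfl fun i _ => by ring
      rw [e]
      set X := ϑ * (∑ i, sg (s i) * φ i (Bs s))
      have h3 := Real.add_one_le_exp (X - m)
      have h4 : Real.exp X = Real.exp m * Real.exp (X - m) := by rw [← Real.exp_add]; ring_nf
      rw [h4]
      nlinarith [Real.exp_pos m]
    have h5 := E_mono h2
    rw [E_add, E_const, E_mul_left, E_mul_left] at h5
    have h6 : Real.exp m * m ≤ Real.exp m * (ϑ * E fun s => ∑ i, sg (s i) * φ i (Bs s)) := by
      rw [hm]
      gcongr
    nlinarith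
  have up : (E fun s => Real.exp (∑ i, sg (s i) * (ϑ * φ i (Bs s)))) ≤
      E fun s : Fin k → Bool => ∑ B ∈ T, Real.exp (∑ i, sg (s i) * (ϑ * φ i B)) := by
    refine E_mono fun s => ?_
    exact Finset.single_le_sum (f := fun B => Real.exp (∑ i, sg (s i) * (ϑ * φ i B)))
      (fun B _ => (Real.exp_pos _).le) (hT s)
  rw [E_sum] at up
  have up2 : ∑ B ∈ T, (E fun s : Fin k → Bool => Real.exp (∑ i, sg (s i) * (ϑ * φ i B))) ≤
      ∑ B ∈ T, Real.exp (ϑ ^ 2 * k / 2) := by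
    refine Finset.sum_le_sum fun B _ => ?_
    rw [E_prod_exp]
    calc ∏ i, Real.cosh (ϑ * φ i B) ≤ ∏ i : Fin k, Real.exp (ϑ ^ 2 / 2) := by
          refine Finset.prod_le_prod (fun i _ => (Real.cosh_pos _).le) fun i _ => ?_
          refine (Real.cosh_le_exp_half_sq _).trans ?_
          apply Real.exp_le_exp.mpr
          have : φ i B ^ 2 ≤ 1 := pow_le_one₀ (h0 i B) (h1 i B)
          rw [mul_pow]
          nlinarith [sq_nonneg ϑ]
      _ = _ := by
          rw [Finset.prod_const, Finset.card_univ, Fintype.card_fin, ← Real.exp_nat_mul]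
          ring_nf
  rw [Finset.sum_const, nsmul_eq_mul] at up2
  have h7 : Real.exp m ≤ T.card * Real.exp (ϑ ^ 2 * k / 2) := jen.trans (up.trans up2)
  have h8 : Real.exp m = Real.exp (ϑ ^ 2 * k / 2) * Real.exp (ϑ ^ 2 * k / 2) := by
    rw [← Real.exp_add, hm]; ring_nf
  rw [h8] at h7
  exact le_of_mul_le_mul_right h7 (Real.exp_pos _)

variable {k : ℕ} {𝔅 : Type} (φ : Fin k → 𝔅 → ℝ)

def Sep (ϑ : ℝ) (T : Finset 𝔅) : Prop :=
  ∀ B ∈ T, ∀ B' ∈ T, B ≠ B' → ϑ * k < ∑ i, |φ i B - φ i B'|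

lemma exists_net [Finite 𝔅] {ϑ : ℝ} (hϑ : 0 < ϑ) :
    ∃ T : Finset 𝔅, Sep φ ϑ T ∧ ∀ B, ∃ B' ∈ T, ∑ i, |φ i B - φ i B'| ≤ ϑ * k := by
  classical
  cases nonempty_fintype 𝔅
  obtain ⟨T, hT, hmax⟩ := Finset.exists_max_image (Finset.univ.filter fun T : Finset 𝔅 => Sep φ ϑ T)
    Finset.card ⟨∅, Finset.mem_filter.2 ⟨Finset.mem_univ _, fun B hB => absurd hB (Finset.notMem_empty B)⟩⟩
  simp only [Finset.mem_filter, Finset.mem_univ, true_and] at hT hmax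
  refine ⟨T, hT, fun B => ?_⟩
  by_contra! hc
  have hBT : B ∉ T := fun hB => by
    have := hc B hB
    simp only [sub_self, abs_zero, Finset.sum_const_zero] at this
    have h0 : 0 ≤ ϑ * k := by positivity
    linarith
  have hs : Sep φ ϑ (insert B T) := by
    intro C hC C' hC' hne
    rw [Finset.mem_insert] at hC hC'
    rcases hC with rfl | hC <;> rcases hC' with rfl | hC'
    · exact absurd rfl hne
    · exact hc _ hC'
    · simp only [abs_sub_comm (φ _ C)]; exact hc _ hC
    · exact hT _ hC _ hC' hne
  have := hmax _ hs
  rw [Finset.card_insert_of_notMem hBT] at this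
  omega

lemma gap_point {b : ℕ} (hb : 0 < b) {x y : ℝ} (hx : 0 ≤ x) (hy : y ≤ 1) (h : 2 / b < y - x) :
    ∃ t : Fin b, x ≤ (t : ℕ) / (b:ℝ) ∧ ((t : ℕ) + 1 : ℝ) / b ≤ y := by
  have hb' : (0:ℝ) < b := by exact_mod_cast hb
  rw [div_lt_iff₀ hb'] at h
  have h1 := Nat.le_ceil (b * x)
  have h2 := Nat.ceil_lt_add_one (a := b * x) (by positivity)
  have h3 : (⌈b * x⌉₊ : ℝ) + 1 < b * y := by nlinarith
  have h4 : (⌈b * x⌉₊ : ℝ) < b := by nlinarith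
  refine ⟨⟨⌈b * x⌉₊, by exact_mod_cast h4⟩, ?_, ?_⟩
  · rw [le_div_iff₀ hb']; simp only; linarith
  · rw [div_le_iff₀ hb']; simp only; linarith

lemma split (hk : 0 < k) (h0 : ∀ i B, 0 ≤ φ i B) (h1 : ∀ i B, φ i B ≤ 1) {ϑ : ℝ} (hϑ : 0 < ϑ)
    {b : ℕ} (hb : 0 < b) (hbϑ : 2 / (b:ℝ) ≤ ϑ / 4) (T : Finset 𝔅) (hT : Sep φ ϑ T) (hT2 : 2 ≤ T.card) :
    ∃ (i : Fin k) (t : Fin b),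
      ϑ / (8 * b) * T.card ≤ (T.filter fun B => φ i B ≤ (t:ℕ) / (b:ℝ)).card ∧
      ϑ / (8 * b) * T.card ≤ (T.filter fun B => ((t:ℕ) + 1 : ℝ) / b ≤ φ i B).card := by
  classical
  have hb' : (0:ℝ) < b := by exact_mod_cast hb
  have hk' : (0:ℝ) < k := by exact_mod_cast hk
  have hc2 : (2:ℝ) ≤ T.card := by exact_mod_cast hT2
  set N : ℝ := (T.card : ℝ) with hN
  have a1 : N * (N - 1) * (ϑ * k) ≤ ∑ B ∈ T, ∑ B' ∈ T, ∑ i, |φ i B - φ i B'| := by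
    have : ∀ B ∈ T, (N - 1) * (ϑ * k) ≤ ∑ B' ∈ T, ∑ i, |φ i B - φ i B'| := by
      intro B hB
      rw [← Finset.add_sum_erase _ _ hB]
      have h2 : ∑ B' ∈ T.erase B, (ϑ * k) ≤ ∑ B' ∈ T.erase B, ∑ i, |φ i B - φ i B'| :=
        Finset.sum_le_sum fun B' hB' => (hT B hB B' (Finset.mem_of_mem_erase hB')
          (Finset.ne_of_mem_erase hB').symm).le
      rw [Finset.sum_const, Finset.card_erase_of_mem hB, nsmul_eq_mul, Nat.cast_sub (by omega)] at h2
      simp only [sub_self, abs_zero, Finset.sum_const_zero, zero_add]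
      push_cast at h2
      exact h2
    calc N * (N - 1) * (ϑ * k) = ∑ B ∈ T, (N - 1) * (ϑ * k) := by
          rw [Finset.sum_const, nsmul_eq_mul]; ring
      _ ≤ _ := Finset.sum_le_sum this
  have a2 : ∃ i, N * N * (ϑ / 2) ≤ ∑ B ∈ T, ∑ B' ∈ T, |φ i B - φ i B'| := by
    by_contra! hc
    have e : ∑ B ∈ T, ∑ B' ∈ T, ∑ i, |φ i B - φ i B'| = ∑ i, ∑ B ∈ T, ∑ B' ∈ T, |φ i B - φ i B'| := by
      rw [Finset.sum_comm]
      rw [Finset.sum_congr rfl fun B' _ => Finset.sum_comm, Finset.sum_comm]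
      refine Finset.sum_congr rfl fun i _ => ?_
      rw [Finset.sum_comm]
    have : ∑ i : Fin k, ∑ B ∈ T, ∑ B' ∈ T, |φ i B - φ i B'| < ∑ i : Fin k, N * N * (ϑ / 2) :=
      Finset.sum_lt_sum_of_nonempty ⟨⟨0, hk⟩, Finset.mem_univ _⟩ fun i _ => hc i
    rw [Finset.sum_const, Finset.card_univ, Fintype.card_fin, nsmul_eq_mul] at this
    have h9 : 0 ≤ N * (ϑ * k) * (N / 2 - 1) := by
      apply mul_nonneg (by positivity); linarith
    nlinarith
  obtain ⟨i, hi⟩ := a2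
  refine ⟨i, ?_⟩
  have pt : ∀ B B', |φ i B - φ i B'| ≤ 2 / b +
      ∑ t : Fin b, ((if φ i B ≤ (t:ℕ) / (b:ℝ) then (1:ℝ) else 0) * (if ((t:ℕ) + 1 : ℝ) / b ≤ φ i B' then 1 else 0) +
        (if φ i B' ≤ (t:ℕ) / (b:ℝ) then (1:ℝ) else 0) * (if ((t:ℕ) + 1 : ℝ) / b ≤ φ i B then 1 else 0)) := by
    intro B B'
    have nn : ∀ t : Fin b, 0 ≤ ((if φ i B ≤ (t:ℕ) / (b:ℝ) then (1:ℝ) else 0) * (if ((t:ℕ) + 1 : ℝ) / b ≤ φ i B' then 1 else 0) +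
        (if φ i B' ≤ (t:ℕ) / (b:ℝ) then (1:ℝ) else 0) * (if ((t:ℕ) + 1 : ℝ) / b ≤ φ i B then 1 else 0)) := by
      intro t; positivity
    by_cases hle : |φ i B - φ i B'| ≤ 2 / b
    · have := Finset.sum_nonneg (s := Finset.univ) fun t _ => nn t
      linarith
    · push Not at hle
      have hone : |φ i B - φ i B'| ≤ 1 := by
        rw [abs_le]; constructor <;> linarith [h0 i B, h1 i B, h0 i B', h1 i B']
      have h2b : 0 < 2 / (b:ℝ) := by positivity
      rcases lt_abs.mp hle with h | h
      · obtain ⟨t, ht1, ht2⟩ := gap_point hb (h0 i B') (h1 i B) h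
        have := Finset.single_le_sum (fun t _ => nn t) (Finset.mem_univ t)
        rw [if_pos ht1, if_pos ht2] at this
        have h5 : 0 ≤ (if φ i B ≤ (t:ℕ) / (b:ℝ) then (1:ℝ) else 0) * (if ((t:ℕ) + 1 : ℝ) / b ≤ φ i B' then 1 else 0) := by positivity
        linarith
      · obtain ⟨t, ht1, ht2⟩ := gap_point hb (h0 i B) (h1 i B') (by linarith)
        have := Finset.single_le_sum (fun t _ => nn t) (Finset.mem_univ t)
        rw [if_pos ht1, if_pos ht2] at this
        have h5 : 0 ≤ (if φ i B' ≤ (t:ℕ) / (b:ℝ) then (1:ℝ) else 0) * (if ((t:ℕ) + 1 : ℝ) / b ≤ φ i B then 1 else 0) := by positivity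
        linarith
  set P : Fin b → ℝ := fun t => ((T.filter fun B => φ i B ≤ (t:ℕ) / (b:ℝ)).card : ℝ) with hP
  set Q : Fin b → ℝ := fun t => ((T.filter fun B => ((t:ℕ) + 1 : ℝ) / b ≤ φ i B).card : ℝ) with hQ
  have hP' : ∀ t, P t = ∑ B ∈ T, (if φ i B ≤ (t:ℕ) / (b:ℝ) then (1:ℝ) else 0) := by
    intro t; simp [hP]
  have hQ' : ∀ t, Q t = ∑ B ∈ T, (if ((t:ℕ) + 1 : ℝ) / b ≤ φ i B then (1:ℝ) else 0) := by
    intro t; simp [hQ]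
  have a3 : ∑ B ∈ T, ∑ B' ∈ T, |φ i B - φ i B'| ≤ N * N * (2 / b) + ∑ t, 2 * (P t * Q t) := by
    refine (Finset.sum_le_sum fun B _ => Finset.sum_le_sum fun B' _ => pt B B').trans (le_of_eq ?_)
    simp only [Finset.sum_add_distrib, Finset.sum_const, nsmul_eq_mul]
    have e1 : ∑ B ∈ T, ∑ B' ∈ T, ∑ t : Fin b, (if φ i B ≤ (t:ℕ) / (b:ℝ) then (1:ℝ) else 0) * (if ((t:ℕ) + 1 : ℝ) / b ≤ φ i B' then 1 else 0)
        = ∑ t, P t * Q t := by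
      simp only [hP', hQ', Finset.sum_mul_sum]
      rw [Finset.sum_congr rfl fun B _ => Finset.sum_comm, Finset.sum_comm]
    have e2 : ∑ B ∈ T, ∑ B' ∈ T, ∑ t : Fin b, (if φ i B' ≤ (t:ℕ) / (b:ℝ) then (1:ℝ) else 0) * (if ((t:ℕ) + 1 : ℝ) / b ≤ φ i B then 1 else 0)
        = ∑ t, P t * Q t := by
      rw [Finset.sum_comm, e1]
    rw [e1, e2, ← Finset.mul_sum, ← hN]
    ring
  have a4 : ∃ t, N * N * (ϑ / (8 * b)) ≤ P t * Q t := by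
    by_contra! hc
    have : ∑ t : Fin b, 2 * (P t * Q t) < ∑ t : Fin b, 2 * (N * N * (ϑ / (8 * b))) :=
      Finset.sum_lt_sum_of_nonempty ⟨⟨0, hb⟩, Finset.mem_univ _⟩ fun t _ => by linarith [hc t]
    rw [Finset.sum_const, Finset.card_univ, Fintype.card_fin, nsmul_eq_mul] at this
    have e : (b:ℝ) * (2 * (N * N * (ϑ / (8 * b)))) = N * N * (ϑ / 4) := by
      field_simp; ring
    rw [e] at this
    have : N * N * (2 / b) ≤ N * N * (ϑ / 4) := by gcongr
    linarith
  obtain ⟨t, ht⟩ := a4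
  have hPN : P t ≤ N := by simp only [hP, hN]; exact_mod_cast Finset.card_filter_le _ _
  have hQN : Q t ≤ N := by simp only [hQ, hN]; exact_mod_cast Finset.card_filter_le _ _
  have hP0 : 0 ≤ P t := by simp only [hP]; positivity
  have hQ0 : 0 ≤ Q t := by simp only [hQ]; positivity
  refine ⟨t, ?_, ?_⟩
  · have : P t * Q t ≤ P t * N := by gcongr
    have h6 : N * (ϑ / (8 * b) * N) ≤ N * P t := by linarith
    exact le_of_mul_le_mul_left h6 (by linarith)
  · have : P t * Q t ≤ N * Q t := by gcongr
    have h6 : N * (ϑ / (8 * b) * N) ≤ N * Q t := by linarith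
    exact le_of_mul_le_mul_left h6 (by linarith)

/-- `T` gap-shatters the pattern `g` -/
def Shat (b : ℕ) (T : Finset 𝔅) (g : Fin k → Option (Fin b)) : Prop :=
  ∀ x : Fin k → Bool, ∃ B ∈ T, ∀ i t, g i = some t →
    (x i = true → ((t:ℕ) + 1 : ℝ) / b ≤ φ i B) ∧ (x i = false → φ i B ≤ (t:ℕ) / (b:ℝ))

open Classical in
noncomputable def sh (b : ℕ) (T : Finset 𝔅) : Finset (Fin k → Option (Fin b)) :=
  Finset.univ.filter fun g => Shat φ b T g

lemma Shat.mono {b : ℕ} {T T' : Finset 𝔅} (h : T ⊆ T') {g : Fin k → Option (Fin b)}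
    (hg : Shat φ b T g) : Shat φ b T' g := fun x => by
  obtain ⟨B, hB, h'⟩ := hg x
  exact ⟨B, h hB, h'⟩

lemma sh_pos {b : ℕ} {T : Finset 𝔅} (h : T.Nonempty) : 1 ≤ (sh φ b T).card := by
  obtain ⟨B, hB⟩ := h
  apply Finset.card_pos.mpr
  exact ⟨fun _ => none, by simp only [sh, Finset.mem_filter, Finset.mem_univ, true_and]; exact fun x => ⟨B, hB, by simp⟩⟩

lemma sh_split {b : ℕ} (hb : 0 < b) (T : Finset 𝔅) (i : Fin k) (t : Fin b) :
    (sh φ b (T.filter fun B => φ i B ≤ (t:ℕ) / (b:ℝ))).card +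
    (sh φ b (T.filter fun B => ((t:ℕ) + 1 : ℝ) / b ≤ φ i B)).card ≤ (sh φ b T).card := by
  classical
  have hb' : (0:ℝ) < b := by exact_mod_cast hb
  set L := sh φ b (T.filter fun B => φ i B ≤ (t:ℕ) / (b:ℝ)) with hL
  set H := sh φ b (T.filter fun B => ((t:ℕ) + 1 : ℝ) / b ≤ φ i B) with hH
  have mL : ∀ g, g ∈ L ↔ Shat φ b (T.filter fun B => φ i B ≤ (t:ℕ) / (b:ℝ)) g := by simp [hL, sh]
  have mH : ∀ g, g ∈ H ↔ Shat φ b (T.filter fun B => ((t:ℕ) + 1 : ℝ) / b ≤ φ i B) g := by simp [hH, sh]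
  have cL : ∀ g ∈ L, ∀ t', g i = some t' → (t':ℕ) + 1 ≤ (t:ℕ) := by
    intro g hg t' ht'
    obtain ⟨B, hB, h⟩ := (mL g).1 hg (fun _ => true)
    have h1 := (h i t' ht').1 rfl
    have h2 := (Finset.mem_filter.1 hB).2
    have h3 := h1.trans h2
    rw [div_le_div_iff_of_pos_right hb'] at h3
    exact_mod_cast h3
  have cH : ∀ g ∈ H, ∀ t', g i = some t' → (t:ℕ) + 1 ≤ (t':ℕ) := by
    intro g hg t' ht'
    obtain ⟨B, hB, h⟩ := (mH g).1 hg (fun _ => false)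
    have h1 := (h i t' ht').2 rfl
    have h2 := (Finset.mem_filter.1 hB).2
    have h3 := h2.trans h1
    rw [div_le_div_iff_of_pos_right hb'] at h3
    exact_mod_cast h3
  have cI : ∀ g ∈ L ∩ H, g i = none := by
    intro g hg
    rw [Finset.mem_inter] at hg
    rcases hgi : g i with _ | t'
    · rfl
    · have := cL g hg.1 t' hgi
      have := cH g hg.2 t' hgi
      omega
  set J := (L ∩ H).image (fun g => Function.update g i (some t)) with hJ
  have hJc : J.card = (L ∩ H).card := by
    apply Finset.card_image_of_injOn
    intro g hg g' hg' h
    funext j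
    by_cases hj : j = i
    · subst hj; rw [cI g hg, cI g' hg']
    · have := congrFun h j
      simpa [Function.update_of_ne hj] using this
  have hdis : Disjoint (L ∪ H) J := by
    rw [Finset.disjoint_left]
    intro g hg hgJ
    rw [hJ, Finset.mem_image] at hgJ
    obtain ⟨g', _, rfl⟩ := hgJ
    rcases Finset.mem_union.1 hg with h | h
    · have := cL _ h t (by simp)
      omega
    · have := cH _ h t (by simp)
      omega
  rw [← Finset.card_union_add_card_inter, ← hJc, ← Finset.card_union_of_disjoint hdis]
  apply Finset.card_le_card
  intro g hg
  simp only [sh, Finset.mem_filter, Finset.mem_univ, true_and]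
  rcases Finset.mem_union.1 hg with h | h
  · rcases Finset.mem_union.1 h with h | h
    · exact ((mL g).1 h).mono φ (Finset.filter_subset _ _)
    · exact ((mH g).1 h).mono φ (Finset.filter_subset _ _)
  · rw [hJ, Finset.mem_image] at h
    obtain ⟨g', hg', rfl⟩ := h
    rw [Finset.mem_inter] at hg'
    intro x
    cases hx : x i
    · obtain ⟨B, hB, h⟩ := (mL g').1 hg'.1 x
      rw [Finset.mem_filter] at hB
      refine ⟨B, hB.1, fun j t' ht' => ?_⟩
      by_cases hj : j = i
      · subst hj
        simp only [Function.update_self, Option.some.injEq] at ht'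
        subst ht'
        exact ⟨fun h => by simp [hx] at h, fun _ => hB.2⟩
      · rw [Function.update_of_ne hj] at ht'
        exact h j t' ht'
    · obtain ⟨B, hB, h⟩ := (mH g').1 hg'.2 x
      rw [Finset.mem_filter] at hB
      refine ⟨B, hB.1, fun j t' ht' => ?_⟩
      by_cases hj : j = i
      · subst hj
        simp only [Function.update_self, Option.some.injEq] at ht'
        subst ht'
        exact ⟨fun _ => hB.2, fun h => by simp [hx] at h⟩
      · rw [Function.update_of_ne hj] at ht'
        exact h j t' ht'

lemma Sep.mono {ϑ : ℝ} {T T' : Finset 𝔅} (h : T ⊆ T') (hT : Sep φ ϑ T') : Sep φ ϑ T :=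
  fun B hB B' hB' => hT B (h hB) B' (h hB')

lemma sh_lower (hk : 0 < k) (h0 : ∀ i B, 0 ≤ φ i B) (h1 : ∀ i B, φ i B ≤ 1) {ϑ : ℝ} (hϑ : 0 < ϑ)
    {b : ℕ} (hb : 0 < b) (hbϑ : 2 / (b:ℝ) ≤ ϑ / 4) (hρ : ϑ / (8 * b) < 1) (j : ℕ) :
    ∀ T : Finset 𝔅, Sep φ ϑ T → 1 ≤ T.card * (ϑ / (8 * b)) ^ j → 2 ^ j ≤ (sh φ b T).card := by
  have hb' : (0:ℝ) < b := by exact_mod_cast hb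
  have hρ0 : 0 < ϑ / (8 * b) := by positivity
  induction j with
  | zero =>
    intro T _ h
    rw [pow_zero]
    apply sh_pos
    rw [← Finset.card_pos]
    rw [pow_zero, mul_one] at h
    exact_mod_cast lt_of_lt_of_le one_pos h
  | succ j ih =>
    intro T hT h
    have h2 : 2 ≤ T.card := by
      by_contra! hc
      have : (T.card : ℝ) ≤ 1 := by exact_mod_cast (by omega : T.card ≤ 1)
      have h3 : (ϑ / (8 * b)) ^ (j+1) < 1 := pow_lt_one₀ hρ0.le hρ (by omega)
      have h4 : 0 < (ϑ / (8 * b)) ^ (j+1) := by positivity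
      nlinarith
    obtain ⟨i, t, hL, hH⟩ := split φ hk h0 h1 hϑ hb hbϑ T hT h2
    have := sh_split φ hb T i t
    have hρj : 0 < (ϑ / (8 * b)) ^ j := by positivity
    have e : (T.card : ℝ) * (ϑ / (8 * b)) ^ (j+1) = ϑ / (8 * b) * T.card * (ϑ / (8 * b)) ^ j := by ring
    rw [e] at h
    have i1 := ih _ (hT.mono φ (Finset.filter_subset (fun B => φ i B ≤ (t:ℕ) / (b:ℝ)) T))
      (h.trans (mul_le_mul_of_nonneg_right hL hρj.le))
    have i2 := ih _ (hT.mono φ (Finset.filter_subset (fun B => ((t:ℕ) + 1 : ℝ) / b ≤ φ i B) T))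
      (h.trans (mul_le_mul_of_nonneg_right hH hρj.le))
    rw [pow_succ]
    omega

lemma sh_two (hk : 0 < k) (h0 : ∀ i B, 0 ≤ φ i B) (h1 : ∀ i B, φ i B ≤ 1) {ϑ : ℝ} (hϑ : 0 < ϑ)
    {b : ℕ} (hb : 0 < b) (hbϑ : 2 / (b:ℝ) ≤ ϑ / 4) (T : Finset 𝔅) (hT : Sep φ ϑ T) (h2 : 2 ≤ T.card) :
    2 ≤ (sh φ b T).card := by
  have hb' : (0:ℝ) < b := by exact_mod_cast hb
  obtain ⟨i, t, hL, hH⟩ := split φ hk h0 h1 hϑ hb hbϑ T hT h2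
  have := sh_split φ hb T i t
  have hc : (0:ℝ) < T.card := by exact_mod_cast (by omega : 0 < T.card)
  have p0 : 0 < ϑ / (8 * b) * T.card := by positivity
  have i1 := sh_pos φ (b := b) (Finset.card_pos.1 (Nat.cast_pos.1 (p0.trans_le hL)))
  have i2 := sh_pos φ (b := b) (Finset.card_pos.1 (Nat.cast_pos.1 (p0.trans_le hH)))
  omega

lemma sh_upper {b : ℕ} (T : Finset 𝔅) {x : ℝ} (hx0 : 0 < x) (hx1 : x ≤ 1) {D : ℝ}
    (hD : ∀ g ∈ sh φ b T, ((Finset.univ.filter fun i => (g i).isSome = true).card : ℝ) ≤ D) :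
    (sh φ b T).card * x ^ D ≤ Real.exp (b * x * k) := by
  classical
  have h := Finset.prod_univ_sum (fun _ : Fin k => (Finset.univ : Finset (Option (Fin b))))
    (fun _ o => if o.isSome = true then x else (1:ℝ))
  rw [Fintype.piFinset_univ] at h
  have e1 : ∏ i : Fin k, ∑ o : Option (Fin b), (if o.isSome = true then x else (1:ℝ)) = (1 + b * x) ^ k := by
    simp [Fintype.sum_option]
  have e2 : ∀ g : Fin k → Option (Fin b), ∏ i, (if (g i).isSome = true then x else (1:ℝ)) =
      x ^ (Finset.univ.filter fun i => (g i).isSome = true).card := by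
    intro g
    rw [Finset.prod_ite]
    simp
  rw [e1] at h
  simp only [e2] at h
  calc (sh φ b T).card * x ^ D = ∑ g ∈ sh φ b T, x ^ D := by rw [Finset.sum_const, nsmul_eq_mul]
    _ ≤ ∑ g ∈ sh φ b T, x ^ (Finset.univ.filter fun i => (g i).isSome = true).card := by
        refine Finset.sum_le_sum fun g hg => ?_
        rw [← Real.rpow_natCast]
        exact Real.rpow_le_rpow_of_exponent_ge hx0 hx1 (hD g hg)
    _ ≤ ∑ g : Fin k → Option (Fin b), x ^ (Finset.univ.filter fun i => (g i).isSome = true).card :=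
        Finset.sum_le_sum_of_subset_of_nonneg (Finset.subset_univ _) fun _ _ _ => by positivity
    _ = (1 + b * x) ^ k := h.symm
    _ ≤ Real.exp (b * x) ^ k := by
        gcongr
        linarith [Real.add_one_le_exp (b * x)]
    _ = _ := by rw [← Real.exp_nat_mul]; ring_nf

end shatter


set_option maxHeartbeats 1000000 in
lemma shatter {θ : ℝ} (hθ : 0 < θ) (hθ1 : θ ≤ 1) :
    ∃ (κ : ℝ) (b : ℕ), 0 < κ ∧ 0 < b ∧ ∀ (k : ℕ) (𝔅 : Type) [Finite 𝔅] (φ : Fin k → 𝔅 → ℝ)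
      (Bs : (Fin k → Bool) → 𝔅), 0 < k → (∀ i B, 0 ≤ φ i B) → (∀ i B, φ i B ≤ 1) →
      θ * k ≤ (E fun s => ∑ i, sg (s i) * φ i (Bs s)) →
      ∃ (I : Finset (Fin k)) (t : Fin k → ℕ), (∀ i, t i < b) ∧ κ * k ≤ I.card ∧
        ∀ x : Fin k → Bool, ∃ B, ∀ i ∈ I,
          (x i = true → ((t i : ℝ) + 1) / b ≤ φ i B) ∧ (x i = false → φ i B ≤ (t i : ℝ) / b) := by
  classical
  set ϑ : ℝ := θ / 2 with hϑ
  have hϑ0 : 0 < ϑ := by positivity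
  obtain ⟨b, hb⟩ := exists_nat_gt (8 / ϑ)
  have hb' : (0:ℝ) < b := lt_trans (by positivity) hb
  have hb0 : 0 < b := by exact_mod_cast hb'
  have hb1 : (1:ℝ) ≤ b := by exact_mod_cast hb0
  have hbϑ : 2 / (b:ℝ) ≤ ϑ / 4 := by
    rw [div_lt_iff₀ hϑ0] at hb
    rw [div_le_div_iff₀ hb' (by norm_num)]
    linarith
  set ρ : ℝ := ϑ / (8 * b) with hρ
  have hρ0 : 0 < ρ := by positivity
  have hρ1 : ρ < 1 := by
    rw [hρ, div_lt_one (by positivity)]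
    linarith
  set R : ℝ := - Real.log ρ with hR
  have hR0 : 0 < R := by have := Real.log_neg hρ0 hρ1; linarith
  set μ : ℝ := ϑ ^ 2 / 2 with hμ
  have hμ0 : 0 < μ := by positivity
  set κ1 : ℝ := μ / R with hκ1
  have hκ10 : 0 < κ1 := by positivity
  have hl2 : 0 < Real.log 2 := Real.log_pos (by norm_num)
  set x : ℝ := min 1 (κ1 * Real.log 2 / (8 * b)) with hx
  have hx0 : 0 < x := by positivity
  have hx1 : x ≤ 1 := min_le_left _ _
  have hx2 : b * x ≤ κ1 * Real.log 2 / 8 := by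
    have : x ≤ κ1 * Real.log 2 / (8 * b) := min_le_right _ _
    calc b * x ≤ b * (κ1 * Real.log 2 / (8 * b)) := by gcongr
      _ = _ := by field_simp
  have hlx : 0 ≤ - Real.log x := by have := Real.log_nonpos hx0.le hx1; linarith
  set κ : ℝ := κ1 * Real.log 2 / (8 * (- Real.log x + 1)) with hκ
  have hκ0 : 0 < κ := by positivity
  have hκx : κ * (- Real.log x) ≤ κ1 * Real.log 2 / 8 := by
    calc κ * (- Real.log x) ≤ κ * (- Real.log x + 1) := by gcongr; linarith
      _ = _ := by rw [hκ]; field_simp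
  clear_value κ x κ1 μ R
  refine ⟨κ, b, hκ0, hb0, fun k 𝔅 _ φ Bs hk h0 h1 hE => ?_⟩
  have hk' : (0:ℝ) < k := by exact_mod_cast hk
  obtain ⟨T, hT, hnet⟩ := exists_net φ hϑ0
  choose π hπT hπ using hnet
  have hE2 : ϑ * k ≤ E fun s => ∑ i, sg (s i) * φ i (π (Bs s)) := by
    have : (E fun s : Fin k → Bool => ∑ i, sg (s i) * φ i (Bs s)) ≤
        E fun s : Fin k → Bool => (∑ i, sg (s i) * φ i (π (Bs s))) + ϑ * k := by
      refine E_mono fun s => ?_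
      refine le_trans ?_ (add_le_add (le_refl _) (hπ (Bs s)))
      rw [← Finset.sum_add_distrib]
      refine Finset.sum_le_sum fun i _ => ?_
      have a1 := le_abs_self (φ i (Bs s) - φ i (π (Bs s)))
      have a2 := neg_abs_le (φ i (Bs s) - φ i (π (Bs s)))
      cases s i <;> simp [sg] <;> linarith
    rw [E_add, E_const] at this
    have : θ = ϑ + ϑ := by rw [hϑ]; ring
    rw [this, add_mul] at hE
    linarith
  have hcard := massart φ h0 h1 T (fun s => π (Bs s)) (fun s => hπT _) hϑ0 hE2
  have hcard' : Real.exp (μ * k) ≤ T.card := by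
    rw [hμ]; convert hcard using 2; ring
  have hT2 : 2 ≤ T.card := by
    have : (1:ℝ) < T.card := lt_of_lt_of_le (Real.one_lt_exp_iff.2 (by positivity)) hcard'
    exact_mod_cast this
  set j := ⌊κ1 * k⌋₊ with hj
  have hj1 : (j:ℝ) ≤ κ1 * k := Nat.floor_le (by positivity)
  have hj2 : κ1 * k < j + 1 := Nat.lt_floor_add_one _
  have s1 := sh_lower φ hk h0 h1 hϑ0 hb0 hbϑ hρ1 j T hT (by
    have e : ρ ^ j = Real.exp (-(j * R)) := by
      rw [hR, ← Real.exp_log (pow_pos hρ0 j), Real.log_pow]; ring_nf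
    rw [← hρ, e]
    have : κ1 * R = μ := by rw [hκ1]; field_simp
    calc (1:ℝ) = Real.exp (μ * k) * Real.exp (-(μ * k)) := by rw [← Real.exp_add]; simp
      _ ≤ T.card * Real.exp (-(j * R)) := by
        have h9 : (j:ℝ) * R ≤ μ * k := by
          calc (j:ℝ) * R ≤ κ1 * k * R := by gcongr
            _ = μ * k := by rw [← this]; ring
        gcongr)
  have s2 := sh_two φ hk h0 h1 hϑ0 hb0 hbϑ T hT hT2
  have hshpos : (0:ℝ) < (sh φ b T).card := by exact_mod_cast (by omega : 0 < (sh φ b T).card)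
  have s3 : κ1 * k / 2 * Real.log 2 ≤ Real.log (sh φ b T).card := by
    rcases Nat.eq_zero_or_pos j with hj0 | hj0
    · rw [hj0] at hj2
      have : Real.log 2 ≤ Real.log (sh φ b T).card := Real.log_le_log (by norm_num) (by exact_mod_cast s2)
      push_cast at hj2
      nlinarith
    · have h3 : (1:ℝ) ≤ j := by exact_mod_cast hj0
      have : Real.log (2 ^ j) ≤ Real.log (sh φ b T).card := Real.log_le_log (by positivity) (by exact_mod_cast s1)
      rw [Real.log_pow] at this
      nlinarith
  have s4 : ∃ g ∈ sh φ b T, κ * k ≤ ((Finset.univ.filter fun i => (g i).isSome = true).card : ℝ) := by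
    by_contra! hc
    have := sh_upper φ T hx0 hx1 (D := κ * k) fun g hg => (hc g hg).le
    have h4 := Real.log_le_log (by positivity) this
    rw [Real.log_exp, Real.log_mul hshpos.ne' (by positivity), Real.log_rpow hx0] at h4
    have h5 : b * x * k ≤ κ1 * Real.log 2 / 8 * k := by gcongr
    have h6 : κ * (- Real.log x) * k ≤ κ1 * Real.log 2 / 8 * k := by gcongr
    have h7 : 0 < κ1 * Real.log 2 * k := by positivity
    have h8 : κ * k * Real.log x = - (κ * (- Real.log x) * k) := by ring
    have h9 : κ1 * k / 2 * Real.log 2 = κ1 * Real.log 2 * k / 2 := by ring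
    rw [h8] at h4
    rw [h9] at s3
    linarith
  obtain ⟨g, hg, hgc⟩ := s4
  simp only [sh, Finset.mem_filter, Finset.mem_univ, true_and] at hg
  refine ⟨Finset.univ.filter fun i => (g i).isSome = true, fun i => (g i).elim 0 (fun t => t.val), ?_, hgc, ?_⟩
  · intro i
    beta_reduce
    rcases g i with _ | t
    · exact hb0
    · exact t.2
  · intro y
    obtain ⟨B, _, hB⟩ := hg y
    refine ⟨B, fun i hi => ?_⟩
    simp only [Finset.mem_filter, Finset.mem_univ, true_and] at hi
    obtain ⟨t, ht⟩ := Option.isSome_iff_exists.1 hi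
    have := hB i t ht
    beta_reduce
    rw [ht]
    exact this


lemma mkDecoder {N q : ℕ} {Ω : Type} [Fintype Ω] (wt : Ω → ℝ) (h0 : ∀ ω, 0 ≤ wt ω) (h1 : ∑ ω, wt ω = 1)
    (S : Ω → Finset (Fin N)) (g : Ω → (Fin N → Bool) → Bool) (hS : ∀ ω, (S ω).card ≤ q)
    (hg : ∀ ω, ∀ y y' : Fin N → Bool, (∀ j ∈ S ω, y j = y' j) → g ω y = g ω y') :
    ∃ D : Decoder N q, ∀ y b, D.correctProb y b = ∑ ω, if g ω y = b then wt ω else 0 := by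
  classical
  have hex : ∀ a : Finset (Fin N) × ((Fin N → Bool) → Bool),
      (∑ ω, if (S ω, g ω) = a then wt ω else 0) ≠ 0 → ∃ ω, (S ω, g ω) = a := by
    intro a ha
    by_contra! hc
    exact ha (Finset.sum_eq_zero fun ω _ => if_neg (hc ω))
  refine ⟨⟨fun a => ∑ ω, if (S ω, g ω) = a then wt ω else 0, ?_, ?_, ?_, ?_⟩, ?_⟩
  · intro a
    refine Finset.sum_nonneg fun ω _ => ?_
    split_ifs
    · exact h0 ω
    · exact le_rfl
  · rw [Finset.sum_comm, ← h1]
    refine Finset.sum_congr rfl fun ω _ => ?_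
    rw [Finset.sum_ite_eq, if_pos (Finset.mem_univ _)]
  · intro a ha
    obtain ⟨ω, rfl⟩ := hex a ha
    exact hS ω
  · intro a ha
    obtain ⟨ω, rfl⟩ := hex a ha
    exact hg ω
  · intro y b
    unfold Decoder.correctProb
    simp only
    have : ∀ a : Finset (Fin N) × ((Fin N → Bool) → Bool),
        (if a.2 y = b then (∑ ω, if (S ω, g ω) = a then wt ω else 0) else 0) =
        ∑ ω, if (S ω, g ω) = a then (if g ω y = b then wt ω else 0) else 0 := by
      intro a
      split_ifs with h
      · refine Finset.sum_congr rfl fun ω _ => ?_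
        split_ifs with h2 h3
        · rfl
        · subst h2; exact absurd h h3
        · rfl
      · symm
        refine Finset.sum_eq_zero fun ω _ => ?_
        split_ifs with h2 h3
        · subst h2; exact absurd h3 h
        · rfl
        · rfl
    simp only [this]
    rw [Finset.sum_comm]
    refine Finset.sum_congr rfl fun ω _ => ?_
    rw [Finset.sum_ite_eq, if_pos (Finset.mem_univ _)]

lemma line_decoder (p : ℕ) [Fact p.Prime] {G : Type} [AddCommGroup G] [Finite G] [Module (ZMod p) G]
    [Nonempty {y : G // y ≠ 0}]
    {N : ℕ} (e : G ≃ Fin N) (z : G) {r0 r1 : ℝ} (hr0 : 0 ≤ r0) (hr : r0 ≤ r1) (hr1 : r1 ≤ 1) :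
    ∃ D : Decoder N (p - 1), ∀ w : Fin N → Bool,
      D.correctProb w true = r0 + (r1 - r0) * phi p (fun x => w (e x) = true) z ∧
      D.correctProb w false = 1 - (r0 + (r1 - r0) * phi p (fun x => w (e x) = true) z) := by
  classical
  cases nonempty_fintype {y : G // y ≠ 0}
  set M : ℝ := (Fintype.card {y : G // y ≠ 0} : ℝ) with hM
  have hM0 : 0 < M := by
    have : 0 < Fintype.card {y : G // y ≠ 0} := Fintype.card_pos
    rw [hM]; exact_mod_cast this
  let wt0 : Option Bool → ℝ := fun o => o.elim (r1 - r0) (fun b => if b then r0 else 1 - r1)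
  have hw0 : ∀ o, 0 ≤ wt0 o := by
    intro o
    rcases o with _ | b
    · simp only [wt0, Option.elim]; linarith
    · cases b
      · simp [wt0]; linarith
      · simp [wt0]; linarith
  obtain ⟨D, hD⟩ := mkDecoder (N := N) (q := p - 1) (Ω := {y : G // y ≠ 0} × Option Bool)
    (fun ω => wt0 ω.2 / M) (fun ω => div_nonneg (hw0 _) hM0.le) (by
      rw [Fintype.sum_prod_type]
      simp only [Fintype.sum_option, Fintype.sum_bool]
      rw [Finset.sum_const, Finset.card_univ, nsmul_eq_mul]
      simp only [wt0, Option.elim]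
      rw [← hM]
      simp
      field_simp
      ring)
    (fun ω => (Finset.univ.erase (0 : ZMod p)).image fun a => e (z + a • ω.1.1))
    (fun ω w => ω.2.elim (decide (∀ a : ZMod p, a ≠ 0 → w (e (z + a • ω.1.1)) = true)) id)
    (fun ω => by
      refine Finset.card_image_le.trans ?_
      rw [Finset.card_erase_of_mem (Finset.mem_univ _), Finset.card_univ, ZMod.card])
    (fun ω y y' h => by
      rcases ω with ⟨v, _ | b⟩
      · simp only [Option.elim]
        congr 1
        refine propext (forall_congr' fun a => forall_congr' fun ha => ?_)
        rw [h _ (Finset.mem_image_of_mem _ (Finset.mem_erase.2 ⟨ha, Finset.mem_univ _⟩))]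
      · rfl)
  refine ⟨D, fun w => ?_⟩
  have key : D.correctProb w true = r0 + (r1 - r0) * phi p (fun x => w (e x) = true) z := by
    rw [hD, Fintype.sum_prod_type]
    have pt : ∀ y : {y : G // y ≠ 0}, (∑ o : Option Bool,
        if o.elim (decide (∀ a : ZMod p, a ≠ 0 → w (e (z + a • y.1)) = true)) id = true then wt0 o / M else 0)
        = r0 / M + (r1 - r0) / M * ind (∀ a : ZMod p, a ≠ 0 → w (e (z + a • y.1)) = true) := by
      intro y
      simp only [Fintype.sum_option, Fintype.sum_bool, Option.elim, wt0, decide_eq_true_eq]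
      by_cases h : ∀ a : ZMod p, a ≠ 0 → w (e (z + a • y.1)) = true
      · rw [ind_true h, if_pos h]; simp; ring
      · rw [ind_false h, if_neg h]; simp
    rw [Finset.sum_congr rfl fun y _ => pt y]
    unfold phi
    rw [E_eq_sum, ← hM, Finset.sum_add_distrib, ← Finset.mul_sum, Finset.sum_const, Finset.card_univ,
      nsmul_eq_mul, ← hM]
    field_simp
  have tot : D.correctProb w true + D.correctProb w false = 1 := by
    unfold Decoder.correctProb
    rw [← Finset.sum_add_distrib, ← D.sum_one]
    refine Finset.sum_congr rfl fun a _ => ?_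
    cases a.2 w <;> simp
  exact ⟨key, by linarith⟩

lemma E_ne_zero' {G : Type} [AddCommGroup G] [Finite G] (hG : 2 ≤ Nat.card G) (f : G → ℝ) (h0 : ∀ y, 0 ≤ f y) :
    (E fun y : {y : G // y ≠ 0} => f y.1) ≤ 2 * E f := by
  classical
  cases nonempty_fintype G
  rw [E_eq_sum, E_eq_sum]
  rw [Nat.card_eq_fintype_card] at hG
  have hc : Fintype.card {y : G // y ≠ 0} = Fintype.card G - 1 := by
    rw [Fintype.card_subtype_compl]; simp
  have hN : (2:ℝ) ≤ Fintype.card G := by exact_mod_cast hG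
  have e1 : ∑ y, f y = f 0 + ∑ y : {y : G // y ≠ 0}, f y.1 := by
    rw [← Finset.add_sum_erase _ _ (Finset.mem_univ (0:G))]
    congr 1
    rw [Finset.sum_subtype (p := fun y => y ≠ 0)]
    simp
  set T := ∑ y : {y : G // y ≠ 0}, f y.1 with hT
  have hT0 : 0 ≤ T := Finset.sum_nonneg fun y _ => h0 _
  rw [e1, hc, Nat.cast_sub (by omega), Nat.cast_one, ← mul_div_assoc, div_le_div_iff₀ (by linarith) (by linarith)]
  nlinarith [h0 0]

lemma phi_close (p : ℕ) [Fact p.Prime] {G : Type} [AddCommGroup G] [Finite G] [Module (ZMod p) G]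
    (hG : 2 ≤ Nat.card G) (B B' : G → Prop) (z : G) :
    phi p B z ≤ phi p B' z + p * (2 * E fun x => ind (¬ (B x ↔ B' x))) := by
  classical
  unfold phi
  have h1 : ∀ y : {y : G // y ≠ 0}, ind (∀ a : ZMod p, a ≠ 0 → B (z + a • y.1)) ≤
      ind (∀ a : ZMod p, a ≠ 0 → B' (z + a • y.1)) +
      ∑ a ∈ Finset.univ.erase (0 : ZMod p), ind (¬ (B (z + a • y.1) ↔ B' (z + a • y.1))) := by
    intro y
    have nn : ∀ a ∈ Finset.univ.erase (0 : ZMod p), 0 ≤ ind (¬ (B (z + a • y.1) ↔ B' (z + a • y.1))) := fun _ _ => ind_nonneg _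
    by_cases hB : ∀ a : ZMod p, a ≠ 0 → B (z + a • y.1)
    · by_cases hB' : ∀ a : ZMod p, a ≠ 0 → B' (z + a • y.1)
      · rw [ind_true hB, ind_true hB']
        linarith [Finset.sum_nonneg nn]
      · rw [ind_true hB, ind_false hB']
        push Not at hB'
        obtain ⟨a, ha, hna⟩ := hB'
        have := Finset.single_le_sum nn (Finset.mem_erase.2 ⟨ha, Finset.mem_univ a⟩)
        rw [ind_true (by simp [hB a ha, hna])] at this
        linarith
    · rw [ind_false hB]
      linarith [Finset.sum_nonneg nn, ind_nonneg (∀ a : ZMod p, a ≠ 0 → B' (z + a • y.1))]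
  refine (E_mono h1).trans ?_
  rw [E_add, E_sum]
  gcongr
  set d := E fun x => ind (¬ (B x ↔ B' x)) with hd
  have hd0 : 0 ≤ d := E_nonneg fun _ => ind_nonneg _
  have h2 : ∀ a ∈ Finset.univ.erase (0 : ZMod p),
      (E fun y : {y : G // y ≠ 0} => ind (¬ (B (z + a • y.1) ↔ B' (z + a • y.1)))) ≤ 2 * d := by
    intro a ha
    have ha0 := Finset.ne_of_mem_erase ha
    refine (E_ne_zero' hG (fun y => ind (¬ (B (z + a • y) ↔ B' (z + a • y)))) fun _ => ind_nonneg _).trans (le_of_eq ?_)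
    congr 1
    rw [hd]
    let eq : G ≃ G := (LinearEquiv.smulOfNeZero (ZMod p) G a ha0).toEquiv.trans (Equiv.addLeft z)
    exact (E_equiv eq (fun x => ind (¬ (B x ↔ B' x)))).symm
  refine (Finset.sum_le_sum h2).trans ?_
  rw [Finset.sum_const, nsmul_eq_mul]
  gcongr
  refine (Finset.card_erase_le).trans ?_
  rw [Finset.card_univ, ZMod.card]

lemma exists_r {τ : ℝ} (h0 : 0 < τ) (h1 : τ < 1) : ∃ r0 r1 : ℝ, 0 ≤ r0 ∧ r0 ≤ r1 ∧ r1 ≤ 1 ∧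
    r0 + (r1 - r0) * τ = 1 / 2 ∧ 1 / 2 ≤ r1 - r0 := by
  by_cases h : τ ≤ 1 / 2
  · have h3 : 0 < 1 - τ := by linarith
    have e : 1 - (1 / 2 - τ) / (1 - τ) = (1 / 2) / (1 - τ) := by field_simp; ring
    have h4 : 1 / 2 ≤ (1 / 2) / (1 - τ) := by rw [le_div_iff₀ h3]; linarith
    refine ⟨(1 / 2 - τ) / (1 - τ), 1, div_nonneg (by linarith) h3.le, ?_, le_rfl, ?_, ?_⟩
    · linarith
    · rw [e]; field_simp; ring
    · linarith
  · push Not at h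
    refine ⟨0, 1 / (2 * τ), le_rfl, by positivity, ?_, ?_, ?_⟩
    · rw [div_le_one (by positivity)]; linarith
    · field_simp; ring
    · rw [sub_zero, div_le_div_iff₀ (by norm_num) (by positivity)]; linarith

lemma E_ind_card {X : Type} [Finite X] (P : X → Prop) : (E fun x => ind (P x)) = (Set.ncard {x | P x} : ℝ) / Nat.card X := by
  classical
  cases nonempty_fintype X
  rw [E_eq_sum, Nat.card_eq_fintype_card, Set.ncard_eq_toFinset_card']
  simp [ind]

end LTL

/-- LDCs from incidence geometry: if, for random points `z_1, …, z_k ∈ F_p^n`, with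
probability at least `1/2` some set `B` of density `ε` meets every nontrivial line through
the `z_i` in at most `p−2` points, then there is a `(p−1, c, c)`-LDC of message length
`l = Ω(c²k/log(1/c))`. -/
theorem lines_to_LDC :
    ∃ c0 : ℝ, 0 < c0 ∧
    ∀ p : ℕ, ∀ _ : Fact p.Prime, p ≠ 2 → ∀ ε : ℝ, ε ∈ Set.Ioc (0 : ℝ) 1 →
    ∃ (n1 : ℕ) (c : ℝ), 0 < n1 ∧ c ∈ Set.Ioc (0 : ℝ) (1/2) ∧
    ∀ n k : ℕ, n1 ≤ n → 0 < k →
    -- with probability at least 1/2 over independent uniform `z : Fin k → F_p^n` …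
    Nat.card (Fin k → (Fin n → ZMod p)) ≤
      2 * Set.ncard {z : Fin k → (Fin n → ZMod p) |
        ∃ B : Finset (Fin n → ZMod p),
          ε * (p : ℝ) ^ n ≤ B.card ∧
          -- every nontrivial line through one of the `z i` meets `B` in ≤ p−2 points
          ∀ i : Fin k, ∀ y : Fin n → ZMod p, y ≠ 0 →
            (Finset.univ.filter fun lam : ZMod p => z i + lam • y ∈ B).card ≤ p - 2} →
    ∃ (l : ℕ) (C : (Fin l → Bool) → Fin (p ^ n) → Bool),
      IsLDC l (p ^ n) (p - 1) c c C ∧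
      c0 * c ^ 2 * k / Real.log (1/c) ≤ l := by
  classical
  refine ⟨1 / 2, by norm_num, fun p hp _ ε hε => ?_⟩
  obtain ⟨θ', N, hθ'0, hvar⟩ := LTL.varn_phi p hε.1
  set θ : ℝ := min θ' 1 with hθ
  have hθ0 : 0 < θ := by positivity
  have hθ1 : θ ≤ 1 := min_le_right _ _
  obtain ⟨κ, b, hκ, hb, hsh⟩ := LTL.shatter (θ := θ / 4) (by positivity) (by linarith)
  have hb' : (0:ℝ) < b := by exact_mod_cast hb
  have hp2 : 2 ≤ p := hp.out.two_le
  have hp' : (2:ℝ) ≤ p := by exact_mod_cast hp2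
  set c : ℝ := min (1 / 2) (min κ (1 / (8 * b * p))) with hc
  have hc0 : 0 < c := by positivity
  have hc1 : c ≤ 1 / 2 := min_le_left _ _
  have hc2 : c ≤ κ := (min_le_right _ _).trans (min_le_left _ _)
  have hc3 : c ≤ 1 / (8 * b * p) := (min_le_right _ _).trans (min_le_right _ _)
  refine ⟨N + 1, c, by omega, ⟨hc0, hc1⟩, fun n k hn hk hgood => ?_⟩
  have hk' : (0:ℝ) < k := by exact_mod_cast hk
  have hcardG : Nat.card (Fin n → ZMod p) = p ^ n := by
    simp [Nat.card_eq_fintype_card, ZMod.card]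
  have hpn : n < p ^ n := Nat.lt_pow_self (by omega)
  have hG2 : 2 ≤ Nat.card (Fin n → ZMod p) := by rw [hcardG]; omega
  have hpnR : (0:ℝ) < (p:ℝ) ^ n := by positivity
  have : Nonempty {y : Fin n → ZMod p // y ≠ 0} := by
    have : Nontrivial (Fin n → ZMod p) := Finite.one_lt_card_iff_nontrivial.1 (by omega)
    obtain ⟨y, hy⟩ := exists_ne (0 : Fin n → ZMod p)
    exact ⟨⟨y, hy⟩⟩
  -- symmetrization
  have key : ∀ S : Set (Fin k → (Fin n → ZMod p)),
      Nat.card (Fin k → (Fin n → ZMod p)) ≤ 2 * S.ncard →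
      (∀ z, z ∈ S → ∃ B : (Fin n → ZMod p) → Prop, (∀ i, LTL.phi p B (z i) = 0) ∧
        θ ≤ LTL.E (LTL.phi p B)) →
      ∃ (ζ : Fin k → (Fin n → ZMod p)) (Bs : (Fin k → Bool) → ((Fin n → ZMod p) → Prop)),
        θ / 4 * k ≤ LTL.E fun s => ∑ i, LTL.sg (s i) * LTL.phi p (Bs s) (ζ i) := by
    intro S hS h
    refine LTL.symm_lemma (Z := Fin n → ZMod p) (k := k) hθ0
      (fun (B : (Fin n → ZMod p) → Prop) z => LTL.phi p B z) (fun _ => False) ?_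
      (fun z => z ∈ S) ?_ h
    · intro z
      exact LTL.phi_eq_zero p (fun _ : Fin n → ZMod p => False) z (by simp)
    · have h3 : (0:ℝ) < Nat.card (Fin k → (Fin n → ZMod p)) := by
        exact_mod_cast (Nat.card_pos : 0 < Nat.card (Fin k → (Fin n → ZMod p)))
      rw [LTL.E_ind_card, div_le_div_iff₀ (by norm_num) h3, one_mul, mul_comm]
      exact_mod_cast hS
  obtain ⟨ζ, Bs, hsym⟩ := key _ hgood (by
      rintro z ⟨B, hB, hl⟩
      refine ⟨fun x => x ∈ B, fun i => ?_, (min_le_left _ _).trans (hvar _ (fun x => x ∈ B) (by rw [hcardG]; omega) ?_)⟩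
      · exact LTL.phi_eq_zero p (fun x => x ∈ B) (z i) (fun y hy => by
          convert hl i y hy)
      · rw [LTL.E_ind_card, hcardG, le_div_iff₀ (by push_cast; exact hpnR)]
        have : {x | x ∈ B} = (B : Set (Fin n → ZMod p)) := rfl
        rw [this, Set.ncard_coe_finset]
        push_cast
        exact hB)
  -- shattering
  obtain ⟨I, t, ht, hI, hx⟩ := hsh k ((Fin n → ZMod p) → Prop) (fun i B => LTL.phi p B (ζ i)) Bs hk
    (fun _ _ => LTL.phi_nonneg _ _ _) (fun _ _ => LTL.phi_le_one _ _ _) hsym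
  choose Bx hBx using hx
  let e : (Fin n → ZMod p) ≃ Fin (p ^ n) := Fintype.equivFinOfCardEq (by
    rw [← Nat.card_eq_fintype_card, hcardG])
  let eI : I ≃ Fin I.card := I.equivFin
  let ext : (Fin I.card → Bool) → Fin k → Bool := fun m i => if h : i ∈ I then m (eI ⟨i, h⟩) else false
  refine ⟨I.card, fun m j => decide (Bx (ext m) (e.symm j)), ?_, ?_⟩
  · intro i'
    obtain ⟨⟨i, hi⟩, rfl⟩ := eI.surjective i'
    have hti : ((t i : ℝ)) + 1 ≤ b := by exact_mod_cast ht i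
    set τ : ℝ := (2 * (t i : ℝ) + 1) / (2 * b) with hτ
    have hτ0 : 0 < τ := by positivity
    have hτ1 : τ < 1 := by rw [hτ, div_lt_one (by positivity)]; linarith
    obtain ⟨r0, r1, hr0, hr, hr1, hrτ, hrs⟩ := LTL.exists_r hτ0 hτ1
    obtain ⟨D, hD⟩ := LTL.line_decoder p e (ζ i) hr0 hr hr1
    refine ⟨D, fun m y hy => ?_⟩
    have hext : ext m i = m (eI ⟨i, hi⟩) := by simp only [ext, dif_pos hi]
    set W : (Fin n → ZMod p) → Prop := fun x => y (e x) = true with hW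
    have hd : ∀ Q : Fin (p ^ n) → Prop, (∀ j, Q j → y j ≠ decide (Bx (ext m) (e.symm j))) →
        (LTL.E fun x => LTL.ind (Q (e x))) ≤ c := by
      intro Q hQ
      have h1 : (LTL.E fun x => LTL.ind (Q (e x))) = LTL.E fun j => LTL.ind (Q j) := (LTL.E_equiv e (fun j => LTL.ind (Q j))).symm
      rw [h1, LTL.E_ind_card]
      have hc4 : (Nat.card (Fin (p ^ n)) : ℝ) = (p:ℝ) ^ n := by simp
      rw [hc4, div_le_iff₀ hpnR]
      push_cast at hy
      refine le_trans ?_ hy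
      rw [← Set.ncard_coe_finset]
      refine Nat.cast_le.2 (Set.ncard_le_ncard ?_ (Set.toFinite _))
      intro j hj
      simp only [Finset.coe_filter, Finset.mem_univ, true_and, Set.mem_setOf_eq]
      exact hQ j hj
    have hd1 : (LTL.E fun x => LTL.ind (¬ (W x ↔ Bx (ext m) x))) ≤ c := by
      have := hd (fun j => ¬ (W (e.symm j) ↔ Bx (ext m) (e.symm j))) (by
        intro j hj h
        apply hj
        simp [hW, h])
      simpa using this
    have hd2 : (LTL.E fun x => LTL.ind (¬ (Bx (ext m) x ↔ W x))) ≤ c := by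
      simpa only [iff_comm] using hd1
    have c1 := LTL.phi_close p hG2 W (Bx (ext m)) (ζ i)
    have c2 := LTL.phi_close p hG2 (Bx (ext m)) W (ζ i)
    have hpc : (p:ℝ) * (2 * c) ≤ 1 / (4 * b) := by
      calc (p:ℝ) * (2 * c) ≤ p * (2 * (1 / (8 * b * p))) := by gcongr
        _ = 1 / (4 * b) := by field_simp; ring
    have c1' : (p:ℝ) * (2 * LTL.E fun x => LTL.ind (¬ (W x ↔ Bx (ext m) x))) ≤ p * (2 * c) := by gcongr
    have c2' : (p:ℝ) * (2 * LTL.E fun x => LTL.ind (¬ (Bx (ext m) x ↔ W x))) ≤ p * (2 * c) := by gcongr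
    have hcb : c ≤ 1 / (8 * b) := by
      refine hc3.trans ?_
      apply one_div_le_one_div_of_le (by positivity)
      nlinarith
    have e1 : ((t i : ℝ) + 1) / b = τ + 1 / (2 * b) := by rw [hτ]; field_simp; ring
    have e2 : (t i : ℝ) / b = τ - 1 / (2 * b) := by rw [hτ]; field_simp; ring
    have q1 : 1 / (2 * (b:ℝ)) = 1 / (4 * b) + 1 / (4 * b) := by field_simp; ring
    have q2 : 1 / (4 * (b:ℝ)) = 1 / (8 * b) + 1 / (8 * b) := by field_simp; ring
    have q3 : 0 < 1 / (8 * (b:ℝ)) := by positivity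
    have hBi := hBx (ext m) i hi
    rw [hext, e1, e2] at hBi
    rcases hm : m (eI ⟨i, hi⟩) with _ | _
    · have h1 := hBi.2 hm
      rw [(hD y).2]
      have h2 : LTL.phi p W (ζ i) ≤ τ - 1 / (4 * b) := by linarith
      have h3 : (r1 - r0) * (1 / (4 * b)) ≤ (r1 - r0) * (τ - LTL.phi p W (ζ i)) :=
        mul_le_mul_of_nonneg_left (by linarith) (by linarith)
      have h4 : 1 / 2 * (1 / (4 * (b:ℝ))) ≤ (r1 - r0) * (1 / (4 * b)) := by gcongr
      have h5 : (r1 - r0) * (τ - LTL.phi p W (ζ i)) = (r1 - r0) * τ - (r1 - r0) * LTL.phi p W (ζ i) := by ring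
      linarith
    · have h1 := hBi.1 hm
      rw [(hD y).1]
      have h2 : τ + 1 / (4 * b) ≤ LTL.phi p W (ζ i) := by linarith
      have h3 : (r1 - r0) * (1 / (4 * b)) ≤ (r1 - r0) * (LTL.phi p W (ζ i) - τ) :=
        mul_le_mul_of_nonneg_left (by linarith) (by linarith)
      have h4 : 1 / 2 * (1 / (4 * (b:ℝ))) ≤ (r1 - r0) * (1 / (4 * b)) := by gcongr
      have h5 : (r1 - r0) * (LTL.phi p W (ζ i) - τ) = (r1 - r0) * LTL.phi p W (ζ i) - (r1 - r0) * τ := by ring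
      linarith
  · have hlog : 1 / 2 ≤ Real.log (1 / c) := by
      have h1 : Real.log 2 ≤ Real.log (1 / c) := by
        apply Real.log_le_log (by norm_num)
        rw [le_div_iff₀ hc0]; linarith
      have := Real.log_two_gt_d9
      linarith
    rw [div_le_iff₀ (by linarith)]
    have h1 : c ^ 2 * k ≤ κ * k := by
      gcongr
      nlinarith
    have h2 : (0:ℝ) ≤ I.card := by positivity
    have h3 : (I.card : ℝ) * (1 / 2) ≤ I.card * Real.log (1 / c) := by gcongr
    linarith
end
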